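/- Let Q be a monic cubic complex polynomial and P a complex polynomial of degree at most 2. Suppose that for each sufficiently large n there are complex polynomials S_n of degree exactly n and V_n of degree exactly 1 with Q·S_n'' + P·S_n' + V_n·S_n = 0 identically, and that the unique root b_n of V_n converges to a point b̃ ∈ ℂ. Then there exists a unique compactly supported positive Borel probability measure ν on ℂ whose Cauchy transform satisfies C_ν(z)² = (z − b̃)/Q(z) for Lebesgue-almost every z ∈ ℂ, and the root-counting measures of the polynomials S_n converge weakly to ν. -/

import Mathlib

/-
Away from its roots, `Cₙ = Sₙ' / (n Sₙ)` is the Cauchy transform of the root-counting measure of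
`Sₙ`, and dividing the differential equation by `n² Sₙ` turns it into the Riccati equation
`Q Cₙ² = Q n⁻² ∑ (z - aᵢ)⁻² - n⁻¹ P Cₙ - n⁻² Vₙ`. The roots stay in a fixed disc, the first two
terms on the right tend to zero locally in measure, and comparing leading coefficients gives
`n⁻² Vₙ → -(z - bt)`; hence every weak limit point `ν` satisfies `C_ν² = (z - bt) / Q`, and it
remains to see that this equation determines `ν`.

Suppose `C_μ² = C_ν²` almost everywhere, and let `u` be the difference of the logarithmic
potentials of `μ` and `ν`. Since `2 ∂u = C_μ - C_ν`, the gradient of `u` is orthogonal to that of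
the sum of the potentials, so `∫ φ(u) d(μ + ν) = 0` for `φ ≥ 0` vanishing only at `0`, whence
`u = 0` almost everywhere for `μ + ν`, and then `∫ |∇u|² = -2π ∫ u d(μ - ν) = 0`. Thus `C_μ = C_ν`
and `μ = ν`. To make this rigorous the kernels are regularised at scale `ε`, `u` is truncated by
`arctan`, and the integrals are cut off near infinity and near the roots of `Q`, where the Cauchy
transforms are unbounded; the boundary terms there are controlled because `μ` and `ν` have the same
atoms.
-/

open MeasureTheory Polynomial Filter

/-- The root-counting measure of a polynomial: the uniform probability measure on the
roots (counted with multiplicity). -/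
noncomputable def rootMeasure (p : Polynomial ℂ) : Measure ℂ :=
  ((p.natDegree : ENNReal))⁻¹ • (p.roots.map (fun z => (Measure.dirac z))).sum

section

open Metric Set Topology ComplexConjugate

section SingularIntegrals

lemma integrableOn_ball_norm_rpow_neg {s : ℝ} (hs : s < 2) (r : ℝ) :
    IntegrableOn (fun w : ℂ => ‖w‖ ^ (-s)) (ball 0 r) := by
  rw [integrableOn_fun_norm_addHaar volume (f := fun y : ℝ => y ^ (-s))]
  rcases le_or_gt r 0 with hr | hr
  · simp [Ioo_eq_empty_of_le hr]
  have h := intervalIntegral.intervalIntegrable_rpow' (a := 0) (b := r) (r := 1 - s) (by linarith)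
  rw [intervalIntegrable_iff_integrableOn_Ioo_of_le hr.le] at h
  refine h.congr_fun (fun y hy => ?_) measurableSet_Ioo
  simp [sub_eq_add_neg, Real.rpow_add hy.1]

lemma setIntegral_ball_norm_rpow_neg {s : ℝ} (hs : s < 2) {r : ℝ} (hr : 0 < r) :
    ∫ w in ball (0 : ℂ) r, ‖w‖ ^ (-s) = 2 * Real.pi / (2 - s) * r ^ (2 - s) := by
  have hball : (ball (0 : ℂ) r).indicator (fun w => ‖w‖ ^ (-s)) =
      fun w => (Iio r).indicator (fun y : ℝ => y ^ (-s)) ‖w‖ := by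
    ext w
    simp [indicator]
  have hpow : ∀ y ∈ Ioi (0 : ℝ), y ^ (2 - 1) • (Iio r).indicator (fun y : ℝ => y ^ (-s)) y =
      (Iio r).indicator (fun y => y ^ (1 - s)) y := by
    intro y hy
    by_cases h : y < r <;> simp [h, sub_eq_add_neg, Real.rpow_add (mem_Ioi.1 hy)]
  have hexp : 1 - s + 1 = 2 - s := by ring
  have hs' : 2 - s ≠ 0 := by linarith
  rw [← integral_indicator measurableSet_ball, hball, integral_fun_norm_addHaar,
    Complex.finrank_real_complex, setIntegral_congr_fun measurableSet_Ioi hpow,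
    setIntegral_indicator measurableSet_Iio, Ioi_inter_Iio, ← integral_Ioc_eq_integral_Ioo,
    ← intervalIntegral.integral_of_le hr.le, integral_rpow (Or.inl (by linarith)), hexp,
    Real.zero_rpow hs', measureReal_def, Complex.volume_ball]
  simp only [ENNReal.ofReal_one, one_pow, one_mul, ENNReal.coe_toReal, NNReal.coe_real_pi,
    sub_zero, smul_eq_mul, nsmul_eq_mul, Nat.cast_ofNat]
  field_simp

lemma lintegral_ball_norm_rpow_neg {s : ℝ} (hs : s < 2) (ξ : ℂ) {r : ℝ} (hr : 0 < r) :
    ∫⁻ z in ball ξ r, ENNReal.ofReal (‖z - ξ‖ ^ (-s)) =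
      ENNReal.ofReal (2 * Real.pi / (2 - s) * r ^ (2 - s)) := by
  rw [← setIntegral_ball_norm_rpow_neg hs hr,
    ofReal_integral_eq_lintegral_ofReal (integrableOn_ball_norm_rpow_neg hs r)
      (Eventually.of_forall fun w => by positivity),
    ← lintegral_indicator measurableSet_ball, ← lintegral_indicator measurableSet_ball,
    ← lintegral_sub_right_eq_self ((ball (0 : ℂ) r).indicator _) ξ]
  congr 1
  ext z
  simp [indicator, dist_eq_norm]

lemma lintegral_ball_norm_sub_rpow_neg_le {s : ℝ} (hs0 : 0 ≤ s) (hs : s < 2) (a ξ : ℂ) {r : ℝ}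
    (hr : 0 < r) :
    ∫⁻ z in ball a r, ENNReal.ofReal (‖z - ξ‖ ^ (-s)) ≤
      ENNReal.ofReal ((2 * Real.pi / (2 - s) + Real.pi) * r ^ (2 - s)) := by
  set f : ℂ → ENNReal := fun z => ENNReal.ofReal (‖z - ξ‖ ^ (-s))
  have hsplit : ∀ z, f z ≤ (ball ξ r).indicator f z + ENNReal.ofReal (r ^ (-s)) := by
    intro z
    by_cases hz : z ∈ ball ξ r
    · simp [hz]
    · simp only [hz, not_false_eq_true, indicator_of_notMem, zero_add]
      rw [mem_ball, dist_eq_norm, not_lt] at hz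
      exact ENNReal.ofReal_le_ofReal (Real.rpow_le_rpow_of_nonpos hr hz (by linarith))
  have hconst : ∫⁻ _ in ball a r, ENNReal.ofReal (r ^ (-s)) =
      ENNReal.ofReal (Real.pi * r ^ (2 - s)) := by
    rw [setLIntegral_const, Complex.volume_ball, ← ENNReal.ofReal_pow hr.le,
      ← ENNReal.ofReal_coe_nnreal, NNReal.coe_real_pi, ← ENNReal.ofReal_mul (by positivity),
      ← ENNReal.ofReal_mul (by positivity), sub_eq_add_neg, Real.rpow_add hr, Real.rpow_two]
    congr 1
    ring
  have h2s : 0 ≤ 2 * Real.pi / (2 - s) := div_nonneg (by positivity) (by linarith)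
  calc ∫⁻ z in ball a r, f z
      ≤ ∫⁻ z in ball a r, ((ball ξ r).indicator f z + ENNReal.ofReal (r ^ (-s))) :=
        lintegral_mono hsplit
    _ = (∫⁻ z in ball a r, (ball ξ r).indicator f z) + ENNReal.ofReal (Real.pi * r ^ (2 - s)) := by
        rw [lintegral_add_right _ measurable_const, hconst]
    _ ≤ (∫⁻ z in ball ξ r, f z) + ENNReal.ofReal (Real.pi * r ^ (2 - s)) := by
        rw [← lintegral_indicator measurableSet_ball f]
        gcongr
        exact Measure.restrict_le_self
    _ = _ := by
        rw [lintegral_ball_norm_rpow_neg hs ξ hr, ← ENNReal.ofReal_add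
          (mul_nonneg h2s (by positivity)) (by positivity), ← add_mul]

lemma lintegral_ball_enorm_inv_sub_le (a ξ : ℂ) {r : ℝ} (hr : 0 < r) :
    ∫⁻ z in ball a r, ‖(z - ξ)⁻¹‖ₑ ≤ ENNReal.ofReal (3 * Real.pi * r) := by
  have h := lintegral_ball_norm_sub_rpow_neg_le zero_le_one one_lt_two a ξ hr
  simp_rw [Real.rpow_neg_one, ← norm_inv, ofReal_norm] at h
  convert h using 2
  rw [show (2 : ℝ) - 1 = 1 by norm_num, Real.rpow_one]
  ring

end SingularIntegrals

section CauchyTransform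

/-- The Cauchy transform `z ↦ ∫ (z - ξ)⁻¹ dμ(ξ)` of a measure on the plane. -/
noncomputable def cauchyTransform (μ : Measure ℂ) (z : ℂ) : ℂ := ∫ ξ, (z - ξ)⁻¹ ∂μ

variable (μ : Measure ℂ) [IsFiniteMeasure μ]

lemma integrable_prod_of_norm_le_inv {k : ℂ → ℂ} (hk : Measurable k) (hb : ∀ w, ‖k w‖ ≤ ‖w⁻¹‖)
    (a : ℂ) (r : ℝ) :
    Integrable (fun p : ℂ × ℂ => k (p.1 - p.2)) ((volume.restrict (ball a r)).prod μ) := by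
  have hm : Measurable (fun p : ℂ × ℂ => k (p.1 - p.2)) :=
    hk.comp (measurable_fst.sub measurable_snd)
  refine ⟨hm.aestronglyMeasurable, ?_⟩
  rcases le_or_gt r 0 with hr | hr
  · simp [ball_eq_empty.2 hr]
  rw [HasFiniteIntegral, lintegral_prod_symm _ hm.enorm.aemeasurable]
  calc ∫⁻ y, (∫⁻ x in ball a r, ‖k (x - y)‖ₑ) ∂μ
      ≤ ∫⁻ y, ENNReal.ofReal (3 * Real.pi * r) ∂μ := by
        refine lintegral_mono fun y => le_trans ?_ (lintegral_ball_enorm_inv_sub_le a y hr)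
        exact lintegral_mono fun x => enorm_le_iff_norm_le.2 (hb (x - y))
    _ < ⊤ := by
        rw [lintegral_const]
        exact ENNReal.mul_lt_top ENNReal.ofReal_lt_top (measure_lt_top _ _)

lemma integrable_prod_of_norm_le_const {k : ℂ → ℂ} (hk : Measurable k) {M : ℝ}
    (hb : ∀ w, ‖k w‖ ≤ M) (a : ℂ) (r : ℝ) :
    Integrable (fun p : ℂ × ℂ => k (p.1 - p.2)) ((volume.restrict (ball a r)).prod μ) := by
  have : IsFiniteMeasure (volume.restrict (ball a r)) :=
    isFiniteMeasure_restrict.2 measure_ball_lt_top.ne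
  exact .of_bound (hk.comp (measurable_fst.sub measurable_snd)).aestronglyMeasurable M
    (Eventually.of_forall fun _ => hb _)

lemma ae_integrable_inv_sub : ∀ᵐ z : ℂ, Integrable (fun ξ => (z - ξ)⁻¹) μ := by
  have h := (ae_restrict_iUnion_iff (μ := volume) (fun n : ℕ => ball (0 : ℂ) n)
    fun z => Integrable (fun ξ => (z - ξ)⁻¹) μ).2 fun n =>
      (integrable_prod_of_norm_le_inv μ measurable_inv (fun _ => le_rfl) 0 n).prod_right_ae
  rwa [iUnion_ball_nat, Measure.restrict_univ] at h

lemma integrableOn_cauchyTransform (a : ℂ) (r : ℝ) : IntegrableOn (cauchyTransform μ) (ball a r) :=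
  (integrable_prod_of_norm_le_inv μ measurable_inv (fun _ => le_rfl) a r).integral_prod_left

lemma locallyIntegrable_cauchyTransform : LocallyIntegrable (cauchyTransform μ) := fun z =>
  ⟨ball z 1, ball_mem_nhds z one_pos, integrableOn_cauchyTransform μ z 1⟩

lemma integrable_mul_cauchyTransform {h : ℂ → ℂ} (hh : Continuous h) (hhs : HasCompactSupport h) :
    Integrable (fun z => h z * cauchyTransform μ z) :=
  (locallyIntegrable_cauchyTransform μ).integrable_smul_left_of_hasCompactSupport hh hhs

lemma integral_mul_integral_comp_sub {k : ℂ → ℂ}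
    (hk : ∀ r, Integrable (fun p : ℂ × ℂ => k (p.1 - p.2)) ((volume.restrict (ball 0 r)).prod μ))
    {g : ℂ → ℂ} (hg : Continuous g) (hgs : HasCompactSupport g) :
    ∫ z, g z * ∫ ξ, k (z - ξ) ∂μ = ∫ ξ, (∫ z, g z * k (z - ξ)) ∂μ := by
  obtain ⟨r, hr⟩ := hgs.isCompact.isBounded.subset_ball 0
  obtain ⟨M, hM⟩ := hg.bounded_above_of_compact_support hgs
  have hint : Integrable (fun p : ℂ × ℂ => g p.1 * k (p.1 - p.2))
      ((volume.restrict (ball 0 r)).prod μ) :=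
    (hk r).bdd_mul (c := M) (hg.comp continuous_fst).aestronglyMeasurable
      (Eventually.of_forall fun p => hM p.1)
  have hball : ∀ F : ℂ → ℂ, ∫ z in ball 0 r, g z * F z = ∫ z, g z * F z := fun F =>
    setIntegral_eq_integral_of_forall_compl_eq_zero fun z hz => by
      rw [image_eq_zero_of_notMem_tsupport fun h => hz (hr h), zero_mul]
  have hswap := integral_integral_swap (f := fun z ξ => g z * k (z - ξ)) hint
  simp_rw [integral_const_mul] at hswap
  simpa only [hball] using hswap

end CauchyTransform

section Dbar

/-- The operator `∂ₓ + i ∂ᵧ`, which is twice the Wirtinger derivative `∂̄`. -/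
noncomputable def dbar (g : ℂ → ℂ) (z : ℂ) : ℂ :=
  fderiv ℝ g z 1 + Complex.I * fderiv ℝ g z Complex.I

lemma continuous_dbar {g : ℂ → ℂ} (hg : ContDiff ℝ 1 g) : Continuous (dbar g) := by
  have h := hg.continuous_fderiv one_ne_zero
  exact (h.clm_apply continuous_const).add
    (continuous_const.mul (h.clm_apply continuous_const))

lemma hasCompactSupport_dbar {g : ℂ → ℂ} (hg : HasCompactSupport g) :
    HasCompactSupport (dbar g) :=
  (hg.fderiv_apply ℝ 1).add (hg.fderiv_apply ℝ Complex.I).mul_left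

lemma dbar_mul {g h : ℂ → ℂ} {z : ℂ} (hg : DifferentiableAt ℝ g z) (hh : DifferentiableAt ℝ h z) :
    dbar (fun z => g z * h z) z = dbar g z * h z + g z * dbar h z := by
  simp only [dbar, fderiv_fun_mul hg hh, add_apply, smul_apply, smul_eq_mul]
  ring

lemma dbar_ofReal_of_hasFDerivAt {g : ℂ → ℝ} {L : ℂ →L[ℝ] ℝ} {z : ℂ} (h : HasFDerivAt g L z) :
    dbar (fun z => (g z : ℂ)) z = L 1 + Complex.I * L Complex.I := by
  have h' : fderiv ℝ (fun z => (g z : ℂ)) z = Complex.ofRealCLM.comp L :=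
    (Complex.ofRealCLM.hasFDerivAt.comp z h).fderiv
  simp [dbar, h']

lemma integral_mul_dbar {g F : ℂ → ℂ} (hg : ContDiff ℝ 1 g) (hgs : HasCompactSupport g)
    (hF : ContDiff ℝ 1 F) : ∫ z, g z * dbar F z = -∫ z, dbar g z * F z := by
  have hg' := hg.continuous_fderiv one_ne_zero
  have hF' := hF.continuous_fderiv one_ne_zero
  have hint : ∀ v, Integrable fun z => fderiv ℝ g z v * F z := fun v =>
    ((hg'.clm_apply continuous_const).mul hF.continuous).integrable_of_hasCompactSupport
      (hgs.fderiv_apply ℝ v).mul_right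
  have hint' : ∀ v, Integrable fun z => g z * fderiv ℝ F z v := fun v =>
    (hg.continuous.mul (hF'.clm_apply continuous_const)).integrable_of_hasCompactSupport
      hgs.mul_right
  have hparts : ∀ v, ∫ z, g z * fderiv ℝ F z v = -∫ z, fderiv ℝ g z v * F z := fun v =>
    integral_mul_fderiv_eq_neg_fderiv_mul_of_integrable (hint v) (hint' v)
      ((hg.continuous.mul hF.continuous).integrable_of_hasCompactSupport hgs.mul_right)
      (fun z _ => hg.differentiable one_ne_zero z) (fun z _ => hF.differentiable one_ne_zero z)
  simp only [dbar, mul_add, add_mul, mul_left_comm _ Complex.I, mul_assoc]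
  rw [integral_add (hint' 1) ((hint' _).const_mul _), integral_add (hint 1) ((hint _).const_mul _),
    integral_const_mul, integral_const_mul, hparts, hparts]
  ring

end Dbar

section RegularisedKernels

/-- The gradient `conj w / (‖w‖² + ε²)` of `regLog ε`: a smooth approximation of the Cauchy
kernel `w⁻¹`. -/
noncomputable def regCauchy (ε : ℝ) (w : ℂ) : ℂ := ((‖w‖ ^ 2 + ε ^ 2)⁻¹ : ℝ) • conj w

/-- A smooth approximation of the logarithmic kernel `log ‖w‖`. -/
noncomputable def regLog (ε : ℝ) (w : ℂ) : ℝ := Real.log (‖w‖ ^ 2 + ε ^ 2) / 2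

/-- The Laplacian of `regLog ε`: a smooth approximation of `2π` times the Dirac mass at `0`. -/
noncomputable def regDelta (ε : ℝ) (w : ℂ) : ℝ := 2 * ε ^ 2 / (‖w‖ ^ 2 + ε ^ 2) ^ 2

variable {ε : ℝ}

lemma norm_sq_add_sq_pos (hε : 0 < ε) (w : ℂ) : 0 < ‖w‖ ^ 2 + ε ^ 2 := by positivity

lemma hasFDerivAt_norm_sq_add (c : ℝ) (w : ℂ) :
    HasFDerivAt (fun w : ℂ => ‖w‖ ^ 2 + c) (2 • innerSL ℝ w) w :=
  (hasStrictFDerivAt_norm_sq w).hasFDerivAt.add_const _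

lemma contDiff_regCauchy (hε : 0 < ε) : ContDiff ℝ 1 (regCauchy ε) :=
  (((contDiff_norm_sq ℝ).add contDiff_const).inv fun w => (norm_sq_add_sq_pos hε w).ne').smul
    Complex.conjCLE.contDiff

lemma continuous_regCauchy (hε : 0 < ε) : Continuous (regCauchy ε) :=
  (contDiff_regCauchy hε).continuous

lemma fderiv_regCauchy_apply (hε : 0 < ε) (w v : ℂ) :
    fderiv ℝ (regCauchy ε) w v = ((‖w‖ ^ 2 + ε ^ 2 : ℝ) : ℂ)⁻¹ * conj v -
      (((‖w‖ ^ 2 + ε ^ 2 : ℝ) : ℂ) ^ 2)⁻¹ * (2 * ((inner ℝ w v : ℝ) : ℂ)) * conj w := by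
  have h := ((hasDerivAt_inv (norm_sq_add_sq_pos hε w).ne').comp_hasFDerivAt w
    (hasFDerivAt_norm_sq_add (ε ^ 2) w)).smul (Complex.conjCLE.hasFDerivAt (x := w))
  have h' : fderiv ℝ (regCauchy ε) w = _ := h.fderiv
  rw [h']
  simp
  ring

lemma dbar_regCauchy (hε : 0 < ε) (w : ℂ) : dbar (regCauchy ε) w = regDelta ε w := by
  have hd : ((‖w‖ ^ 2 + ε ^ 2 : ℝ) : ℂ) ≠ 0 := by exact_mod_cast (norm_sq_add_sq_pos hε w).ne'
  have hconj : conj w * w = ((‖w‖ ^ 2 : ℝ) : ℂ) := by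
    rw [Complex.sq_norm, mul_comm, Complex.mul_conj]
  have h1 : inner ℝ w 1 = w.re := by simp [Complex.inner]
  have hI : inner ℝ w Complex.I = w.im := by simp [Complex.inner]
  simp only [dbar, fderiv_regCauchy_apply hε, regDelta, h1, hI, map_one, Complex.conj_I]
  push_cast at hd hconj ⊢
  field_simp
  linear_combination (-2 * conj w) * Complex.re_add_im w - 2 * hconj -
    (‖w‖ ^ 2 + ε ^ 2) * Complex.I_sq

lemma dbar_regCauchy_sub (hε : 0 < ε) (ξ z : ℂ) :
    dbar (fun z => regCauchy ε (z - ξ)) z = regDelta ε (z - ξ) := by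
  simp only [← dbar_regCauchy hε, dbar, fderiv_comp_sub]

lemma norm_regCauchy (hε : 0 < ε) (w : ℂ) : ‖regCauchy ε w‖ = ‖w‖ / (‖w‖ ^ 2 + ε ^ 2) := by
  rw [regCauchy, norm_smul, Real.norm_of_nonneg (inv_nonneg.2 (norm_sq_add_sq_pos hε w).le),
    RCLike.norm_conj, inv_mul_eq_div]

lemma norm_regCauchy_le_inv (hε : 0 < ε) (w : ℂ) : ‖regCauchy ε w‖ ≤ ‖w⁻¹‖ := by
  rw [norm_regCauchy hε, norm_inv]
  rcases eq_or_ne w 0 with rfl | hw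
  · simp
  have : 0 < ‖w‖ := norm_pos_iff.2 hw
  rw [div_le_iff₀ (norm_sq_add_sq_pos hε w), inv_mul_eq_div, le_div_iff₀ this]
  nlinarith [sq_nonneg ε]

lemma norm_regCauchy_le (hε : 0 < ε) (w : ℂ) : ‖regCauchy ε w‖ ≤ 1 / ε := by
  rw [norm_regCauchy hε, div_le_div_iff₀ (norm_sq_add_sq_pos hε w) hε]
  nlinarith [sq_nonneg (‖w‖ - ε), norm_nonneg w]

lemma regCauchy_neg (ε : ℝ) (w : ℂ) : regCauchy ε (-w) = -regCauchy ε w := by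
  simp [regCauchy]

lemma regCauchy_sub_inv (hε : 0 < ε) {w : ℂ} (hw : w ≠ 0) :
    regCauchy ε w - w⁻¹ = ((-(ε ^ 2 / (‖w‖ ^ 2 + ε ^ 2)) : ℝ) : ℂ) * w⁻¹ := by
  have hd : ((‖w‖ ^ 2 + ε ^ 2 : ℝ) : ℂ) ≠ 0 := by exact_mod_cast (norm_sq_add_sq_pos hε w).ne'
  have hconj : conj w * w = ((‖w‖ ^ 2 : ℝ) : ℂ) := by
    rw [Complex.sq_norm, mul_comm, Complex.mul_conj]
  rw [regCauchy, Complex.real_smul]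
  push_cast at hd hconj ⊢
  field_simp
  linear_combination hconj

lemma sq_div_sq_add_sq_le_sqrt_div {x y : ℝ} (hx : 0 < x) (hy : 0 < y) :
    y ^ 2 / (x ^ 2 + y ^ 2) ≤ (y / x) ^ (1 / 2 : ℝ) := by
  have hd : 0 < x ^ 2 + y ^ 2 := by positivity
  rcases le_total y x with h | h
  · calc y ^ 2 / (x ^ 2 + y ^ 2) ≤ y / x := by
          rw [div_le_div_iff₀ hd hx]
          nlinarith [mul_nonneg (mul_nonneg hy.le hx.le) (sub_nonneg.2 h), pow_pos hy 3]
      _ ≤ (y / x) ^ (1 / 2 : ℝ) :=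
          Real.self_le_rpow_of_le_one (by positivity) ((div_le_one hx).2 h) (by norm_num)
  · calc y ^ 2 / (x ^ 2 + y ^ 2) ≤ 1 := by
          rw [div_le_one hd]
          nlinarith [sq_nonneg x]
      _ ≤ (y / x) ^ (1 / 2 : ℝ) := Real.one_le_rpow ((one_le_div hx).2 h) (by norm_num)

lemma norm_regCauchy_sub_inv_le (hε : 0 < ε) (w : ℂ) :
    ‖regCauchy ε w - w⁻¹‖ ≤ ε ^ (1 / 2 : ℝ) * ‖w‖ ^ (-(3 / 2) : ℝ) := by
  rcases eq_or_ne w 0 with rfl | hw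
  · simp [regCauchy]
  have hw' : 0 < ‖w‖ := norm_pos_iff.2 hw
  have hsplit : ε ^ (1 / 2 : ℝ) * ‖w‖ ^ (-(3 / 2) : ℝ) = (ε / ‖w‖) ^ (1 / 2 : ℝ) * ‖w‖⁻¹ := by
    rw [show (-(3 / 2) : ℝ) = -(1 / 2) + -1 by norm_num, Real.rpow_add hw', Real.rpow_neg_one,
      Real.div_rpow hε.le hw'.le, Real.rpow_neg hw'.le]
    ring
  rw [regCauchy_sub_inv hε hw, norm_mul, norm_inv, Complex.norm_real, norm_neg,
    Real.norm_of_nonneg (by positivity), hsplit]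
  gcongr
  exact sq_div_sq_add_sq_le_sqrt_div hw' hε

lemma tendsto_sqrt_mul_nhdsGT_zero (c : ℝ) :
    Tendsto (fun ε : ℝ => ε ^ (1 / 2 : ℝ) * c) (𝓝[>] 0) (𝓝 0) := by
  have h := ((Real.continuousAt_rpow_const 0 (1 / 2 : ℝ) (by norm_num)).tendsto.mul_const c)
  rw [Real.zero_rpow (by norm_num), zero_mul] at h
  exact h.mono_left nhdsWithin_le_nhds

lemma tendsto_regCauchy (w : ℂ) : Tendsto (fun ε => regCauchy ε w) (𝓝[>] 0) (𝓝 w⁻¹) := by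
  rw [tendsto_iff_norm_sub_tendsto_zero]
  exact squeeze_zero' (Eventually.of_forall fun _ => norm_nonneg _)
    (eventually_nhdsWithin_of_forall fun ε hε => norm_regCauchy_sub_inv_le hε w)
    (tendsto_sqrt_mul_nhdsGT_zero _)

lemma hasFDerivAt_regLog (hε : 0 < ε) (w : ℂ) :
    HasFDerivAt (regLog ε)
      (Complex.reCLM.comp (ContinuousLinearMap.mul ℝ ℂ (regCauchy ε w))) w := by
  have h := ((Real.hasDerivAt_log (norm_sq_add_sq_pos hε w).ne').comp_hasFDerivAt w
    (hasFDerivAt_norm_sq_add (ε ^ 2) w)).mul_const (2⁻¹ : ℝ)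
  refine h.congr_fderiv ?_
  ext v
  simp only [regCauchy, ContinuousLinearMap.comp_apply, ContinuousLinearMap.mul_apply',
    smul_mul_assoc, Complex.reCLM_apply, Complex.smul_re, smul_eq_mul, smul_apply,
    innerSL_apply_apply, Complex.inner, nsmul_eq_mul]
  rw [mul_comm v]
  push_cast
  ring

lemma continuous_regLog (hε : 0 < ε) : Continuous (regLog ε) :=
  continuous_iff_continuousAt.2 fun w => (hasFDerivAt_regLog hε w).continuousAt

lemma regDelta_nonneg (ε : ℝ) (w : ℂ) : 0 ≤ regDelta ε w := by
  unfold regDelta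
  positivity

lemma continuous_regDelta (hε : 0 < ε) : Continuous (regDelta ε) :=
  continuous_const.div (by fun_prop) fun w => (pow_pos (norm_sq_add_sq_pos hε w) 2).ne'

lemma norm_regDelta_le (hε : 0 < ε) (w : ℂ) : ‖regDelta ε w‖ ≤ 2 / ε ^ 2 := by
  rw [Real.norm_of_nonneg (regDelta_nonneg _ _), regDelta, div_le_div_iff₀ (by positivity)
    (by positivity)]
  nlinarith [sq_nonneg (‖w‖ ^ 2), sq_nonneg (‖w‖ * ε)]

lemma regDelta_eq_inv_sq_mul (hε : 0 < ε) (w : ℂ) :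
    regDelta ε w = (ε⁻¹) ^ 2 * regDelta 1 (ε⁻¹ • w) := by
  simp only [regDelta, norm_smul, Real.norm_of_nonneg (inv_pos.2 hε).le]
  field_simp

lemma integral_regDelta_one : ∫ w, regDelta 1 w = 2 * Real.pi := by
  have hderiv : ∀ y ∈ Ici (0 : ℝ), HasDerivAt (fun y : ℝ => -(y ^ 2 + 1)⁻¹)
      (y ^ (2 - 1) • (2 * 1 ^ 2 / (y ^ 2 + 1 ^ 2) ^ 2)) y := by
    intro y _
    have hy : y ^ 2 + 1 ≠ 0 := by positivity
    convert! (((hasDerivAt_pow 2 y).add_const (1 : ℝ)).inv hy).neg using 1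
    simp
    ring
  have hlim : Tendsto (fun y : ℝ => -(y ^ 2 + 1)⁻¹) atTop (𝓝 (-0)) :=
    (tendsto_inv_atTop_zero.comp
      (tendsto_atTop_add_const_right _ 1 (tendsto_pow_atTop two_ne_zero))).neg
  unfold regDelta
  rw [integral_fun_norm_addHaar volume (fun y : ℝ => 2 * 1 ^ 2 / (y ^ 2 + 1 ^ 2) ^ 2),
    Complex.finrank_real_complex, integral_Ioi_of_hasDerivAt_of_nonneg' hderiv
      (fun y hy => by have := mem_Ioi.1 hy; positivity) hlim, measureReal_def, Complex.volume_ball]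
  simp

lemma regDelta_neg (ε : ℝ) (w : ℂ) : regDelta ε (-w) = regDelta ε w := by
  simp [regDelta]

lemma integral_regDelta_sub (hε : 0 < ε) (ξ : ℂ) : ∫ z, regDelta ε (z - ξ) = 2 * Real.pi := by
  rw [integral_sub_right_eq_self (regDelta ε) ξ]
  simp_rw [regDelta_eq_inv_sq_mul hε]
  rw [integral_const_mul, Measure.integral_comp_smul, Complex.finrank_real_complex,
    integral_regDelta_one, abs_of_pos (by positivity), smul_eq_mul,
    mul_inv_cancel_left₀ (by positivity)]

lemma integrable_regDelta_sub_left (hε : 0 < ε) (ξ : ℂ) :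
    Integrable fun z => regDelta ε (z - ξ) :=
  not_imp_comm.1 integral_undef (by rw [integral_regDelta_sub hε]; positivity)

lemma tendsto_norm_sq_mul_regDelta_one_cobounded :
    Tendsto (fun w : ℂ => ‖w‖ ^ 2 * regDelta 1 w) (Bornology.cobounded ℂ) (𝓝 0) := by
  have hlim : Tendsto (fun w : ℂ => 2 * (‖w‖ ^ 2)⁻¹) (Bornology.cobounded ℂ) (𝓝 (2 * 0)) :=
    ((tendsto_inv_atTop_zero.comp (tendsto_pow_atTop two_ne_zero)).comp
      tendsto_norm_cobounded_atTop).const_mul 2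
  rw [mul_zero] at hlim
  refine squeeze_zero (fun w => mul_nonneg (by positivity) (regDelta_nonneg 1 w)) (fun w => ?_) hlim
  rcases eq_or_ne w 0 with rfl | hw
  · simp
  rw [regDelta, ← div_eq_mul_inv, mul_div_assoc', div_le_div_iff₀ (by positivity)
    (pow_pos (norm_pos_iff.2 hw) 2)]
  nlinarith [sq_nonneg ‖w‖]

lemma tendsto_integral_mul_regDelta_sub {g : ℂ → ℂ} (hg : Continuous g) (hgs : HasCompactSupport g)
    (ξ : ℂ) :
    Tendsto (fun ε => ∫ z, g z * regDelta ε (z - ξ)) (𝓝[>] 0) (𝓝 (2 * Real.pi * g ξ)) := by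
  have hlim : Tendsto (fun w : ℂ => ‖w‖ ^ Module.finrank ℝ ℂ * (regDelta 1 w / (2 * Real.pi)))
      (Bornology.cobounded ℂ) (𝓝 0) := by
    simpa only [Complex.finrank_real_complex, mul_div_assoc, zero_div] using
      tendsto_norm_sq_mul_regDelta_one_cobounded.div_const (2 * Real.pi)
  have hmass : ∫ w, regDelta 1 w / (2 * Real.pi) = 1 := by
    rw [integral_div, integral_regDelta_one, div_self (by positivity)]
  have hpeak := (tendsto_integral_comp_smul_smul_of_integrable'
    (fun w => div_nonneg (regDelta_nonneg 1 w) (by positivity)) hmass hlim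
    (hg.integrable_of_hasCompactSupport hgs) (hg.continuousAt (x := ξ))).comp
    tendsto_inv_nhdsGT_zero
  refine (hpeak.const_mul (2 * Real.pi : ℂ)).congr' (eventually_nhdsWithin_of_forall fun ε hε => ?_)
  rw [Function.comp_apply, ← integral_const_mul]
  congr 1
  ext z
  rw [← neg_sub z ξ, smul_neg, regDelta_neg, Complex.finrank_real_complex, mul_div_assoc',
    ← regDelta_eq_inv_sq_mul hε, Complex.real_smul]
  push_cast
  field_simp

end RegularisedKernels

section CauchyPompeiu

variable {g : ℂ → ℂ}

lemma cauchyTransform_dirac (ξ z : ℂ) : cauchyTransform (Measure.dirac ξ) z = (z - ξ)⁻¹ := by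
  rw [cauchyTransform, integral_dirac]

lemma integral_mul_regDelta_sub {ε : ℝ} (hε : 0 < ε) (hg : ContDiff ℝ 1 g)
    (hgs : HasCompactSupport g) (ξ : ℂ) :
    ∫ z, g z * regDelta ε (z - ξ) = -∫ z, dbar g z * regCauchy ε (z - ξ) := by
  have hF : ContDiff ℝ 1 fun z => regCauchy ε (z - ξ) :=
    (contDiff_regCauchy hε).comp (contDiff_id.sub contDiff_const)
  rw [← integral_mul_dbar hg hgs hF]
  exact integral_congr_ae (Eventually.of_forall fun z =>
    congrArg (g z * ·) (dbar_regCauchy_sub hε ξ z).symm)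

lemma integral_dbar_mul_inv_sub (hg : ContDiff ℝ 1 g) (hgs : HasCompactSupport g) (ξ : ℂ) :
    ∫ z, dbar g z * (z - ξ)⁻¹ = -(2 * Real.pi * g ξ) := by
  have hint : Integrable fun z => dbar g z * (z - ξ)⁻¹ := by
    simpa only [cauchyTransform_dirac] using integrable_mul_cauchyTransform (Measure.dirac ξ)
      (continuous_dbar hg) (hasCompactSupport_dbar hgs)
  have hlim : Tendsto (fun ε => ∫ z, dbar g z * regCauchy ε (z - ξ)) (𝓝[>] 0)
      (𝓝 (∫ z, dbar g z * (z - ξ)⁻¹)) := by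
    refine tendsto_integral_filter_of_dominated_convergence _ ?_ ?_ hint.norm ?_
    · exact eventually_nhdsWithin_of_forall fun ε hε => ((continuous_dbar hg).mul
        ((continuous_regCauchy hε).comp (continuous_sub_right ξ))).aestronglyMeasurable
    · refine eventually_nhdsWithin_of_forall fun ε hε => Eventually.of_forall fun z => ?_
      rw [norm_mul, norm_mul]
      gcongr
      exact norm_regCauchy_le_inv hε _
    · exact Eventually.of_forall fun z => (tendsto_regCauchy _).const_mul _
  have hlim' := (tendsto_integral_mul_regDelta_sub hg.continuous hgs ξ).neg
  refine tendsto_nhds_unique hlim (hlim'.congr' (eventually_nhdsWithin_of_forall fun ε hε => ?_))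
  rw [integral_mul_regDelta_sub hε hg hgs, neg_neg]

variable (μ : Measure ℂ) [IsFiniteMeasure μ]

lemma integral_dbar_mul_cauchyTransform (hg : ContDiff ℝ 1 g) (hgs : HasCompactSupport g) :
    ∫ z, dbar g z * cauchyTransform μ z = -(2 * Real.pi * ∫ ξ, g ξ ∂μ) := by
  have hswap := integral_mul_integral_comp_sub (k := fun w => w⁻¹) μ
    (integrable_prod_of_norm_le_inv μ measurable_inv (fun _ => le_rfl) 0)
    (continuous_dbar hg) (hasCompactSupport_dbar hgs)
  simp_rw [integral_dbar_mul_inv_sub hg hgs, integral_neg, integral_const_mul] at hswap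
  exact hswap

lemma eq_of_forall_integral_contDiff_eq {μ ν : Measure ℂ} [IsFiniteMeasure μ] [IsFiniteMeasure ν]
    (h : ∀ g : ℂ → ℝ, ContDiff ℝ 1 g → HasCompactSupport g → ∫ z, g z ∂μ = ∫ z, g z ∂ν) :
    μ = ν := by
  have hμ : μ ≪ μ + ν := Measure.absolutelyContinuous_of_le (Measure.le_add_right le_rfl)
  have hν : ν ≪ μ + ν := Measure.absolutelyContinuous_of_le (Measure.le_add_left le_rfl)
  have hdensity : (fun x => (μ.rnDeriv (μ + ν) x).toReal) =ᵐ[μ + ν]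
      fun x => (ν.rnDeriv (μ + ν) x).toReal := by
    refine ae_eq_of_integral_contDiff_smul_eq (μ := μ + ν)
      (f := fun x => (μ.rnDeriv (μ + ν) x).toReal) (f' := fun x => (ν.rnDeriv (μ + ν) x).toReal)
      Measure.integrable_toReal_rnDeriv.locallyIntegrable
      Measure.integrable_toReal_rnDeriv.locallyIntegrable fun g hg hgs => ?_
    have hswap : ∀ x y : ℝ, x • y = y • x := mul_comm
    simp_rw [hswap (g _)]
    exact (integral_rnDeriv_smul hμ).trans ((h g (hg.of_le (by exact_mod_cast le_top)) hgs).trans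
      (integral_rnDeriv_smul hν).symm)
  refine (Measure.withDensity_rnDeriv_eq μ (μ + ν) hμ).symm.trans
    ((withDensity_congr_ae ?_).trans (Measure.withDensity_rnDeriv_eq ν (μ + ν) hν))
  filter_upwards [hdensity, Measure.rnDeriv_lt_top μ (μ + ν), Measure.rnDeriv_lt_top ν (μ + ν)]
    with x hx hμx hνx
  exact (ENNReal.toReal_eq_toReal_iff' hμx.ne hνx.ne).1 hx

theorem eq_of_cauchyTransform_ae_eq {μ ν : Measure ℂ} [IsFiniteMeasure μ] [IsFiniteMeasure ν]
    (h : cauchyTransform μ =ᵐ[volume] cauchyTransform ν) : μ = ν := by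
  refine eq_of_forall_integral_contDiff_eq fun g hg hgs => ?_
  have hG : ContDiff ℝ 1 (fun z => (g z : ℂ)) := Complex.ofRealCLM.contDiff.comp hg
  have hGs : HasCompactSupport (fun z => (g z : ℂ)) := hgs.comp_left Complex.ofReal_zero
  have hC : ∫ z, dbar (fun z => (g z : ℂ)) z * cauchyTransform μ z =
      ∫ z, dbar (fun z => (g z : ℂ)) z * cauchyTransform ν z :=
    integral_congr_ae (h.mono fun z hz => congrArg (_ * ·) hz)
  rw [integral_dbar_mul_cauchyTransform μ hG hGs, integral_dbar_mul_cauchyTransform ν hG hGs,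
    neg_inj, integral_complex_ofReal, integral_complex_ofReal] at hC
  have hπ : (2 * Real.pi : ℂ) ≠ 0 := by exact_mod_cast Real.two_pi_pos.ne'
  exact_mod_cast mul_left_cancel₀ hπ hC

end CauchyPompeiu

section RegularisedTransforms

/-- The convolution of a measure with `regCauchy ε`, which approximates its Cauchy transform. -/
noncomputable def regCauchyTransform (ε : ℝ) (μ : Measure ℂ) (z : ℂ) : ℂ :=
  ∫ ξ, regCauchy ε (z - ξ) ∂μ

/-- The convolution of a measure with `regDelta ε`: a smooth density approximating `2π` times the
measure. -/
noncomputable def regDensity (ε : ℝ) (μ : Measure ℂ) (z : ℂ) : ℝ := ∫ ξ, regDelta ε (z - ξ) ∂μ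

variable {ε : ℝ} (μ : Measure ℂ)

lemma regDensity_nonneg (ε : ℝ) (z : ℂ) : 0 ≤ regDensity ε μ z :=
  integral_nonneg fun _ => regDelta_nonneg _ _

variable [IsFiniteMeasure μ]

lemma integrable_comp_sub {E : Type*} [NormedAddCommGroup E] [SecondCountableTopology E]
    {k : ℂ → E} (hk : Continuous k) {M : ℝ} (hM : ∀ w, ‖k w‖ ≤ M) (z : ℂ) :
    Integrable (fun ξ => k (z - ξ)) μ :=
  .of_bound (hk.comp (continuous_sub_left z)).aestronglyMeasurable M
    (Eventually.of_forall fun _ => hM _)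

lemma continuous_integral_comp_sub {E : Type*} [NormedAddCommGroup E] [NormedSpace ℝ E]
    [SecondCountableTopology E] {k : ℂ → E} (hk : Continuous k) {M : ℝ} (hM : ∀ w, ‖k w‖ ≤ M) :
    Continuous fun z => ∫ ξ, k (z - ξ) ∂μ :=
  continuous_of_dominated (fun z => (integrable_comp_sub μ hk hM z).aestronglyMeasurable)
    (fun _ => Eventually.of_forall fun _ => hM _) (integrable_const M)
    (Eventually.of_forall fun ξ => hk.comp (continuous_sub_right ξ))

lemma integrable_regCauchy_sub (hε : 0 < ε) (z : ℂ) : Integrable (fun ξ => regCauchy ε (z - ξ)) μ :=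
  integrable_comp_sub μ (continuous_regCauchy hε) (norm_regCauchy_le hε) z

lemma continuous_regCauchyTransform (hε : 0 < ε) : Continuous (regCauchyTransform ε μ) :=
  continuous_integral_comp_sub μ (continuous_regCauchy hε) (norm_regCauchy_le hε)

lemma continuous_regDensity (hε : 0 < ε) : Continuous (regDensity ε μ) :=
  continuous_integral_comp_sub μ (continuous_regDelta hε) (norm_regDelta_le hε)

lemma integral_mul_regDensity_eq_integral_integral (hε : 0 < ε) {g : ℂ → ℂ} (hg : Continuous g)
    (hgs : HasCompactSupport g) :
    ∫ z, g z * regDensity ε μ z = ∫ ξ, (∫ z, g z * regDelta ε (z - ξ)) ∂μ := by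
  have hk : Measurable fun w => (regDelta ε w : ℂ) :=
    (Complex.continuous_ofReal.comp (continuous_regDelta hε)).measurable
  have hb : ∀ w, ‖(regDelta ε w : ℂ)‖ ≤ 2 / ε ^ 2 := fun w => by
    rw [Complex.norm_real]
    exact norm_regDelta_le hε w
  simpa only [integral_complex_ofReal, regDensity] using
    integral_mul_integral_comp_sub (k := fun w => (regDelta ε w : ℂ)) μ
      (integrable_prod_of_norm_le_const μ hk hb 0) hg hgs

lemma integral_mul_regDensity (hε : 0 < ε) {g : ℂ → ℂ} (hg : ContDiff ℝ 1 g)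
    (hgs : HasCompactSupport g) :
    ∫ z, g z * regDensity ε μ z = -∫ z, dbar g z * regCauchyTransform ε μ z := by
  have hswap := integral_mul_integral_comp_sub μ (integrable_prod_of_norm_le_inv μ
    (continuous_regCauchy hε).measurable (norm_regCauchy_le_inv hε) 0)
    (continuous_dbar hg) (hasCompactSupport_dbar hgs)
  simp_rw [integral_mul_regDensity_eq_integral_integral μ hε hg.continuous hgs,
    integral_mul_regDelta_sub hε hg hgs, integral_neg, regCauchyTransform, hswap]

lemma lintegral_ball_enorm_regCauchy_sub_inv_le (hε : 0 < ε) (a ξ : ℂ) {r : ℝ} (hr : 0 < r) :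
    ∫⁻ z in ball a r, ‖regCauchy ε (z - ξ) - (z - ξ)⁻¹‖ₑ ≤
      ENNReal.ofReal (ε ^ (1 / 2 : ℝ) * (5 * Real.pi * r ^ (1 / 2 : ℝ))) := by
  have hkernel :=
    lintegral_ball_norm_sub_rpow_neg_le (s := 3 / 2) (by norm_num) (by norm_num) a ξ hr
  calc ∫⁻ z in ball a r, ‖regCauchy ε (z - ξ) - (z - ξ)⁻¹‖ₑ
      ≤ ∫⁻ z in ball a r, ENNReal.ofReal (ε ^ (1 / 2 : ℝ)) *
          ENNReal.ofReal (‖z - ξ‖ ^ (-(3 / 2) : ℝ)) := by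
        refine lintegral_mono fun z => ?_
        rw [← ofReal_norm, ← ENNReal.ofReal_mul (by positivity)]
        exact ENNReal.ofReal_le_ofReal (norm_regCauchy_sub_inv_le hε _)
    _ ≤ _ := by
        rw [lintegral_const_mul' _ _ ENNReal.ofReal_ne_top, ENNReal.ofReal_mul (by positivity)]
        gcongr
        exact hkernel.trans_eq (congrArg ENNReal.ofReal (by norm_num; left; ring))

lemma lintegral_ball_regCauchyTransform_sub_le (hε : 0 < ε) (a : ℂ) {r : ℝ} (hr : 0 < r) :
    ∫⁻ z in ball a r, ‖regCauchyTransform ε μ z - cauchyTransform μ z‖ₑ ≤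
      ENNReal.ofReal (ε ^ (1 / 2 : ℝ) * (5 * Real.pi * r ^ (1 / 2 : ℝ))) * μ univ := by
  have hm : Measurable (fun w : ℂ => regCauchy ε w - w⁻¹) :=
    (continuous_regCauchy hε).measurable.sub measurable_inv
  calc ∫⁻ z in ball a r, ‖regCauchyTransform ε μ z - cauchyTransform μ z‖ₑ
      ≤ ∫⁻ z in ball a r, ∫⁻ ξ, ‖regCauchy ε (z - ξ) - (z - ξ)⁻¹‖ₑ ∂μ := by
        refine lintegral_mono_ae (ae_restrict_of_ae ?_)
        filter_upwards [ae_integrable_inv_sub μ] with z hz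
        rw [regCauchyTransform, cauchyTransform,
          ← integral_sub (integrable_regCauchy_sub μ hε z) hz]
        exact enorm_integral_le_lintegral_enorm _
    _ = ∫⁻ ξ, (∫⁻ z in ball a r, ‖regCauchy ε (z - ξ) - (z - ξ)⁻¹‖ₑ) ∂μ :=
        lintegral_lintegral_swap
          (hm.comp (measurable_fst.sub measurable_snd)).enorm.aemeasurable
    _ ≤ ∫⁻ ξ, ENNReal.ofReal (ε ^ (1 / 2 : ℝ) * (5 * Real.pi * r ^ (1 / 2 : ℝ))) ∂μ :=
        lintegral_mono fun ξ => lintegral_ball_enorm_regCauchy_sub_inv_le hε a ξ hr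
    _ = _ := lintegral_const _

lemma tendsto_lintegral_ball_regCauchyTransform_sub (a : ℂ) (r : ℝ) :
    Tendsto (fun ε => ∫⁻ z in ball a r, ‖regCauchyTransform ε μ z - cauchyTransform μ z‖ₑ) (𝓝[>] 0)
      (𝓝 0) := by
  rcases le_or_gt r 0 with hr | hr
  · simp [ball_eq_empty.2 hr]
  have hbound := ENNReal.Tendsto.mul_const (b := μ univ) (ENNReal.tendsto_ofReal
    (tendsto_sqrt_mul_nhdsGT_zero (5 * Real.pi * r ^ (1 / 2 : ℝ)))) (Or.inr (measure_ne_top _ _))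
  rw [ENNReal.ofReal_zero, zero_mul] at hbound
  exact tendsto_of_tendsto_of_tendsto_of_le_of_le' tendsto_const_nhds hbound
    (Eventually.of_forall fun _ => zero_le)
    (eventually_nhdsWithin_of_forall fun ε hε => lintegral_ball_regCauchyTransform_sub_le μ hε a hr)

lemma tendsto_regCauchyTransform {z : ℂ} (hz : Integrable (fun ξ => (z - ξ)⁻¹) μ) :
    Tendsto (fun ε => regCauchyTransform ε μ z) (𝓝[>] 0) (𝓝 (cauchyTransform μ z)) :=
  tendsto_integral_filter_of_dominated_convergence (fun ξ => ‖(z - ξ)⁻¹‖)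
    (eventually_nhdsWithin_of_forall fun _ hε =>
      (integrable_regCauchy_sub μ hε z).aestronglyMeasurable)
    (eventually_nhdsWithin_of_forall fun _ hε =>
      Eventually.of_forall fun _ => norm_regCauchy_le_inv hε _)
    hz.norm (Eventually.of_forall fun _ => tendsto_regCauchy _)

lemma integrable_mul_regCauchyTransform (hε : 0 < ε) {h : ℂ → ℂ} (hh : Continuous h)
    (hhs : HasCompactSupport h) : Integrable (fun z => h z * regCauchyTransform ε μ z) :=
  (hh.mul (continuous_regCauchyTransform μ hε)).integrable_of_hasCompactSupport hhs.mul_right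

lemma integral_norm_mul_le_mul_lintegral_ball {h F : ℂ → ℂ} {M : ℝ} {a : ℂ} {r : ℝ}
    (hM : ∀ z, ‖h z‖ ≤ M) (hsupp : ∀ z ∉ ball a r, h z = 0) (hF : IntegrableOn F (ball a r)) :
    ∫ z, ‖h z‖ * ‖F z‖ ≤ M * (∫⁻ z in ball a r, ‖F z‖ₑ).toReal := by
  have hball : ∫ z in ball a r, ‖h z‖ * ‖F z‖ = ∫ z, ‖h z‖ * ‖F z‖ :=
    setIntegral_eq_integral_of_forall_compl_eq_zero fun z hz => by
      rw [hsupp z hz, norm_zero, zero_mul]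
  rw [← hball, ← integral_norm_eq_lintegral_enorm hF.aestronglyMeasurable, ← integral_const_mul]
  refine integral_mono_of_nonneg (Eventually.of_forall fun z => by positivity)
    (hF.norm.const_mul M) (Eventually.of_forall fun z => ?_)
  exact mul_le_mul_of_nonneg_right (hM z) (norm_nonneg _)

lemma tendsto_integral_norm_mul_regCauchyTransform_sub {h : ℂ → ℂ} (hh : Continuous h)
    (hhs : HasCompactSupport h) :
    Tendsto (fun ε => ∫ z, ‖h z‖ * ‖regCauchyTransform ε μ z - cauchyTransform μ z‖) (𝓝[>] 0)
      (𝓝 0) := by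
  obtain ⟨r, hr⟩ := hhs.isCompact.isBounded.subset_ball 0
  obtain ⟨M, hM⟩ := hh.bounded_above_of_compact_support hhs
  have hlim := ((ENNReal.tendsto_toReal ENNReal.zero_ne_top).comp
    (tendsto_lintegral_ball_regCauchyTransform_sub μ 0 r)).const_mul M
  rw [ENNReal.toReal_zero, mul_zero] at hlim
  refine squeeze_zero' (Eventually.of_forall fun ε => integral_nonneg fun z => by positivity)
    (eventually_nhdsWithin_of_forall fun ε hε => ?_) hlim
  refine integral_norm_mul_le_mul_lintegral_ball hM
    (fun z hz => image_eq_zero_of_notMem_tsupport fun h => hz (hr h)) ?_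
  exact (((continuous_regCauchyTransform μ hε).locallyIntegrable.integrableOn_isCompact
    (isCompact_closedBall 0 r)).mono_set ball_subset_closedBall).sub
      (integrableOn_cauchyTransform μ 0 r)

end RegularisedTransforms

section Cutoffs

/-- A smooth function equal to `1` on the disc of radius `r` and vanishing off the disc of radius
`2 * r`. -/
noncomputable def bump (c : ℂ) (r : ℝ) (z : ℂ) : ℝ :=
  Real.smoothTransition (2 - ‖z - c‖ ^ 2 / r ^ 2)

variable {c z : ℂ} {r : ℝ}

lemma contDiff_bump (c : ℂ) (r : ℝ) : ContDiff ℝ 1 (bump c r) :=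
  (Real.smoothTransition.contDiff (n := 1)).comp (contDiff_const.sub
    (((contDiff_norm_sq ℝ).comp (contDiff_id.sub contDiff_const)).div_const _))

lemma bump_nonneg (c : ℂ) (r : ℝ) (z : ℂ) : 0 ≤ bump c r z := Real.smoothTransition.nonneg _

lemma bump_le_one (c : ℂ) (r : ℝ) (z : ℂ) : bump c r z ≤ 1 := Real.smoothTransition.le_one _

lemma bump_eq_one (hr : 0 < r) (h : ‖z - c‖ ≤ r) : bump c r z = 1 := by
  refine Real.smoothTransition.one_of_one_le ?_
  have : ‖z - c‖ ^ 2 / r ^ 2 ≤ 1 := div_le_one_of_le₀ (by gcongr) (by positivity)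
  linarith

lemma bump_eq_zero (hr : 0 < r) (h : 2 * r ≤ ‖z - c‖) : bump c r z = 0 := by
  refine Real.smoothTransition.zero_of_nonpos ?_
  have : 2 ^ 2 ≤ ‖z - c‖ ^ 2 / r ^ 2 := by
    rw [le_div_iff₀ (by positivity), ← mul_pow]
    gcongr
  linarith

lemma hasCompactSupport_bump (c : ℂ) (hr : 0 < r) : HasCompactSupport (bump c r) := by
  refine HasCompactSupport.intro (isCompact_closedBall c (2 * r)) fun z hz => bump_eq_zero hr ?_
  rw [mem_closedBall, dist_eq_norm, not_le] at hz
  exact hz.le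

lemma hasFDerivAt_bump (c : ℂ) (r : ℝ) (z : ℂ) : HasFDerivAt (bump c r)
    (-(2 * deriv Real.smoothTransition (2 - ‖z - c‖ ^ 2 / r ^ 2) / r ^ 2) •
      innerSL ℝ (z - c)) z := by
  have hsq : HasFDerivAt (fun z => ‖z - c‖ ^ 2) (2 • innerSL ℝ (z - c)) z := by
    have := (hasStrictFDerivAt_norm_sq (F := ℂ) (z - c)).hasFDerivAt.comp z
      ((hasFDerivAt_id z).sub_const c)
    rwa [ContinuousLinearMap.comp_id] at this
  have hs : HasDerivAt Real.smoothTransition _ (2 - ‖z - c‖ ^ 2 / r ^ 2) :=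
    ((Real.smoothTransition.contDiff (n := 1)).differentiable one_ne_zero _).hasDerivAt
  simp only [div_eq_mul_inv] at hs ⊢
  refine (hs.comp_hasFDerivAt z ((hsq.mul_const (r ^ 2)⁻¹).const_sub 2)).congr_fderiv ?_
  ext v
  simp
  ring

lemma dbar_bump (c : ℂ) (r : ℝ) (z : ℂ) : dbar (fun z => (bump c r z : ℂ)) z =
    -((2 * deriv Real.smoothTransition (2 - ‖z - c‖ ^ 2 / r ^ 2) / r ^ 2 : ℝ) : ℂ) * (z - c) := by
  rw [dbar_ofReal_of_hasFDerivAt (hasFDerivAt_bump c r z)]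
  generalize 2 * deriv Real.smoothTransition (2 - ‖z - c‖ ^ 2 / r ^ 2) / r ^ 2 = t
  apply Complex.ext <;> simp [Complex.inner]

lemma dbar_bump_eq_zero_of_two_mul_le (hr : 0 < r) (h : 2 * r ≤ ‖z - c‖) :
    dbar (fun z => (bump c r z : ℂ)) z = 0 := by
  have hle : 2 ^ 2 ≤ ‖z - c‖ ^ 2 / r ^ 2 := by
    rw [le_div_iff₀ (by positivity), ← mul_pow]
    gcongr
  have hconst : Real.smoothTransition =ᶠ[𝓝 (2 - ‖z - c‖ ^ 2 / r ^ 2)] fun _ => 0 := by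
    filter_upwards [gt_mem_nhds (show 2 - ‖z - c‖ ^ 2 / r ^ 2 < 0 by linarith)] with x hx
    exact Real.smoothTransition.zero_of_nonpos hx.le
  simp [dbar_bump, hconst.deriv_eq]

lemma dbar_bump_eq_zero_of_lt (hr : 0 < r) (h : ‖z - c‖ < r) :
    dbar (fun z => (bump c r z : ℂ)) z = 0 := by
  have hconst : (fun z => (bump c r z : ℂ)) =ᶠ[𝓝 z] fun _ => 1 := by
    filter_upwards [(continuous_id.sub continuous_const).norm.continuousAt.eventually_lt
      continuousAt_const h] with w hw
    rw [bump_eq_one hr (show ‖w - c‖ ≤ r from hw.le), Complex.ofReal_one]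
  simp [dbar, hconst.fderiv_eq]

lemma exists_norm_dbar_bump_le :
    ∃ L : ℝ, 0 ≤ L ∧ ∀ (c : ℂ) (r : ℝ), 0 < r → ∀ z,
      ‖dbar (fun z => (bump c r z : ℂ)) z‖ ≤ L / r := by
  have hc : Continuous (deriv Real.smoothTransition) :=
    (Real.smoothTransition.contDiff (n := 1)).continuous_deriv_one
  obtain ⟨L, hL⟩ := (isCompact_Icc (a := (-2 : ℝ)) (b := 2)).exists_bound_of_continuousOn
    hc.continuousOn
  have hL0 : 0 ≤ L := (norm_nonneg _).trans (hL 0 (by norm_num))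
  refine ⟨4 * L, by positivity, fun c r hr z => ?_⟩
  rcases le_or_gt (2 * r) ‖z - c‖ with h | h
  · rw [dbar_bump_eq_zero_of_two_mul_le hr h, norm_zero]
    positivity
  · have h4 : ‖z - c‖ ^ 2 / r ^ 2 ≤ 2 ^ 2 := by
      rw [div_le_iff₀ (by positivity), ← mul_pow]
      gcongr
    have h5 : 0 ≤ ‖z - c‖ ^ 2 / r ^ 2 := by positivity
    have h6 := hL (2 - ‖z - c‖ ^ 2 / r ^ 2) ⟨by linarith, by linarith⟩
    rw [dbar_bump, norm_mul, norm_neg, Complex.norm_real, norm_div, norm_mul, Real.norm_two,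
      Real.norm_of_nonneg (by positivity : (0 : ℝ) ≤ r ^ 2)]
    calc 2 * ‖deriv Real.smoothTransition (2 - ‖z - c‖ ^ 2 / r ^ 2)‖ / r ^ 2 * ‖z - c‖
        ≤ 2 * L / r ^ 2 * (2 * r) := by gcongr
      _ = 4 * L / r := by field_simp; ring

lemma re_dbar_bump_mul_inv_nonpos (c : ℂ) (r : ℝ) (z : ℂ) :
    (dbar (fun z => (bump c r z : ℂ)) z * (z - c)⁻¹).re ≤ 0 := by
  rw [dbar_bump]
  rcases eq_or_ne (z - c) 0 with h | h
  · simp [h]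
  rw [mul_assoc, mul_inv_cancel₀ h, mul_one, Complex.neg_re, Complex.ofReal_re, neg_nonpos]
  have hmono : 0 ≤ deriv Real.smoothTransition (2 - ‖z - c‖ ^ 2 / r ^ 2) :=
    Real.smoothTransition.monotone.deriv_nonneg
  positivity

/-- A smooth cutoff of a large disc with small discs about the points of `A` removed. -/
noncomputable def holeCutoff (A : Finset ℂ) (R d : ℝ) (z : ℂ) : ℝ :=
  bump 0 R z - ∑ a ∈ A, bump a d z

variable {A : Finset ℂ} {R d : ℝ}

lemma contDiff_holeCutoff (A : Finset ℂ) (R d : ℝ) : ContDiff ℝ 1 (holeCutoff A R d) :=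
  (contDiff_bump 0 R).sub (ContDiff.sum fun a _ => contDiff_bump a d)

lemma dbar_holeCutoff (A : Finset ℂ) (R d : ℝ) (z : ℂ) :
    dbar (fun z => (holeCutoff A R d z : ℂ)) z = dbar (fun z => (bump 0 R z : ℂ)) z -
      ∑ a ∈ A, dbar (fun z => (bump a d z : ℂ)) z := by
  have h1 := hasFDerivAt_bump 0 R z
  have h2 := HasFDerivAt.fun_sum (u := A) fun a _ => hasFDerivAt_bump a d z
  rw [dbar_ofReal_of_hasFDerivAt (g := holeCutoff A R d) (h1.sub h2), dbar_ofReal_of_hasFDerivAt h1]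
  simp_rw [fun a => dbar_ofReal_of_hasFDerivAt (hasFDerivAt_bump a d z)]
  rw [Finset.sum_add_distrib, ← Finset.mul_sum]
  simp only [sub_apply, sum_apply, Complex.ofReal_sub,
    Complex.ofReal_sum]
  ring

/-- The discs of radius `2 * d` about the points of `A`, outside which `holeCutoff A R d` agrees
with the bump of the large disc, are disjoint and contained in the disc of radius `R`. -/
structure HolesFit (A : Finset ℂ) (R d : ℝ) : Prop where
  pos : 0 < d
  radius_pos : 0 < R
  lt_norm_sub : ∀ a ∈ A, ∀ a' ∈ A, a ≠ a' → 4 * d < ‖a - a'‖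
  norm_add_le : ∀ a ∈ A, ‖a‖ + 2 * d ≤ R

lemma HolesFit.eq_of_near (h : HolesFit A R d) {a : ℂ} (ha : a ∈ A) (hz : ‖z - a‖ < 2 * d) :
    holeCutoff A R d z = 1 - bump a d z := by
  have h1 : bump 0 R z = 1 := by
    refine bump_eq_one h.radius_pos ?_
    have := h.norm_add_le a ha
    calc ‖z - 0‖ = ‖(z - a) + a‖ := by simp
      _ ≤ ‖z - a‖ + ‖a‖ := _root_.norm_add_le _ _
      _ ≤ R := by linarith
  rw [holeCutoff, h1, Finset.sum_eq_single_of_mem a ha]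
  intro a' ha' hne
  refine bump_eq_zero h.pos ?_
  have h2 := h.lt_norm_sub a ha a' ha' hne.symm
  have h3 : ‖a - a'‖ ≤ ‖z - a‖ + ‖z - a'‖ := by
    rw [← norm_neg (z - a)]
    refine le_trans (le_of_eq ?_) (_root_.norm_add_le (-(z - a)) (z - a'))
    congr 1
    ring
  linarith

lemma HolesFit.eq_of_far (h : HolesFit A R d) (hz : ∀ a ∈ A, 2 * d ≤ ‖z - a‖) :
    holeCutoff A R d z = bump 0 R z := by
  rw [holeCutoff, Finset.sum_eq_zero fun a ha => bump_eq_zero h.pos (hz a ha), sub_zero]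

lemma HolesFit.mem_Icc (h : HolesFit A R d) (z : ℂ) : holeCutoff A R d z ∈ Icc 0 1 := by
  by_cases hz : ∀ a ∈ A, 2 * d ≤ ‖z - a‖
  · rw [h.eq_of_far hz]; exact ⟨bump_nonneg _ _ _, bump_le_one _ _ _⟩
  · push Not at hz
    obtain ⟨a, ha, hz⟩ := hz
    rw [h.eq_of_near ha hz]
    exact ⟨by linarith [bump_le_one a d z], by linarith [bump_nonneg a d z]⟩

lemma HolesFit.eq_one (h : HolesFit A R d) (hz : ∀ a ∈ A, 2 * d ≤ ‖z - a‖) (hR : ‖z‖ ≤ R) :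
    holeCutoff A R d z = 1 := by
  rw [h.eq_of_far hz, bump_eq_one h.radius_pos (by simpa using hR)]

lemma HolesFit.eq_zero_of_near (h : HolesFit A R d) {a : ℂ} (ha : a ∈ A) (hz : ‖z - a‖ ≤ d) :
    holeCutoff A R d z = 0 := by
  rw [h.eq_of_near ha (by linarith [h.pos]), bump_eq_one h.pos hz, sub_self]

lemma HolesFit.eq_zero_of_far (h : HolesFit A R d) (hz : 2 * R ≤ ‖z‖) :
    holeCutoff A R d z = 0 := by
  rw [h.eq_of_far, bump_eq_zero h.radius_pos (by simpa using hz)]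
  intro a ha
  have h1 := norm_sub_norm_le z a
  have := h.norm_add_le a ha
  linarith [norm_nonneg a, h.pos]

lemma HolesFit.hasCompactSupport (h : HolesFit A R d) : HasCompactSupport (holeCutoff A R d) := by
  refine HasCompactSupport.intro (isCompact_closedBall 0 (2 * R)) fun z hz => h.eq_zero_of_far ?_
  rw [mem_closedBall, dist_zero_right, not_le] at hz
  exact hz.le

lemma HolesFit.mono (h : HolesFit A R d) {R' d' : ℝ} (hR : R ≤ R') (hd' : 0 < d') (hd : d' ≤ d) :
    HolesFit A R' d' :=
  ⟨hd', h.radius_pos.trans_le hR,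
    fun a ha a' ha' hne => by linarith [h.lt_norm_sub a ha a' ha' hne],
    fun a ha => by linarith [h.norm_add_le a ha]⟩

lemma exists_holesFit (A : Finset ℂ) : ∃ R d : ℝ, HolesFit A R d := by
  have hd : ∀ᶠ d in 𝓝[>] (0 : ℝ), ∀ a ∈ A, ∀ a' ∈ A, a ≠ a' → 4 * d < ‖a - a'‖ := by
    rw [Finset.eventually_all]
    intro a _
    rw [Finset.eventually_all]
    intro a' _
    by_cases hne : a = a'
    · simp [hne]
    have hp : 0 < ‖a - a'‖ := norm_pos_iff.2 (sub_ne_zero.2 hne)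
    filter_upwards [nhdsWithin_le_nhds (gt_mem_nhds (show 0 < ‖a - a'‖ / 4 by positivity))]
      with d hd _
    linarith
  obtain ⟨d, hd, hd0⟩ := (hd.and self_mem_nhdsWithin).exists
  have hd0 : 0 < d := hd0
  refine ⟨∑ a ∈ A, ‖a‖ + 2 * d, d, hd0, by positivity, hd, fun a ha => ?_⟩
  gcongr
  exact Finset.single_le_sum (f := fun a : ℂ => ‖a‖) (fun a _ => norm_nonneg a) ha

end Cutoffs

section Atoms

variable (μ : Measure ℂ) [IsFiniteMeasure μ]

lemma lintegral_ball_cauchyTransform_sub_atom_le (a : ℂ) (r : ℝ) :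
    ∫⁻ z in ball a r, ‖cauchyTransform μ z - μ.real {a} * (z - a)⁻¹‖ₑ ≤
      ∫⁻ ξ in {a}ᶜ, (∫⁻ z in ball a r, ‖(z - ξ)⁻¹‖ₑ) ∂μ := by
  calc ∫⁻ z in ball a r, ‖cauchyTransform μ z - μ.real {a} * (z - a)⁻¹‖ₑ
      ≤ ∫⁻ z in ball a r, ∫⁻ ξ in {a}ᶜ, ‖(z - ξ)⁻¹‖ₑ ∂μ := by
        refine lintegral_mono_ae (ae_restrict_of_ae ?_)
        filter_upwards [ae_integrable_inv_sub μ] with z hz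
        have h := integral_add_compl (measurableSet_singleton a) hz
        rw [integral_singleton, Complex.real_smul] at h
        rw [cauchyTransform, ← h, add_sub_cancel_left]
        exact enorm_integral_le_lintegral_enorm _
    _ = _ := lintegral_lintegral_swap
        (measurable_inv.comp (measurable_fst.sub measurable_snd)).enorm.aemeasurable

lemma ofReal_inv_mul_setLIntegral_ball_const {d : ℝ} (hd : 0 < d) (a : ℂ) {t : ℝ} (ht : 0 ≤ t) :
    ENNReal.ofReal d⁻¹ * ∫⁻ _ in ball a (2 * d), ENNReal.ofReal t =
      ENNReal.ofReal (4 * Real.pi * t * d) := by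
  have hπ : (NNReal.pi : ENNReal) = ENNReal.ofReal Real.pi := (ENNReal.ofReal_coe_nnreal).symm
  rw [setLIntegral_const, Complex.volume_ball, ← ENNReal.ofReal_pow (by positivity), hπ,
    ← ENNReal.ofReal_mul (by positivity), ← ENNReal.ofReal_mul ht,
    ← ENNReal.ofReal_mul (by positivity)]
  congr 1
  field_simp
  ring

lemma tendsto_inv_mul_lintegral_ball_inv_sub {a ξ : ℂ} (h : ξ ≠ a) :
    Tendsto (fun d : ℝ => ENNReal.ofReal d⁻¹ * ∫⁻ z in ball a (2 * d), ‖(z - ξ)⁻¹‖ₑ) (𝓝[>] 0)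
      (𝓝 0) := by
  have hp : 0 < ‖ξ - a‖ := norm_pos_iff.2 (sub_ne_zero.2 h)
  have hlim : Tendsto (fun d : ℝ => ENNReal.ofReal (4 * Real.pi * (2 / ‖ξ - a‖) * d)) (𝓝[>] 0)
      (𝓝 0) := by
    have hc : Continuous fun d : ℝ => ENNReal.ofReal (4 * Real.pi * (2 / ‖ξ - a‖) * d) :=
      ENNReal.continuous_ofReal.comp (continuous_const.mul continuous_id)
    simpa using (hc.tendsto 0).mono_left nhdsWithin_le_nhds
  refine tendsto_of_tendsto_of_tendsto_of_le_of_le' tendsto_const_nhds hlim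
    (Eventually.of_forall fun _ => zero_le) ?_
  filter_upwards [self_mem_nhdsWithin, nhdsWithin_le_nhds
    (gt_mem_nhds (show 0 < ‖ξ - a‖ / 4 by positivity))] with d hd0 hd
  rw [← ofReal_inv_mul_setLIntegral_ball_const hd0 a (by positivity)]
  gcongr 1
  refine setLIntegral_mono measurable_const fun z hz => ?_
  rw [mem_ball, dist_eq_norm] at hz
  have htri : ‖ξ - a‖ ≤ ‖z - a‖ + ‖z - ξ‖ := by
    simpa only [sub_sub_sub_cancel_left] using norm_sub_le (z - a) (z - ξ)
  rw [← ofReal_norm, norm_inv]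
  refine ENNReal.ofReal_le_ofReal ?_
  rw [inv_le_comm₀ (by linarith) (by positivity), inv_div]
  linarith

lemma tendsto_inv_mul_lintegral_ball_cauchyTransform_sub_atom (a : ℂ) :
    Tendsto (fun d : ℝ => ENNReal.ofReal d⁻¹ *
      ∫⁻ z in ball a (2 * d), ‖cauchyTransform μ z - μ.real {a} * (z - a)⁻¹‖ₑ) (𝓝[>] 0) (𝓝 0) := by
  have hlim : Tendsto (fun d : ℝ => ∫⁻ ξ in {a}ᶜ, (ENNReal.ofReal d⁻¹ *
      ∫⁻ z in ball a (2 * d), ‖(z - ξ)⁻¹‖ₑ) ∂μ) (𝓝[>] 0) (𝓝 (∫⁻ _ in {a}ᶜ, 0 ∂μ)) := by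
    refine tendsto_lintegral_filter_of_dominated_convergence
      (fun _ => ENNReal.ofReal (6 * Real.pi)) ?_ ?_ ?_ ?_
    · refine Eventually.of_forall fun d => Measurable.const_mul ?_ _
      exact Measurable.lintegral_prod_right' (f := fun p : ℂ × ℂ => ‖(p.2 - p.1)⁻¹‖ₑ)
        (measurable_inv.comp (measurable_snd.sub measurable_fst)).enorm
    · refine eventually_nhdsWithin_of_forall fun d (hd : 0 < d) => Eventually.of_forall fun ξ => ?_
      calc _ ≤ ENNReal.ofReal d⁻¹ * ENNReal.ofReal (3 * Real.pi * (2 * d)) := by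
            gcongr
            exact lintegral_ball_enorm_inv_sub_le a ξ (by positivity)
        _ = _ := by
            rw [← ENNReal.ofReal_mul (by positivity)]
            congr 1
            field_simp
            ring
    · rw [lintegral_const]
      exact ENNReal.mul_ne_top ENNReal.ofReal_ne_top (measure_ne_top _ _)
    · filter_upwards [ae_restrict_mem (measurableSet_singleton a).compl] with ξ hξ
      exact tendsto_inv_mul_lintegral_ball_inv_sub hξ
  rw [lintegral_zero] at hlim
  refine tendsto_of_tendsto_of_tendsto_of_le_of_le tendsto_const_nhds hlim
    (fun _ => zero_le) fun d => ?_
  dsimp only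
  rw [lintegral_const_mul' _ _ ENNReal.ofReal_ne_top]
  exact mul_le_mul_right (lintegral_ball_cauchyTransform_sub_atom_le μ a _) _

lemma integrableOn_cauchyTransform_sub_atom (a c : ℂ) (r : ℝ) :
    IntegrableOn (fun z => cauchyTransform μ z - μ.real {a} * (z - a)⁻¹) (ball c r) := by
  have h := (integrableOn_cauchyTransform (Measure.dirac a) c r).const_mul (μ.real {a} : ℂ)
  simp only [cauchyTransform_dirac] at h
  exact (integrableOn_cauchyTransform μ c r).sub h

lemma tendsto_integral_norm_dbar_bump_mul (a : ℂ) :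
    Tendsto (fun d : ℝ => ∫ z, ‖dbar (fun z => (bump a d z : ℂ)) z‖ *
      ‖cauchyTransform μ z - μ.real {a} * (z - a)⁻¹‖) (𝓝[>] 0) (𝓝 0) := by
  obtain ⟨L, -, hL⟩ := exists_norm_dbar_bump_le
  have hlim := ((ENNReal.tendsto_toReal ENNReal.zero_ne_top).comp
    (tendsto_inv_mul_lintegral_ball_cauchyTransform_sub_atom μ a)).const_mul L
  rw [ENNReal.toReal_zero, mul_zero] at hlim
  refine squeeze_zero' (Eventually.of_forall fun d => integral_nonneg fun z => by positivity)
    (eventually_nhdsWithin_of_forall fun d (hd : 0 < d) => ?_) hlim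
  rw [Function.comp_apply, ENNReal.toReal_mul, ENNReal.toReal_ofReal (by positivity), ← mul_assoc,
    ← div_eq_mul_inv]
  refine integral_norm_mul_le_mul_lintegral_ball (hL a d hd) (fun z hz => ?_)
    (integrableOn_cauchyTransform_sub_atom μ a a _)
  rw [mem_ball, dist_eq_norm, not_lt] at hz
  exact dbar_bump_eq_zero_of_two_mul_le hd hz

lemma abs_sub_mul_norm_le_of_sq_eq_sq {u v w : ℂ} {m n : ℝ} (hm : 0 ≤ m) (hn : 0 ≤ n)
    (h : u ^ 2 = v ^ 2) : |m - n| * ‖w‖ ≤ ‖u - m * w‖ + ‖v - n * w‖ := by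
  have hnorm : ∀ t : ℝ, ‖(t : ℂ) * w‖ = |t| * ‖w‖ := fun t => by
    rw [norm_mul, Complex.norm_real, Real.norm_eq_abs]
  rcases sq_eq_sq_iff_eq_or_eq_neg.1 h with rfl | rfl
  · calc |m - n| * ‖w‖ = ‖(u - n * w) - (u - m * w)‖ := by
          rw [← hnorm]
          congr 1
          push_cast
          ring
      _ ≤ ‖u - m * w‖ + ‖u - n * w‖ := (norm_sub_le _ _).trans_eq (add_comm _ _)
  · calc |m - n| * ‖w‖ ≤ |m + n| * ‖w‖ := by
          gcongr ?_ * _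
          rw [abs_of_nonneg (add_nonneg hm hn), abs_le]
          constructor <;> linarith
      _ = ‖(-v - m * w) + (v - n * w)‖ := by
          rw [← hnorm, ← norm_neg]
          congr 1
          push_cast
          ring
      _ ≤ _ := norm_add_le _ _

lemma ofReal_abs_real_singleton_sub_le {μ ν : Measure ℂ} [IsFiniteMeasure μ] [IsFiniteMeasure ν]
    (h : ∀ᵐ z, cauchyTransform μ z ^ 2 = cauchyTransform ν z ^ 2) (a : ℂ) {d : ℝ} (hd : 0 < d) :
    ENNReal.ofReal (2 * Real.pi * |μ.real {a} - ν.real {a}|) ≤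
      (ENNReal.ofReal d⁻¹ *
        ∫⁻ z in ball a (2 * d), ‖cauchyTransform μ z - μ.real {a} * (z - a)⁻¹‖ₑ) +
      ENNReal.ofReal d⁻¹ *
        ∫⁻ z in ball a (2 * d), ‖cauchyTransform ν z - ν.real {a} * (z - a)⁻¹‖ₑ := by
  set t := |μ.real {a} - ν.real {a}|
  calc ENNReal.ofReal (2 * Real.pi * t)
      = ENNReal.ofReal d⁻¹ * ∫⁻ z in ball a (2 * d), ENNReal.ofReal (t / (2 * d)) := by
        rw [ofReal_inv_mul_setLIntegral_ball_const hd a (by positivity)]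
        congr 1
        field_simp
        ring
    _ ≤ _ := by
        rw [← mul_add, ← lintegral_add_left'
          (integrableOn_cauchyTransform_sub_atom μ a a _).aestronglyMeasurable.enorm]
        gcongr 1
        refine lintegral_mono_ae ?_
        filter_upwards [ae_restrict_of_ae h, ae_restrict_mem measurableSet_ball,
          ae_restrict_of_ae (Measure.ae_ne volume a)] with z hz hzb hza
        rw [mem_ball, dist_eq_norm] at hzb
        have hp : 0 < ‖z - a‖ := norm_pos_iff.2 (sub_ne_zero.2 hza)
        rw [← ofReal_norm, ← ofReal_norm, ← ENNReal.ofReal_add (norm_nonneg _) (norm_nonneg _)]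
        refine ENNReal.ofReal_le_ofReal (le_trans ?_
          (abs_sub_mul_norm_le_of_sq_eq_sq measureReal_nonneg measureReal_nonneg hz))
        rw [norm_inv, div_eq_mul_inv]
        gcongr

lemma real_singleton_eq_of_cauchyTransform_sq_ae_eq {μ ν : Measure ℂ} [IsFiniteMeasure μ]
    [IsFiniteMeasure ν] (h : ∀ᵐ z, cauchyTransform μ z ^ 2 = cauchyTransform ν z ^ 2) (a : ℂ) :
    μ.real {a} = ν.real {a} := by
  have hlim := (tendsto_inv_mul_lintegral_ball_cauchyTransform_sub_atom μ a).add
    (tendsto_inv_mul_lintegral_ball_cauchyTransform_sub_atom ν a)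
  rw [add_zero] at hlim
  have hle := ge_of_tendsto hlim
    (eventually_nhdsWithin_of_forall fun d hd => ofReal_abs_real_singleton_sub_le h a hd)
  rw [nonpos_iff_eq_zero, ENNReal.ofReal_eq_zero] at hle
  exact sub_eq_zero.1 (abs_nonpos_iff.1 (nonpos_of_mul_nonpos_right hle Real.two_pi_pos))

end Atoms

section Potentials

/-- The regularised logarithmic potential `∫ log √(‖z - ξ‖² + ε²) dμ(ξ)`; its gradient is encoded by
`regCauchyTransform ε μ`. -/
noncomputable def regLogPotential (ε : ℝ) (μ : Measure ℂ) (z : ℂ) : ℝ := ∫ ξ, regLog ε (z - ξ) ∂μ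

variable {ε r : ℝ}

lemma ae_measure_singleton_eq_zero (μ : Measure ℂ) [IsFiniteMeasure μ] : ∀ᵐ z : ℂ, μ {z} = 0 := by
  have hcount : {z : ℂ | 0 < μ {z}}.Countable := Measure.countable_meas_pos_of_disjoint_iUnion
    (fun z => measurableSet_singleton z) fun _ _ h => disjoint_singleton.2 h
  filter_upwards [compl_mem_ae_iff.2 (hcount.measure_zero volume)] with z hz
  exact nonpos_iff_eq_zero.1 (not_lt.1 hz)

lemma abs_regLog_le (hε : 0 < ε) (hε1 : ε ≤ 1) {w : ℂ} (hw : w ≠ 0) :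
    |regLog ε w| ≤ ‖w‖ ^ 2 + ‖w⁻¹‖ := by
  have hp : 0 < ‖w‖ := norm_pos_iff.2 hw
  have hinv : 0 < ‖w⁻¹‖ := by rw [norm_inv]; exact inv_pos.2 hp
  have hupper : Real.log (‖w‖ ^ 2 + ε ^ 2) ≤ ‖w‖ ^ 2 := by
    have := Real.log_le_sub_one_of_pos (norm_sq_add_sq_pos hε w)
    nlinarith
  have hlower : -(2 * ‖w⁻¹‖) ≤ Real.log (‖w‖ ^ 2 + ε ^ 2) := by
    have hmono : Real.log (‖w‖ ^ 2) ≤ Real.log (‖w‖ ^ 2 + ε ^ 2) :=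
      Real.log_le_log (by positivity) (by nlinarith)
    have hlog := Real.log_le_sub_one_of_pos hinv
    rw [norm_inv, Real.log_inv, ← norm_inv] at hlog
    rw [Real.log_pow, Nat.cast_ofNat] at hmono
    linarith
  rw [regLog, abs_le]
  constructor <;> linarith [sq_nonneg ‖w‖]

lemma half_norm_le_norm_sub {z ξ : ℂ} (hξ : ‖ξ‖ ≤ r) (hz : 2 * r ≤ ‖z‖) :
    ‖z‖ / 2 ≤ ‖z - ξ‖ := by
  linarith [norm_sub_norm_le z ξ]

lemma abs_log_sub_log_le {a x y c : ℝ} (ha : 0 < a) (hx : a ≤ x) (hy : a ≤ y)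
    (h : |x - y| ≤ c) : |Real.log x - Real.log y| ≤ c / a := by
  have hc : 0 ≤ c := (abs_nonneg _).trans h
  have hlog : ∀ {s t : ℝ}, 0 < s → a ≤ t → |s - t| ≤ c → Real.log s - Real.log t ≤ c / a := by
    intro s t hs ht hst
    have ht0 : 0 < t := ha.trans_le ht
    rw [← Real.log_div hs.ne' ht0.ne']
    calc Real.log (s / t) ≤ s / t - 1 := Real.log_le_sub_one_of_pos (by positivity)
      _ = (s - t) / t := by field_simp
      _ ≤ c / a := div_le_div₀ hc ((le_abs_self _).trans hst) ha ht
  rw [abs_sub_le_iff]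
  exact ⟨hlog (ha.trans_le hx) hy h, hlog (ha.trans_le hy) hx (by rwa [abs_sub_comm])⟩

lemma abs_regLog_sub_le (ε : ℝ) {z ξ : ℂ} (hξ : ‖ξ‖ ≤ r) (hz : 2 * r ≤ ‖z‖)
    (hz0 : 0 < ‖z‖) : |regLog ε (z - ξ) - regLog ε z| ≤ 5 * r / ‖z‖ := by
  have hr : 0 ≤ r := (norm_nonneg _).trans hξ
  have hhalf := half_norm_le_norm_sub hξ hz
  have hdiff : |‖z - ξ‖ ^ 2 + ε ^ 2 - (‖z‖ ^ 2 + ε ^ 2)| ≤ r * (5 / 2 * ‖z‖) := by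
    have hle : |‖z - ξ‖ - ‖z‖| ≤ ‖ξ‖ := by
      simpa only [sub_sub_cancel_left, norm_neg] using abs_norm_sub_norm_le (z - ξ) z
    have hadd : ‖z - ξ‖ ≤ ‖z‖ + ‖ξ‖ := norm_sub_le _ _
    rw [add_sub_add_right_eq_sub, sq_sub_sq, abs_mul, mul_comm,
      abs_of_nonneg (by positivity : 0 ≤ ‖z - ξ‖ + ‖z‖)]
    exact mul_le_mul (hle.trans hξ) (by linarith) (by positivity) hr
  have hlog := abs_log_sub_log_le (a := ‖z‖ ^ 2 / 4) (by positivity) (by nlinarith)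
    (by nlinarith) hdiff
  calc |regLog ε (z - ξ) - regLog ε z|
      = |Real.log (‖z - ξ‖ ^ 2 + ε ^ 2) - Real.log (‖z‖ ^ 2 + ε ^ 2)| / 2 := by
        rw [regLog, regLog, ← sub_div, abs_div, abs_two]
    _ ≤ r * (5 / 2 * ‖z‖) / (‖z‖ ^ 2 / 4) / 2 := by gcongr
    _ = 5 * r / ‖z‖ := by field_simp; ring

variable {μ : Measure ℂ}

section FiniteMeasure

variable [IsFiniteMeasure μ]

lemma integrable_of_continuous_of_measure_compl_eq_zero (hμ : μ (closedBall 0 r)ᶜ = 0) {f : ℂ → ℝ}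
    (hf : Continuous f) : Integrable f μ := by
  rw [← Measure.restrict_eq_self_of_ae_mem (mem_ae_iff.2 hμ)]
  exact hf.continuousOn.integrableOn_compact (isCompact_closedBall 0 r)

lemma integrable_regLog_sub (hμ : μ (closedBall 0 r)ᶜ = 0) (hε : 0 < ε) (z : ℂ) :
    Integrable (fun ξ => regLog ε (z - ξ)) μ :=
  integrable_of_continuous_of_measure_compl_eq_zero hμ
    ((continuous_regLog hε).comp (continuous_sub_left z))

lemma hasFDerivAt_regLogPotential (hμ : μ (closedBall 0 r)ᶜ = 0) (hε : 0 < ε) (z : ℂ) :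
    HasFDerivAt (regLogPotential ε μ)
      (Complex.reCLM.comp (ContinuousLinearMap.mul ℝ ℂ (regCauchyTransform ε μ z))) z := by
  let Φ : ℂ →L[ℝ] ℂ →L[ℝ] ℝ := (ContinuousLinearMap.compL ℝ ℂ ℂ ℝ Complex.reCLM).comp
    (ContinuousLinearMap.mul ℝ ℂ)
  have hΦ : ∀ w : ℂ, ‖Φ w‖ ≤ ‖w‖ := fun w => by
    refine ContinuousLinearMap.opNorm_le_bound _ (norm_nonneg _) fun v => ?_
    calc ‖Φ w v‖ = |(w * v).re| := rfl
      _ ≤ ‖w * v‖ := Complex.abs_re_le_norm _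
      _ = ‖w‖ * ‖v‖ := norm_mul _ _
  have hint := integrable_regCauchy_sub μ hε z
  have h := hasFDerivAt_integral_of_dominated_of_fderiv_le (μ := μ) (𝕜 := ℝ)
    (F := fun z ξ => regLog ε (z - ξ)) (F' := fun z ξ => Φ (regCauchy ε (z - ξ)))
    (bound := fun _ => 1 / ε) (x₀ := z) (s := univ) univ_mem
    (Eventually.of_forall fun z => (integrable_regLog_sub hμ hε z).aestronglyMeasurable)
    (integrable_regLog_sub hμ hε z)
    (Φ.continuous.comp_aestronglyMeasurable hint.aestronglyMeasurable)
    (Eventually.of_forall fun _ _ _ => (hΦ _).trans (norm_regCauchy_le hε _))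
    (integrable_const _)
    (Eventually.of_forall fun ξ z _ => by
      have := (hasFDerivAt_regLog hε (z - ξ)).comp z ((hasFDerivAt_id z).sub_const ξ)
      rwa [ContinuousLinearMap.comp_id] at this)
  exact h.congr_fderiv (Φ.integral_comp_comm hint)

lemma ae_exists_forall_abs_regLogPotential_le (hμ : μ (closedBall 0 r)ᶜ = 0) :
    ∀ᵐ z : ℂ, ∃ M, ∀ ε, 0 < ε → ε ≤ 1 → |regLogPotential ε μ z| ≤ M := by
  filter_upwards [ae_measure_singleton_eq_zero μ, ae_integrable_inv_sub μ] with z h0 hz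
  refine ⟨∫ ξ, (‖z - ξ‖ ^ 2 + ‖(z - ξ)⁻¹‖) ∂μ, fun ε hε hε1 => ?_⟩
  rw [← Real.norm_eq_abs]
  refine norm_integral_le_of_norm_le ?_ ?_
  · exact (integrable_of_continuous_of_measure_compl_eq_zero hμ (by fun_prop)).add hz.norm
  · filter_upwards [compl_mem_ae_iff.2 h0] with ξ hξ
    exact abs_regLog_le hε hε1 (sub_ne_zero.2 fun h => hξ h.symm)

end FiniteMeasure

variable [IsProbabilityMeasure μ]

lemma norm_regCauchyTransform_le_of_far (hμ : μ (closedBall 0 r)ᶜ = 0) (hε : 0 < ε) {z : ℂ}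
    (hz : 2 * r ≤ ‖z‖) (hz0 : 0 < ‖z‖) : ‖regCauchyTransform ε μ z‖ ≤ 2 / ‖z‖ := by
  refine (norm_integral_le_of_norm_le_const (C := 2 / ‖z‖) ?_).trans_eq (by simp)
  filter_upwards [mem_ae_iff.2 hμ] with ξ hξ
  have hhalf := half_norm_le_norm_sub (mem_closedBall_zero_iff.1 hξ) hz
  refine (norm_regCauchy_le_inv hε _).trans ?_
  rwa [norm_inv, inv_le_comm₀ (by linarith) (by positivity), inv_div]

lemma abs_regLogPotential_sub_regLog_le (hμ : μ (closedBall 0 r)ᶜ = 0) (hε : 0 < ε) {z : ℂ}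
    (hz : 2 * r ≤ ‖z‖) (hz0 : 0 < ‖z‖) :
    |regLogPotential ε μ z - regLog ε z| ≤ 5 * r / ‖z‖ := by
  have hsub : regLogPotential ε μ z - regLog ε z = ∫ ξ, (regLog ε (z - ξ) - regLog ε z) ∂μ := by
    rw [integral_sub (integrable_regLog_sub hμ hε z) (integrable_const _)]
    simp [regLogPotential]
  rw [hsub, ← Real.norm_eq_abs]
  refine (norm_integral_le_of_norm_le_const (C := 5 * r / ‖z‖) ?_).trans_eq (by simp)
  filter_upwards [mem_ae_iff.2 hμ] with ξ hξ
  exact abs_regLog_sub_le ε (mem_closedBall_zero_iff.1 hξ) hz hz0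

end Potentials

section LocalBounds

variable {η : ℂ → ℝ} {ε d M : ℝ} {z : ℂ}

lemma norm_regCauchy_sub_le_inv (hε : 0 < ε) (hd : 0 < d) {w : ℂ} (hw : d ≤ ‖w - z‖) :
    ‖regCauchy ε (w - z)‖ ≤ d⁻¹ := by
  refine (norm_regCauchy_le_inv hε _).trans ?_
  rw [norm_inv]
  exact inv_anti₀ hd hw

lemma dbar_eq_zero_of_eq_one (hz : ∀ w, ‖w - z‖ ≤ d → η w = 1) {w : ℂ} (hw : ‖w - z‖ < d) :
    dbar (fun w => (η w : ℂ)) w = 0 := by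
  have h : (fun w => (η w : ℂ)) =ᶠ[𝓝 w] fun _ => 1 := by
    filter_upwards [(continuous_sub_right z).norm.continuousAt.eventually_lt
      continuousAt_const hw] with v hv
    rw [hz v hv.le, Complex.ofReal_one]
  simp [dbar, h.fderiv_eq]

lemma norm_dbar_cutoff_mul_regCauchy_mul_le (hη : ContDiff ℝ 1 η) (hη1 : ∀ z, η z ∈ Icc 0 1)
    (hM0 : 0 ≤ M) (hd : 0 < d) (hε : 0 < ε) (hz : ∀ w, ‖w - z‖ ≤ d → η w = 1) {w c : ℂ}
    (hc : η w ≠ 0 → ‖c‖ ≤ M) :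
    ‖dbar (fun w => (η w : ℂ) * regCauchy ε (w - z)) w * c‖ ≤
      M * regDelta ε (w - z) + d⁻¹ * ‖dbar (fun w => (η w : ℂ)) w * c‖ := by
  have hηd : Differentiable ℝ fun w => (η w : ℂ) :=
    (Complex.ofRealCLM.contDiff.comp hη).differentiable one_ne_zero
  have hkd : Differentiable ℝ fun w => regCauchy ε (w - z) :=
    ((contDiff_regCauchy hε).comp (contDiff_id.sub contDiff_const)).differentiable one_ne_zero
  have hδ := regDelta_nonneg ε (w - z)
  have hmass : ‖(η w : ℂ) * regDelta ε (w - z) * c‖ ≤ M * regDelta ε (w - z) := by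
    by_cases h0 : η w = 0
    · simpa [h0] using by positivity
    · rw [norm_mul, norm_mul, Complex.norm_real, Complex.norm_real, Real.norm_of_nonneg (hη1 w).1,
        Real.norm_of_nonneg hδ]
      calc η w * regDelta ε (w - z) * ‖c‖ ≤ 1 * regDelta ε (w - z) * M := by
            have := hc h0
            have := (hη1 w).2
            gcongr
        _ = M * regDelta ε (w - z) := by ring
  have hcut : ‖dbar (fun w => (η w : ℂ)) w * regCauchy ε (w - z) * c‖ ≤
      d⁻¹ * ‖dbar (fun w => (η w : ℂ)) w * c‖ := by
    rcases lt_or_ge ‖w - z‖ d with h | h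
    · simp [dbar_eq_zero_of_eq_one hz h]
    · rw [mul_right_comm, norm_mul, mul_comm]
      exact mul_le_mul_of_nonneg_right (norm_regCauchy_sub_le_inv hε hd h) (norm_nonneg _)
  rw [dbar_mul (hηd w) (hkd w), dbar_regCauchy_sub hε, add_mul, add_comm]
  exact (norm_add_le _ _).trans (add_le_add hmass hcut)

variable (μ : Measure ℂ) [IsFiniteMeasure μ]

lemma norm_integral_cutoff_mul_regCauchy_le (hη : ContDiff ℝ 1 η) (hηs : HasCompactSupport η)
    (hη1 : ∀ z, η z ∈ Icc 0 1) (hM0 : 0 ≤ M)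
    (hM : ∀ᵐ z, η z ≠ 0 → ‖cauchyTransform μ z‖ ≤ M) (hd : 0 < d) (hε : 0 < ε)
    (hz : ∀ w, ‖w - z‖ ≤ d → η w = 1) :
    ‖∫ ξ, (η ξ : ℂ) * regCauchy ε (ξ - z) ∂μ‖ ≤ (2 * Real.pi)⁻¹ * (M * (2 * Real.pi) +
      d⁻¹ * ∫ w, ‖dbar (fun w => (η w : ℂ)) w * cauchyTransform μ w‖) := by
  have hηc : ContDiff ℝ 1 fun w => (η w : ℂ) := Complex.ofRealCLM.contDiff.comp hη
  have hηcs : HasCompactSupport fun w => (η w : ℂ) := hηs.comp_left Complex.ofReal_zero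
  have hkd : ContDiff ℝ 1 fun w => regCauchy ε (w - z) :=
    (contDiff_regCauchy hε).comp (contDiff_id.sub contDiff_const)
  have hδi := (integrable_regDelta_sub_left hε z).const_mul M
  have hci := (integrable_mul_cauchyTransform μ (continuous_dbar hηc)
    (hasCompactSupport_dbar hηcs)).norm.const_mul d⁻¹
  have hbound : ‖∫ w, dbar (fun w => (η w : ℂ) * regCauchy ε (w - z)) w * cauchyTransform μ w‖ ≤
      M * (2 * Real.pi) +
        d⁻¹ * ∫ w, ‖dbar (fun w => (η w : ℂ)) w * cauchyTransform μ w‖ := by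
    refine (norm_integral_le_of_norm_le (hδi.add hci) (hM.mono fun w hw =>
      norm_dbar_cutoff_mul_regCauchy_mul_le hη hη1 hM0 hd hε hz hw)).trans_eq ?_
    exact (integral_add hδi hci).trans
      (by rw [integral_const_mul, integral_const_mul, integral_regDelta_sub hε])
  have hnorm : ‖(2 * Real.pi : ℂ)‖ = 2 * Real.pi := by
    rw [norm_mul, Complex.norm_ofNat, Complex.norm_real, Real.norm_of_nonneg Real.pi_nonneg]
  rw [integral_dbar_mul_cauchyTransform μ (hηc.mul hkd) hηcs.mul_right, norm_neg, norm_mul,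
    hnorm] at hbound
  rwa [inv_mul_eq_div, le_div_iff₀' Real.two_pi_pos]

lemma norm_regCauchyTransform_le_of_norm_cauchyTransform_le (hη : ContDiff ℝ 1 η)
    (hηs : HasCompactSupport η) (hη1 : ∀ z, η z ∈ Icc 0 1) (hM0 : 0 ≤ M)
    (hM : ∀ᵐ z, η z ≠ 0 → ‖cauchyTransform μ z‖ ≤ M) (hd : 0 < d) (hε : 0 < ε)
    (hz : ∀ w, ‖w - z‖ ≤ d → η w = 1) :
    ‖regCauchyTransform ε μ z‖ ≤ (2 * Real.pi)⁻¹ * (M * (2 * Real.pi) +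
      d⁻¹ * ∫ w, ‖dbar (fun w => (η w : ℂ)) w * cauchyTransform μ w‖) + d⁻¹ * μ.real univ := by
  have hneg : ∀ ξ, regCauchy ε (z - ξ) = -regCauchy ε (ξ - z) := fun ξ => by
    rw [← regCauchy_neg, neg_sub]
  have hki : Integrable (fun ξ => regCauchy ε (ξ - z)) μ := by
    simpa only [hneg, integrable_fun_neg_iff] using integrable_regCauchy_sub μ hε z
  have hgi : Integrable (fun ξ => (η ξ : ℂ) * regCauchy ε (ξ - z)) μ :=
    ((Complex.continuous_ofReal.comp hη.continuous).mul ((continuous_regCauchy hε).comp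
      (continuous_sub_right z))).integrable_of_hasCompactSupport
        (hηs.comp_left Complex.ofReal_zero).mul_right
  have hsplit : ∫ ξ, regCauchy ε (ξ - z) ∂μ = (∫ ξ, (η ξ : ℂ) * regCauchy ε (ξ - z) ∂μ) +
      ∫ ξ, (1 - η ξ : ℂ) * regCauchy ε (ξ - z) ∂μ := by
    simp_rw [sub_mul, one_mul]
    rw [integral_sub hki hgi, add_sub_cancel]
  have hfar : ∀ ξ, ‖(1 - η ξ : ℂ) * regCauchy ε (ξ - z)‖ ≤ d⁻¹ := fun ξ => by
    rcases le_or_gt ‖ξ - z‖ d with h | h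
    · simp [hz ξ h, hd.le]
    · rw [norm_mul, ← Complex.ofReal_one, ← Complex.ofReal_sub, Complex.norm_real,
        Real.norm_of_nonneg (sub_nonneg.2 (hη1 ξ).2)]
      exact (mul_le_of_le_one_left (norm_nonneg _) (sub_le_self _ (hη1 ξ).1)).trans
        (norm_regCauchy_sub_le_inv hε hd h.le)
  simp_rw [regCauchyTransform, hneg]
  rw [integral_neg, norm_neg, hsplit]
  exact (norm_add_le _ _).trans (add_le_add
    (norm_integral_cutoff_mul_regCauchy_le μ hη hηs hη1 hM0 hM hd hε hz)
    (norm_integral_le_of_norm_le_const (Eventually.of_forall hfar)))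

end LocalBounds

section EnergyIdentity

/-- The difference of the regularised logarithmic potentials of two measures: the function whose
weighted Dirichlet integral is estimated to prove uniqueness. -/
noncomputable def potentialDiff (ε : ℝ) (μ ν : Measure ℂ) (z : ℂ) : ℝ :=
  regLogPotential ε μ z - regLogPotential ε ν z

lemma hasDerivAt_arctan_sq (x : ℝ) :
    HasDerivAt (fun x => Real.arctan x ^ 2) (2 * Real.arctan x * (1 / (1 + x ^ 2))) x := by
  simpa using (Real.hasDerivAt_arctan x).fun_pow 2

lemma continuous_one_div_one_add_sq : Continuous fun x : ℝ => 1 / (1 + x ^ 2) :=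
  continuous_const.div (by fun_prop) fun x => by positivity

lemma one_div_one_add_sq_le_one (x : ℝ) : 1 / (1 + x ^ 2) ≤ 1 :=
  div_le_one_of_le₀ (le_add_of_nonneg_right (sq_nonneg x)) (by positivity)

lemma abs_arctan_le_pi_div_two (x : ℝ) : |Real.arctan x| ≤ Real.pi / 2 :=
  abs_le.2 ⟨(Real.neg_pi_div_two_lt_arctan x).le, (Real.arctan_lt_pi_div_two x).le⟩

lemma abs_two_mul_arctan_mul_le_pi (x : ℝ) :
    |2 * Real.arctan x * (1 / (1 + x ^ 2))| ≤ Real.pi := by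
  rw [abs_mul, abs_mul, abs_two, abs_of_nonneg (by positivity : 0 ≤ 1 / (1 + x ^ 2))]
  calc 2 * |Real.arctan x| * (1 / (1 + x ^ 2)) ≤ 2 * (Real.pi / 2) * 1 := by
        gcongr
        exacts [abs_arctan_le_pi_div_two x, one_div_one_add_sq_le_one x]
    _ = Real.pi := by ring

variable {ε r t δ : ℝ} {μ ν : Measure ℂ} {χ : ℂ → ℝ}

section FiniteMeasure

variable [IsFiniteMeasure μ] [IsFiniteMeasure ν]

lemma hasFDerivAt_potentialDiff (hμ : μ (closedBall 0 r)ᶜ = 0) (hν : ν (closedBall 0 r)ᶜ = 0)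
    (hε : 0 < ε) (z : ℂ) : HasFDerivAt (potentialDiff ε μ ν) (Complex.reCLM.comp
      (ContinuousLinearMap.mul ℝ ℂ (regCauchyTransform ε μ z - regCauchyTransform ε ν z))) z := by
  refine ((hasFDerivAt_regLogPotential hμ hε z).sub
    (hasFDerivAt_regLogPotential hν hε z)).congr_fderiv ?_
  ext v
  simp

lemma contDiff_potentialDiff (hμ : μ (closedBall 0 r)ᶜ = 0) (hν : ν (closedBall 0 r)ᶜ = 0)
    (hε : 0 < ε) : ContDiff ℝ 1 (potentialDiff ε μ ν) :=
  contDiff_one_iff_hasFDerivAt.2 ⟨_, continuous_const.clm_comp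
    ((ContinuousLinearMap.mul ℝ ℂ).continuous.comp ((continuous_regCauchyTransform μ hε).sub
      (continuous_regCauchyTransform ν hε))), hasFDerivAt_potentialDiff hμ hν hε⟩

lemma dbar_comp_potentialDiff (hμ : μ (closedBall 0 r)ᶜ = 0) (hν : ν (closedBall 0 r)ᶜ = 0)
    (hε : 0 < ε) {φ φ' : ℝ → ℝ} (hφ : ∀ x, HasDerivAt φ (φ' x) x) (z : ℂ) :
    dbar (fun z => (φ (potentialDiff ε μ ν z) : ℂ)) z = φ' (potentialDiff ε μ ν z) *
      conj (regCauchyTransform ε μ z - regCauchyTransform ε ν z) := by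
  rw [dbar_ofReal_of_hasFDerivAt (g := fun z => φ (potentialDiff ε μ ν z))
    ((hφ _).comp_hasFDerivAt z (hasFDerivAt_potentialDiff hμ hν hε z))]
  generalize regCauchyTransform ε μ z - regCauchyTransform ε ν z = w
  apply Complex.ext <;> simp

lemma integral_cutoff_mul_comp_mul_regDensity (hμ : μ (closedBall 0 r)ᶜ = 0)
    (hν : ν (closedBall 0 r)ᶜ = 0) (hε : 0 < ε) {φ φ' : ℝ → ℝ}
    (hφ : ∀ x, HasDerivAt φ (φ' x) x) (hφ' : Continuous φ') (hχ : ContDiff ℝ 1 χ)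
    (hχs : HasCompactSupport χ) (ρ : Measure ℂ) [IsFiniteMeasure ρ] :
    ((∫ z, χ z * φ (potentialDiff ε μ ν z) * regDensity ε ρ z : ℝ) : ℂ) =
      -(∫ z, dbar (fun z => (χ z : ℂ)) z * φ (potentialDiff ε μ ν z) *
        regCauchyTransform ε ρ z) -
      ∫ z, χ z * (φ' (potentialDiff ε μ ν z) *
        conj (regCauchyTransform ε μ z - regCauchyTransform ε ν z)) *
          regCauchyTransform ε ρ z := by
  have hu := contDiff_potentialDiff hμ hν hε
  have hφd : ContDiff ℝ 1 φ := contDiff_one_iff_deriv.2 ⟨fun x => (hφ x).differentiableAt, by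
    rwa [show deriv φ = φ' from funext fun x => (hφ x).deriv]⟩
  have hχd : ContDiff ℝ 1 fun z => (χ z : ℂ) := Complex.ofRealCLM.contDiff.comp hχ
  have hχcs : HasCompactSupport fun z => (χ z : ℂ) := hχs.comp_left Complex.ofReal_zero
  have hφu : ContDiff ℝ 1 fun z => (φ (potentialDiff ε μ ν z) : ℂ) :=
    Complex.ofRealCLM.contDiff.comp (hφd.comp hu)
  have hC := continuous_regCauchyTransform ρ hε
  have hconj : Continuous fun z =>
      conj (regCauchyTransform ε μ z - regCauchyTransform ε ν z) :=
    Complex.continuous_conj.comp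
      ((continuous_regCauchyTransform μ hε).sub (continuous_regCauchyTransform ν hε))
  have hparts := integral_mul_regDensity ρ hε (hχd.mul hφu) hχcs.mul_right
  simp_rw [fun z => dbar_mul (hχd.differentiable one_ne_zero z)
    (hφu.differentiable one_ne_zero z), dbar_comp_potentialDiff hμ hν hε hφ, add_mul] at hparts
  rw [integral_add, neg_add'] at hparts
  · rw [← hparts, ← integral_complex_ofReal]
    simp_rw [Complex.ofReal_mul]
  · exact (((continuous_dbar hχd).mul hφu.continuous).mul hC).integrable_of_hasCompactSupport
      (hasCompactSupport_dbar hχcs).mul_right.mul_right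
  · exact ((hχd.continuous.mul ((Complex.continuous_ofReal.comp (hφ'.comp hu.continuous)).mul
      hconj)).mul hC).integrable_of_hasCompactSupport hχcs.mul_right.mul_right

lemma integral_cutoff_mul_comp_mul_regDensity_add (hμ : μ (closedBall 0 r)ᶜ = 0)
    (hν : ν (closedBall 0 r)ᶜ = 0) (hε : 0 < ε) {φ φ' : ℝ → ℝ}
    (hφ : ∀ x, HasDerivAt φ (φ' x) x) (hφ' : Continuous φ') (hχ : ContDiff ℝ 1 χ)
    (hχs : HasCompactSupport χ) (c : ℝ) :
    (((∫ z, χ z * φ (potentialDiff ε μ ν z) * regDensity ε μ z) +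
      c * ∫ z, χ z * φ (potentialDiff ε μ ν z) * regDensity ε ν z : ℝ) : ℂ) =
      -(∫ z, dbar (fun z => (χ z : ℂ)) z * φ (potentialDiff ε μ ν z) *
        (regCauchyTransform ε μ z + c * regCauchyTransform ε ν z)) -
      ∫ z, χ z * (φ' (potentialDiff ε μ ν z) *
        conj (regCauchyTransform ε μ z - regCauchyTransform ε ν z)) *
          (regCauchyTransform ε μ z + c * regCauchyTransform ε ν z) := by
  have hu := (contDiff_potentialDiff hμ hν hε).continuous
  have hχc : Continuous fun z => (χ z : ℂ) := Complex.continuous_ofReal.comp hχ.continuous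
  have hχcs : HasCompactSupport fun z => (χ z : ℂ) := hχs.comp_left Complex.ofReal_zero
  have hdχ : Continuous (dbar fun z => (χ z : ℂ)) :=
    continuous_dbar (Complex.ofRealCLM.contDiff.comp hχ)
  have hφu : Continuous fun z => (φ (potentialDiff ε μ ν z) : ℂ) := Complex.continuous_ofReal.comp
    ((continuous_iff_continuousAt.2 fun x => (hφ x).continuousAt).comp hu)
  have hφ'u : Continuous fun z => (φ' (potentialDiff ε μ ν z) : ℂ) *
      conj (regCauchyTransform ε μ z - regCauchyTransform ε ν z) :=
    (Complex.continuous_ofReal.comp (hφ'.comp hu)).mul (Complex.continuous_conj.comp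
      ((continuous_regCauchyTransform μ hε).sub (continuous_regCauchyTransform ν hε)))
  have hint : ∀ (ρ : Measure ℂ) [IsFiniteMeasure ρ] {f k : ℂ → ℂ}, Continuous f →
      HasCompactSupport f → Continuous k →
        Integrable fun z => f z * k z * regCauchyTransform ε ρ z := fun ρ _ _ _ hf hfs hk =>
    ((hf.mul hk).mul (continuous_regCauchyTransform ρ hε)).integrable_of_hasCompactSupport
      hfs.mul_right.mul_right
  simp_rw [mul_add, mul_left_comm _ (c : ℂ)]
  rw [integral_add (hint μ hdχ (hasCompactSupport_dbar hχcs) hφu)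
      ((hint ν hdχ (hasCompactSupport_dbar hχcs) hφu).const_mul _),
    integral_add (hint μ hχc hχcs hφ'u) ((hint ν hχc hχcs hφ'u).const_mul _),
    integral_const_mul, integral_const_mul, Complex.ofReal_add, Complex.ofReal_mul,
    integral_cutoff_mul_comp_mul_regDensity hμ hν hε hφ hφ' hχ hχs μ,
    integral_cutoff_mul_comp_mul_regDensity hμ hν hε hφ hφ' hχ hχs ν]
  ring

lemma integral_cutoff_mul_arctan_sq_mul_regDensity_le (hμ : μ (closedBall 0 r)ᶜ = 0)
    (hν : ν (closedBall 0 r)ᶜ = 0) (hε : 0 < ε) (hχ : ContDiff ℝ 1 χ) (hχs : HasCompactSupport χ)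
    (hχ0 : ∀ z, 0 ≤ χ z)
    (hbdry : -(∫ z, dbar (fun z => (χ z : ℂ)) z * (Real.arctan (potentialDiff ε μ ν z) ^ 2 : ℝ) *
      (regCauchyTransform ε μ z + regCauchyTransform ε ν z)).re ≤ δ)
    (hprod : ∫ z, χ z * ‖(regCauchyTransform ε μ z - regCauchyTransform ε ν z) *
      (regCauchyTransform ε μ z + regCauchyTransform ε ν z)‖ ≤ δ) :
    (∫ z, χ z * Real.arctan (potentialDiff ε μ ν z) ^ 2 * regDensity ε μ z) +
      ∫ z, χ z * Real.arctan (potentialDiff ε μ ν z) ^ 2 * regDensity ε ν z ≤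
        (1 + Real.pi) * δ := by
  have hid := integral_cutoff_mul_comp_mul_regDensity_add hμ hν hε hasDerivAt_arctan_sq
    ((continuous_const.mul Real.continuous_arctan).mul continuous_one_div_one_add_sq) hχ hχs 1
  simp only [Complex.ofReal_one, one_mul] at hid
  have hCμ := continuous_regCauchyTransform μ hε
  have hCν := continuous_regCauchyTransform ν hε
  have hmain : ‖∫ z, (χ z : ℂ) * (((2 * Real.arctan (potentialDiff ε μ ν z) *
      (1 / (1 + potentialDiff ε μ ν z ^ 2)) : ℝ) : ℂ) *
        conj (regCauchyTransform ε μ z - regCauchyTransform ε ν z)) *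
          (regCauchyTransform ε μ z + regCauchyTransform ε ν z)‖ ≤ Real.pi * δ := by
    have hint : Integrable fun z => χ z * ‖(regCauchyTransform ε μ z - regCauchyTransform ε ν z) *
        (regCauchyTransform ε μ z + regCauchyTransform ε ν z)‖ :=
      (hχ.continuous.mul ((hCμ.sub hCν).mul (hCμ.add hCν)).norm).integrable_of_hasCompactSupport
        hχs.mul_right
    refine (norm_integral_le_of_norm_le (hint.const_mul Real.pi)
      (Eventually.of_forall fun z => ?_)).trans ?_
    · rw [norm_mul, norm_mul, norm_mul, Complex.norm_real, Complex.norm_real, RCLike.norm_conj,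
        Real.norm_of_nonneg (hχ0 z), Real.norm_eq_abs, norm_mul]
      have := hχ0 z
      calc _ ≤ χ z * (Real.pi * ‖regCauchyTransform ε μ z - regCauchyTransform ε ν z‖) *
            ‖regCauchyTransform ε μ z + regCauchyTransform ε ν z‖ := by
            gcongr
            exact abs_two_mul_arctan_mul_le_pi _
        _ = _ := by ring
    · rw [integral_const_mul]
      exact mul_le_mul_of_nonneg_left hprod Real.pi_nonneg
  have hre := congrArg Complex.re hid
  rw [Complex.ofReal_re, Complex.sub_re, Complex.neg_re] at hre
  linarith [neg_le_of_abs_le ((Complex.abs_re_le_norm _).trans hmain)]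

/-- The integrand of the truncated Dirichlet energy of the regularised potential difference `u`:
the weight `1 / (1 + u ^ 2)` is the derivative of `arctan` at `u`, and `∂u` is half the difference
of the regularised Cauchy transforms. -/
noncomputable def energyDensity (ε : ℝ) (μ ν : Measure ℂ) (z : ℂ) : ℝ :=
  1 / (1 + potentialDiff ε μ ν z ^ 2) * ‖regCauchyTransform ε μ z - regCauchyTransform ε ν z‖ ^ 2

lemma integral_cutoff_mul_energyDensity_eq (hμ : μ (closedBall 0 r)ᶜ = 0)
    (hν : ν (closedBall 0 r)ᶜ = 0) (hε : 0 < ε) (hχ : ContDiff ℝ 1 χ)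
    (hχs : HasCompactSupport χ) :
    ∫ z, χ z * energyDensity ε μ ν z =
      -(∫ z, dbar (fun z => (χ z : ℂ)) z * Real.arctan (potentialDiff ε μ ν z) *
        (regCauchyTransform ε μ z - regCauchyTransform ε ν z)).re -
      ((∫ z, χ z * Real.arctan (potentialDiff ε μ ν z) * regDensity ε μ z) -
        ∫ z, χ z * Real.arctan (potentialDiff ε μ ν z) * regDensity ε ν z) := by
  have hid := integral_cutoff_mul_comp_mul_regDensity_add hμ hν hε Real.hasDerivAt_arctan
    continuous_one_div_one_add_sq hχ hχs (-1)
  simp only [Complex.ofReal_neg, Complex.ofReal_one, neg_one_mul, ← sub_eq_add_neg] at hid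
  have hsq : ∀ z, (χ z : ℂ) * (((1 / (1 + potentialDiff ε μ ν z ^ 2) : ℝ) : ℂ) *
      conj (regCauchyTransform ε μ z - regCauchyTransform ε ν z)) *
        (regCauchyTransform ε μ z - regCauchyTransform ε ν z) =
      ((χ z * energyDensity ε μ ν z : ℝ) : ℂ) := fun z => by
    rw [energyDensity, mul_assoc, mul_assoc, ← Complex.normSq_eq_conj_mul_self, ← Complex.sq_norm]
    push_cast
    ring
  simp_rw [hsq, integral_complex_ofReal] at hid
  have hre := congrArg Complex.re hid
  rw [Complex.ofReal_re, Complex.sub_re, Complex.neg_re, Complex.ofReal_re] at hre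
  linarith

end FiniteMeasure

section ProbabilityMeasure

variable (μ) [IsProbabilityMeasure μ]

lemma integral_cutoff_mul_regDensity_le (hε : 0 < ε) (hχ : Continuous χ)
    (hχs : HasCompactSupport χ) (hχ1 : ∀ z, χ z ∈ Icc 0 1) :
    ∫ z, χ z * regDensity ε μ z ≤ 2 * Real.pi := by
  have hswap := integral_mul_regDensity_eq_integral_integral μ hε (g := fun z => (χ z : ℂ))
    (Complex.continuous_ofReal.comp hχ) (hχs.comp_left Complex.ofReal_zero)
  simp_rw [← Complex.ofReal_mul, integral_complex_ofReal, Complex.ofReal_inj] at hswap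
  have hnonneg : ∀ ξ z, 0 ≤ χ z * regDelta ε (z - ξ) := fun ξ z =>
    mul_nonneg (hχ1 z).1 (regDelta_nonneg _ _)
  rw [hswap]
  refine (Real.le_norm_self _).trans ((norm_integral_le_of_norm_le_const (C := 2 * Real.pi)
    (Eventually.of_forall fun ξ => ?_)).trans_eq (by simp))
  rw [Real.norm_of_nonneg (integral_nonneg (hnonneg ξ)), ← integral_regDelta_sub hε ξ]
  exact integral_mono_of_nonneg (Eventually.of_forall (hnonneg ξ))
    (integrable_regDelta_sub_left hε ξ)
    (Eventually.of_forall fun z => mul_le_of_le_one_left (regDelta_nonneg _ _) (hχ1 z).2)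

lemma abs_integral_cutoff_mul_mul_regDensity_le (hε : 0 < ε) (hχ : Continuous χ)
    (hχs : HasCompactSupport χ) (hχ1 : ∀ z, χ z ∈ Icc 0 1) (ht : 0 < t) {f : ℂ → ℝ}
    (hf : Continuous f) :
    |∫ z, χ z * f z * regDensity ε μ z| ≤
      (∫ z, χ z * f z ^ 2 * regDensity ε μ z) / (2 * t) + t * Real.pi := by
  have hp := continuous_regDensity μ hε
  have hsq : Integrable fun z => χ z * f z ^ 2 * regDensity ε μ z :=
    ((hχ.mul (hf.pow 2)).mul hp).integrable_of_hasCompactSupport hχs.mul_right.mul_right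
  have hone : Integrable fun z => χ z * regDensity ε μ z :=
    (hχ.mul hp).integrable_of_hasCompactSupport hχs.mul_right
  have hamgm : ∀ x : ℝ, |x| ≤ x ^ 2 / (2 * t) + t / 2 := fun x => by
    rw [← sq_abs, div_add_div _ _ (by positivity) two_ne_zero, le_div_iff₀ (by positivity)]
    nlinarith [sq_nonneg (|x| - t)]
  have hle : ∀ z, ‖χ z * f z * regDensity ε μ z‖ ≤
      χ z * f z ^ 2 * regDensity ε μ z / (2 * t) + t / 2 * (χ z * regDensity ε μ z) := fun z => by
    have hp0 := regDensity_nonneg μ ε z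
    have hχ0 := (hχ1 z).1
    rw [norm_mul, norm_mul, Real.norm_of_nonneg hχ0, Real.norm_eq_abs, Real.norm_of_nonneg hp0]
    calc χ z * |f z| * regDensity ε μ z
        ≤ χ z * (f z ^ 2 / (2 * t) + t / 2) * regDensity ε μ z := by
          gcongr
          exact hamgm _
      _ = _ := by ring
  calc |∫ z, χ z * f z * regDensity ε μ z|
      ≤ ∫ z, (χ z * f z ^ 2 * regDensity ε μ z / (2 * t) + t / 2 * (χ z * regDensity ε μ z)) :=
        norm_integral_le_of_norm_le ((hsq.div_const _).add (hone.const_mul _))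
          (Eventually.of_forall hle)
    _ = (∫ z, χ z * f z ^ 2 * regDensity ε μ z) / (2 * t) +
        t / 2 * ∫ z, χ z * regDensity ε μ z := by
        rw [integral_add (hsq.div_const _) (hone.const_mul _), integral_div, integral_const_mul]
    _ ≤ _ / (2 * t) + t / 2 * (2 * Real.pi) := by
        gcongr
        exact integral_cutoff_mul_regDensity_le μ hε hχ hχs hχ1
    _ = _ := by ring

end ProbabilityMeasure

lemma integral_cutoff_mul_energyDensity_le [IsProbabilityMeasure μ] [IsProbabilityMeasure ν]
    (hμ : μ (closedBall 0 r)ᶜ = 0) (hν : ν (closedBall 0 r)ᶜ = 0)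
    (hε : 0 < ε) (hχ : ContDiff ℝ 1 χ) (hχs : HasCompactSupport χ)
    (hχ1 : ∀ z, χ z ∈ Icc 0 1) (ht : 0 < t)
    (hbdry_add : -(∫ z, dbar (fun z => (χ z : ℂ)) z *
      (Real.arctan (potentialDiff ε μ ν z) ^ 2 : ℝ) *
        (regCauchyTransform ε μ z + regCauchyTransform ε ν z)).re ≤ δ)
    (hbdry_sub : -(∫ z, dbar (fun z => (χ z : ℂ)) z * Real.arctan (potentialDiff ε μ ν z) *
      (regCauchyTransform ε μ z - regCauchyTransform ε ν z)).re ≤ δ)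
    (hprod : ∫ z, χ z * ‖(regCauchyTransform ε μ z - regCauchyTransform ε ν z) *
      (regCauchyTransform ε μ z + regCauchyTransform ε ν z)‖ ≤ δ) :
    ∫ z, χ z * energyDensity ε μ ν z ≤ δ + (1 + Real.pi) * δ / (2 * t) + 2 * t * Real.pi := by
  have harctan : Continuous fun z => Real.arctan (potentialDiff ε μ ν z) :=
    Real.continuous_arctan.comp (contDiff_potentialDiff hμ hν hε).continuous
  have hmass := div_le_div_of_nonneg_right (integral_cutoff_mul_arctan_sq_mul_regDensity_le hμ hν
    hε hχ hχs (fun z => (hχ1 z).1) hbdry_add hprod) (by positivity : 0 ≤ 2 * t)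
  have hlower := neg_le_of_abs_le (abs_integral_cutoff_mul_mul_regDensity_le μ hε hχ.continuous hχs
    hχ1 ht harctan)
  have hupper := le_of_abs_le (abs_integral_cutoff_mul_mul_regDensity_le ν hε hχ.continuous hχs
    hχ1 ht harctan)
  rw [add_div] at hmass
  rw [integral_cutoff_mul_energyDensity_eq hμ hν hε hχ hχs]
  linarith

end EnergyIdentity

section Boundary

lemma abs_arctan_le_abs (x : ℝ) : |Real.arctan x| ≤ |x| := by
  have h := convex_univ.norm_image_sub_le_of_norm_hasDerivWithin_le (f := Real.arctan) (C := 1)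
    (fun y _ => (Real.hasDerivAt_arctan y).hasDerivWithinAt)
    (fun y _ => (Real.norm_of_nonneg (by positivity)).trans_le (one_div_one_add_sq_le_one y))
    (mem_univ 0) (mem_univ x)
  simpa using h

lemma continuous_dbar_bump (c : ℂ) (r : ℝ) : Continuous (dbar fun z => (bump c r z : ℂ)) :=
  continuous_dbar (Complex.ofRealCLM.contDiff.comp (contDiff_bump c r))

lemma hasCompactSupport_dbar_bump (c : ℂ) {r : ℝ} (hr : 0 < r) :
    HasCompactSupport (dbar fun z => (bump c r z : ℂ)) :=
  hasCompactSupport_dbar ((hasCompactSupport_bump c hr).comp_left Complex.ofReal_zero)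

lemma integral_indicator_ball_const (c : ℂ) {r : ℝ} (hr : 0 ≤ r) (M : ℝ) :
    ∫ z, (ball c r).indicator (fun _ => M) z = M * (Real.pi * r ^ 2) := by
  rw [integral_indicator_const _ measurableSet_ball, measureReal_def, Complex.volume_ball,
    smul_eq_mul, ENNReal.toReal_mul, ENNReal.toReal_pow, ENNReal.toReal_ofReal hr,
    ENNReal.coe_toReal, NNReal.coe_real_pi]
  ring

section HoleCutoff

variable {A : Finset ℂ} {R d δ M : ℝ}

lemma neg_re_dbar_holeCutoff_mul_le (z w : ℂ) :
    -(dbar (fun z => (holeCutoff A R d z : ℂ)) z * w).re ≤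
      ‖dbar (fun z => (bump 0 R z : ℂ)) z * w‖ +
        ∑ a ∈ A, (dbar (fun z => (bump a d z : ℂ)) z * w).re := by
  rw [dbar_holeCutoff, sub_mul, Finset.sum_mul, Complex.sub_re, Complex.re_sum, neg_sub,
    sub_eq_neg_add]
  gcongr
  exact (neg_le_abs _).trans (Complex.abs_re_le_norm _)

lemma neg_re_integral_dbar_holeCutoff_mul_le (h : HolesFit A R d) {F : ℂ → ℂ} (hF : Continuous F)
    {g : ℂ → ℂ → ℝ} (hg : ∀ a ∈ A, Integrable (g a))
    (hgF : ∀ a ∈ A, ∀ z, (dbar (fun z => (bump a d z : ℂ)) z * F z).re ≤ g a z)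
    (hgδ : ∀ a ∈ A, ∫ z, g a z ≤ δ)
    (hM : ∀ z, R ≤ ‖z‖ → ‖dbar (fun z => (bump 0 R z : ℂ)) z * F z‖ ≤ M) :
    -(∫ z, dbar (fun z => (holeCutoff A R d z : ℂ)) z * F z).re ≤
      M * (Real.pi * (2 * R) ^ 2) + A.card * δ := by
  have hint : Integrable fun z => dbar (fun z => (holeCutoff A R d z : ℂ)) z * F z :=
    ((continuous_dbar (Complex.ofRealCLM.contDiff.comp (contDiff_holeCutoff A R d))).mul
      hF).integrable_of_hasCompactSupport
      (hasCompactSupport_dbar (h.hasCompactSupport.comp_left Complex.ofReal_zero)).mul_right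
  have hind : Integrable ((ball (0 : ℂ) (2 * R)).indicator fun _ => M) :=
    (integrable_indicator_iff measurableSet_ball).2 (integrableOn_const measure_ball_lt_top.ne)
  have houter : ∀ z, ‖dbar (fun z => (bump 0 R z : ℂ)) z * F z‖ ≤
      (ball (0 : ℂ) (2 * R)).indicator (fun _ => M) z := by
    intro z
    by_cases hz : z ∈ ball (0 : ℂ) (2 * R)
    · rw [indicator_of_mem hz]
      rcases le_or_gt R ‖z‖ with hRz | hzR
      · exact hM z hRz
      · rw [dbar_bump_eq_zero_of_lt h.radius_pos (by simpa using hzR), zero_mul, norm_zero]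
        exact (norm_nonneg _).trans (hM R (le_abs_self R |>.trans_eq (by simp)))
    · rw [indicator_of_notMem hz, dbar_bump_eq_zero_of_two_mul_le h.radius_pos (by simpa using hz),
        zero_mul, norm_zero]
  have hre : (∫ z, dbar (fun z => (holeCutoff A R d z : ℂ)) z * F z).re =
      ∫ z, (dbar (fun z => (holeCutoff A R d z : ℂ)) z * F z).re :=
    (Complex.reCLM.integral_comp_comm hint).symm
  rw [hre, ← integral_neg]
  calc ∫ z, -(dbar (fun z => (holeCutoff A R d z : ℂ)) z * F z).re
      ≤ ∫ z, ((ball (0 : ℂ) (2 * R)).indicator (fun _ => M) z + ∑ a ∈ A, g a z) :=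
        integral_mono hint.re.neg (hind.add (integrable_finsetSum A hg)) fun z =>
          (neg_re_dbar_holeCutoff_mul_le z (F z)).trans
            (add_le_add (houter z) (Finset.sum_le_sum fun a ha => hgF a ha z))
    _ = M * (Real.pi * (2 * R) ^ 2) + ∑ a ∈ A, ∫ z, g a z := by
        rw [integral_add hind (integrable_finsetSum A hg), integral_finsetSum A hg,
          integral_indicator_ball_const 0 (mul_pos two_pos h.radius_pos).le]
    _ ≤ M * (Real.pi * (2 * R) ^ 2) + A.card * δ := by
        rw [← nsmul_eq_mul]
        gcongr
        exact Finset.sum_le_card_nsmul A _ δ hgδ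

end HoleCutoff

lemma norm_mul_norm_sub_eq (x p q : ℂ) : ‖x‖ * ‖p - q‖ = ‖x * p - x * q‖ := by
  rw [← mul_sub, norm_mul]

section FiniteMeasure

variable (μ : Measure ℂ) [IsFiniteMeasure μ]

lemma integrable_mul_inv_sub {h : ℂ → ℂ} (hh : Continuous h) (hhs : HasCompactSupport h)
    (a m : ℂ) : Integrable fun z => h z * (m * (z - a)⁻¹) := by
  have hdirac := (integrable_mul_cauchyTransform (Measure.dirac a) hh hhs).const_mul m
  simp only [cauchyTransform_dirac] at hdirac
  exact hdirac.congr (Eventually.of_forall fun z => by ring)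

lemma integrable_norm_dbar_bump_mul {ε d : ℝ} (hε : 0 < ε) (hd : 0 < d) (a m : ℂ) :
    Integrable fun z => ‖dbar (fun z => (bump a d z : ℂ)) z‖ *
      ‖regCauchyTransform ε μ z - m * (z - a)⁻¹‖ := by
  have hc := continuous_dbar_bump a d
  have hs := hasCompactSupport_dbar_bump a hd
  simp only [norm_mul_norm_sub_eq]
  exact ((integrable_mul_regCauchyTransform μ hε hc hs).sub (integrable_mul_inv_sub hc hs a m)).norm

lemma eventually_eventually_integral_norm_dbar_bump_mul_le (a : ℂ) {δ : ℝ} (hδ : 0 < δ) :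
    ∀ᶠ d in 𝓝[>] (0 : ℝ), ∀ᶠ ε in 𝓝[>] (0 : ℝ),
      ∫ z, ‖dbar (fun z => (bump a d z : ℂ)) z‖ *
        ‖regCauchyTransform ε μ z - μ.real {a} * (z - a)⁻¹‖ ≤ δ := by
  filter_upwards [(tendsto_integral_norm_dbar_bump_mul μ a).eventually (gt_mem_nhds (half_pos hδ)),
    self_mem_nhdsWithin] with d hatom (hd : 0 < d)
  have hc := continuous_dbar_bump a d
  have hs := hasCompactSupport_dbar_bump a hd
  filter_upwards [(tendsto_integral_norm_mul_regCauchyTransform_sub μ hc hs).eventually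
    (gt_mem_nhds (half_pos hδ)), self_mem_nhdsWithin] with ε hreg (hε : 0 < ε)
  have hC := integrable_mul_cauchyTransform μ hc hs
  have hi_reg := ((integrable_mul_regCauchyTransform μ hε hc hs).sub hC).norm
  have hi_atom := (hC.sub (integrable_mul_inv_sub hc hs a (μ.real {a}))).norm
  simp only [Pi.sub_apply, ← norm_mul_norm_sub_eq] at hi_reg hi_atom
  calc _ ≤ ∫ z, (‖dbar (fun z => (bump a d z : ℂ)) z‖ *
          ‖regCauchyTransform ε μ z - cauchyTransform μ z‖ +
        ‖dbar (fun z => (bump a d z : ℂ)) z‖ *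
          ‖cauchyTransform μ z - μ.real {a} * (z - a)⁻¹‖) := by
        refine integral_mono (integrable_norm_dbar_bump_mul μ hε hd a _) (hi_reg.add hi_atom)
          fun z => ?_
        simp only [← mul_add]
        gcongr
        exact norm_sub_le_norm_sub_add_norm_sub _ _ _
    _ ≤ δ := by rw [integral_add hi_reg hi_atom]; linarith

end FiniteMeasure

lemma re_dbar_bump_mul_le (a z p q : ℂ) {d w c m n : ℝ} (hw : |w| ≤ 4) (hc : |c| ≤ 1)
    (hwmn : 0 ≤ w * (m + c * n)) :
    (dbar (fun z => (bump a d z : ℂ)) z * (w * (p + c * q))).re ≤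
      4 * (‖dbar (fun z => (bump a d z : ℂ)) z‖ * ‖p - m * (z - a)⁻¹‖ +
        ‖dbar (fun z => (bump a d z : ℂ)) z‖ * ‖q - n * (z - a)⁻¹‖) := by
  have hpole : w * (m + c * n) * (dbar (fun z => (bump a d z : ℂ)) z * (z - a)⁻¹).re ≤ 0 :=
    mul_nonpos_of_nonneg_of_nonpos hwmn (re_dbar_bump_mul_inv_nonpos a d z)
  set b := dbar (fun z => (bump a d z : ℂ)) z
  have hsplit : b * (w * (p + c * q)) =
      b * (w * ((p - m * (z - a)⁻¹) + c * (q - n * (z - a)⁻¹))) +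
        ((w * (m + c * n) : ℝ) : ℂ) * (b * (z - a)⁻¹) := by
    push_cast
    ring
  rw [hsplit, Complex.add_re, Complex.re_ofReal_mul]
  refine (add_le_of_nonpos_right hpole).trans ((Complex.re_le_norm _).trans ?_)
  calc ‖b * (w * ((p - m * (z - a)⁻¹) + c * (q - n * (z - a)⁻¹)))‖
      ≤ ‖b‖ * (4 * (‖p - m * (z - a)⁻¹‖ + 1 * ‖q - n * (z - a)⁻¹‖)) := by
        rw [norm_mul, norm_mul, Complex.norm_real]
        gcongr
        · exact hw
        · refine (norm_add_le _ _).trans ?_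
          rw [norm_mul (c : ℂ), Complex.norm_real]
          gcongr
          exact hc
    _ = _ := by ring

section ProbabilityMeasure

variable {μ ν : Measure ℂ} [IsProbabilityMeasure μ] [IsProbabilityMeasure ν] {ε r R L : ℝ}

lemma abs_potentialDiff_le_of_far (hμ : μ (closedBall 0 r)ᶜ = 0) (hν : ν (closedBall 0 r)ᶜ = 0)
    (hε : 0 < ε) {z : ℂ} (hz : 2 * r ≤ ‖z‖) (hz0 : 0 < ‖z‖) :
    |potentialDiff ε μ ν z| ≤ 10 * r / ‖z‖ := by
  calc |potentialDiff ε μ ν z|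
      = |(regLogPotential ε μ z - regLog ε z) - (regLogPotential ε ν z - regLog ε z)| := by
        rw [potentialDiff, sub_sub_sub_cancel_right]
    _ ≤ 5 * r / ‖z‖ + 5 * r / ‖z‖ := (abs_sub _ _).trans (add_le_add
        (abs_regLogPotential_sub_regLog_le hμ hε hz hz0)
        (abs_regLogPotential_sub_regLog_le hν hε hz hz0))
    _ = 10 * r / ‖z‖ := by ring

lemma norm_dbar_bump_mul_le_of_far (hμ : μ (closedBall 0 r)ᶜ = 0) (hν : ν (closedBall 0 r)ᶜ = 0)
    (hε : 0 < ε) (hr : 0 ≤ r) (hR : 0 < R) (hrR : 2 * r ≤ R) {z : ℂ} (hz : R ≤ ‖z‖)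
    (hL : ‖dbar (fun z => (bump 0 R z : ℂ)) z‖ ≤ L / R) {w c : ℝ}
    (hw : |w| ≤ 2 * |potentialDiff ε μ ν z|) (hc : |c| ≤ 1) :
    ‖dbar (fun z => (bump 0 R z : ℂ)) z *
      (w * (regCauchyTransform ε μ z + c * regCauchyTransform ε ν z))‖ ≤ 80 * r * L / R ^ 3 := by
  have hz0 : 0 < ‖z‖ := hR.trans_le hz
  have hrz : 2 * r ≤ ‖z‖ := hrR.trans hz
  have hinv : 2 / ‖z‖ ≤ 2 / R := by gcongr
  have hu : |potentialDiff ε μ ν z| ≤ 10 * r / R :=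
    (abs_potentialDiff_le_of_far hμ hν hε hrz hz0).trans (by gcongr)
  have hsum : ‖regCauchyTransform ε μ z + c * regCauchyTransform ε ν z‖ ≤ 2 / R + 1 * (2 / R) := by
    refine (norm_add_le _ _).trans ?_
    rw [norm_mul, Complex.norm_real]
    exact add_le_add ((norm_regCauchyTransform_le_of_far hμ hε hrz hz0).trans hinv)
      (mul_le_mul hc ((norm_regCauchyTransform_le_of_far hν hε hrz hz0).trans hinv)
        (norm_nonneg _) zero_le_one)
  rw [norm_mul, norm_mul, Complex.norm_real, Real.norm_eq_abs]
  calc _ ≤ L / R * (2 * (10 * r / R) * (2 / R + 1 * (2 / R))) := by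
        have h0 : 0 ≤ L / R := (norm_nonneg _).trans hL
        gcongr
        exact hw.trans (by gcongr)
    _ = 80 * r * L / R ^ 3 := by field_simp; ring

lemma neg_re_integral_dbar_holeCutoff_mul_potentialDiff_le (hμ : μ (closedBall 0 r)ᶜ = 0)
    (hν : ν (closedBall 0 r)ᶜ = 0) (hε : 0 < ε) (hr : 0 ≤ r) (hrR : 2 * r ≤ R)
    (hL : ∀ z, ‖dbar (fun z => (bump 0 R z : ℂ)) z‖ ≤ L / R) {A : Finset ℂ} {d δ c : ℝ}
    (h : HolesFit A R d)
    (hAμ : ∀ a ∈ A, ∫ z, ‖dbar (fun z => (bump a d z : ℂ)) z‖ *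
      ‖regCauchyTransform ε μ z - μ.real {a} * (z - a)⁻¹‖ ≤ δ)
    (hAν : ∀ a ∈ A, ∫ z, ‖dbar (fun z => (bump a d z : ℂ)) z‖ *
      ‖regCauchyTransform ε ν z - ν.real {a} * (z - a)⁻¹‖ ≤ δ)
    {φ : ℝ → ℝ} (hφ : Continuous φ) (hφ_abs : ∀ x, |φ x| ≤ 2 * |x|) (hφ_four : ∀ x, |φ x| ≤ 4)
    (hc : |c| ≤ 1) (hatoms : ∀ a x, 0 ≤ φ x * (μ.real {a} + c * ν.real {a})) :
    -(∫ z, dbar (fun z => (holeCutoff A R d z : ℂ)) z * (φ (potentialDiff ε μ ν z) *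
        (regCauchyTransform ε μ z + c * regCauchyTransform ε ν z))).re ≤
      320 * Real.pi * r * L / R + 8 * A.card * δ := by
  have hcont : Continuous fun z => (φ (potentialDiff ε μ ν z) : ℂ) *
      (regCauchyTransform ε μ z + c * regCauchyTransform ε ν z) :=
    (Complex.continuous_ofReal.comp (hφ.comp (contDiff_potentialDiff hμ hν hε).continuous)).mul
      ((continuous_regCauchyTransform μ hε).add
        (continuous_const.mul (continuous_regCauchyTransform ν hε)))
  have hint_μ := fun a => integrable_norm_dbar_bump_mul μ hε h.pos a (μ.real {a})
  have hint_ν := fun a => integrable_norm_dbar_bump_mul ν hε h.pos a (ν.real {a})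
  have hR := h.radius_pos
  refine (neg_re_integral_dbar_holeCutoff_mul_le (δ := 8 * δ) h hcont
    (fun a _ => ((hint_μ a).add (hint_ν a)).const_mul 4)
    (fun a _ z => re_dbar_bump_mul_le a z _ _ (hφ_four _) hc (hatoms a _)) (fun a ha => ?_)
    (fun z hz => norm_dbar_bump_mul_le_of_far hμ hν hε hr hR hrR hz (hL z) (hφ_abs _) hc)).trans_eq
    ?_
  · rw [integral_const_mul, integral_add' (hint_μ a) (hint_ν a)]
    linarith [hAμ a ha, hAν a ha]
  · field_simp
    ring

lemma exists_holesFit_eventually_integral_norm_dbar_bump_mul_le (μ ν : Measure ℂ)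
    [IsFiniteMeasure μ] [IsFiniteMeasure ν] (A : Finset ℂ) {δ : ℝ} (hδ : 0 < δ) (R₁ : ℝ) {d₁ : ℝ}
    (hd₁ : 0 < d₁) :
    ∃ R d, HolesFit A R d ∧ R₁ ≤ R ∧ 2 * d ≤ d₁ ∧ ∀ᶠ ε in 𝓝[>] (0 : ℝ), ∀ a ∈ A,
      ∫ z, ‖dbar (fun z => (bump a d z : ℂ)) z‖ *
        ‖regCauchyTransform ε μ z - μ.real {a} * (z - a)⁻¹‖ ≤ δ ∧
      ∫ z, ‖dbar (fun z => (bump a d z : ℂ)) z‖ *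
        ‖regCauchyTransform ε ν z - ν.real {a} * (z - a)⁻¹‖ ≤ δ := by
  obtain ⟨R₀, d₀, h₀⟩ := exists_holesFit A
  have hatoms := (eventually_all_finset A).2 fun a _ =>
    (eventually_eventually_integral_norm_dbar_bump_mul_le μ a hδ).and
      (eventually_eventually_integral_norm_dbar_bump_mul_le ν a hδ)
  have hsmall : ∀ᶠ d in 𝓝[>] (0 : ℝ), d ∈ Ioc 0 (min d₀ (d₁ / 2)) :=
    Ioc_mem_nhdsGT (lt_min h₀.pos (half_pos hd₁))
  obtain ⟨d, hdA, hdpos, hd⟩ := (hatoms.and hsmall).exists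
  obtain ⟨hd₀, hd⟩ := le_min_iff.1 hd
  exact ⟨max R₀ R₁, d, h₀.mono (le_max_left _ _) hdpos hd₀, le_max_right _ _, by linarith,
    (eventually_all_finset A).2 fun a ha => (hdA a ha).1.and (hdA a ha).2⟩

lemma exists_holeCutoff_boundary_le (hr : 0 ≤ r) (hμ : μ (closedBall 0 r)ᶜ = 0)
    (hν : ν (closedBall 0 r)ᶜ = 0)
    (hsq : ∀ᵐ z, cauchyTransform μ z ^ 2 = cauchyTransform ν z ^ 2) (A : Finset ℂ)
    {δ : ℝ} (hδ : 0 < δ) (R₁ : ℝ) {d₁ : ℝ} (hd₁ : 0 < d₁) :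
    ∃ R d, HolesFit A R d ∧ R₁ ≤ R ∧ 2 * d ≤ d₁ ∧ ∀ᶠ ε in 𝓝[>] (0 : ℝ),
      -(∫ z, dbar (fun z => (holeCutoff A R d z : ℂ)) z *
        (Real.arctan (potentialDiff ε μ ν z) ^ 2 : ℝ) *
          (regCauchyTransform ε μ z + regCauchyTransform ε ν z)).re ≤ δ ∧
      -(∫ z, dbar (fun z => (holeCutoff A R d z : ℂ)) z * Real.arctan (potentialDiff ε μ ν z) *
        (regCauchyTransform ε μ z - regCauchyTransform ε ν z)).re ≤ δ := by
  obtain ⟨L, -, hL⟩ := exists_norm_dbar_bump_le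
  obtain ⟨R, d, hfit, hR, hd, hev⟩ := exists_holesFit_eventually_integral_norm_dbar_bump_mul_le μ ν
    A (δ := δ / (16 * (A.card + 1))) (by positivity)
    (max R₁ (max (2 * r) (640 * Real.pi * r * L / δ))) hd₁
  obtain ⟨hR₁, hrR, hRL⟩ : R₁ ≤ R ∧ 2 * r ≤ R ∧ 640 * Real.pi * r * L / δ ≤ R := by
    simpa only [max_le_iff] using hR
  have hbound : 320 * Real.pi * r * L / R + 8 * A.card * (δ / (16 * (A.card + 1))) ≤ δ := by
    have houter : 320 * Real.pi * r * L / R ≤ δ / 2 := by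
      rw [div_le_iff₀ hδ] at hRL
      rw [div_le_iff₀ hfit.radius_pos]
      linarith
    have hinner : 8 * A.card * (δ / (16 * (A.card + 1))) ≤ δ / 2 := by
      rw [mul_div_assoc', div_le_div_iff₀ (by positivity) two_pos]
      nlinarith
    linarith
  refine ⟨R, d, hfit, hR₁, hd, ?_⟩
  filter_upwards [hev, self_mem_nhdsWithin] with ε hatoms (hε : 0 < ε)
  have habs := fun x => (abs_arctan_le_pi_div_two x).trans
    (by linarith [Real.pi_le_four] : Real.pi / 2 ≤ 2)
  have key := fun (φ : ℝ → ℝ) (c : ℝ) => neg_re_integral_dbar_holeCutoff_mul_potentialDiff_le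
    (φ := φ) (c := c) hμ hν hε hr hrR (hL 0 R hfit.radius_pos) hfit
    (fun a ha => (hatoms a ha).1) (fun a ha => (hatoms a ha).2)
  constructor
  · refine (le_of_eq ?_).trans ((key (fun x => Real.arctan x ^ 2) 1
      (Real.continuous_arctan.pow 2) (fun x => ?_) (fun x => ?_) abs_one.le
      (fun a x => by positivity)).trans hbound)
    · simp only [mul_assoc, Complex.ofReal_one, one_mul]
    · rw [abs_pow, sq]
      exact mul_le_mul (habs x) (abs_arctan_le_abs x) (abs_nonneg _) two_pos.le
    · rw [abs_pow]
      nlinarith [habs x, abs_nonneg (Real.arctan x)]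
  · refine (le_of_eq ?_).trans ((key Real.arctan (-1) Real.continuous_arctan (fun x => ?_)
      (fun x => (habs x).trans (by norm_num)) (by simp) (fun a x => ?_)).trans hbound)
    · simp only [mul_assoc, Complex.ofReal_neg, Complex.ofReal_one, neg_one_mul, sub_eq_add_neg]
    · linarith [abs_arctan_le_abs x, abs_nonneg x]
    · rw [real_singleton_eq_of_cauchyTransform_sq_ae_eq hsq a]
      simp

end ProbabilityMeasure

end Boundary

section Uniqueness

lemma isCompact_setOf_holes (A : Finset ℂ) (ρ t : ℝ) :
    IsCompact {z : ℂ | ‖z‖ ≤ ρ ∧ ∀ a ∈ A, t ≤ ‖z - a‖} := by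
  refine (isCompact_closedBall (0 : ℂ) ρ).of_isClosed_subset ?_ fun z hz => by simpa using hz.1
  refine (isClosed_le continuous_norm continuous_const).inter ?_
  change IsClosed {z : ℂ | ∀ a ∈ A, t ≤ ‖z - a‖}
  simp only [ofPred_forall]
  exact isClosed_biInter fun a _ =>
    isClosed_le continuous_const (continuous_id.sub continuous_const).norm

/-- The Cauchy transform of `μ` is essentially bounded on every compact set that avoids the finite
set `A`, which in the application consists of the poles of a rational function. -/
def BoundedOff (A : Finset ℂ) (μ : Measure ℂ) : Prop :=
  ∀ E : Set ℂ, IsCompact E → (∀ a ∈ A, a ∉ E) → ∃ M, ∀ᵐ z, z ∈ E → ‖cauchyTransform μ z‖ ≤ M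

variable {A : Finset ℂ} {μ ν : Measure ℂ} {R d r ε : ℝ}

lemma HolesFit.lt_norm_sub_of_ne_zero (h : HolesFit A R d) {z : ℂ} (hz : holeCutoff A R d z ≠ 0) :
    ∀ a ∈ A, d < ‖z - a‖ := fun _ ha =>
  not_le.1 fun hle => hz (h.eq_zero_of_near ha hle)

lemma HolesFit.norm_lt_of_ne_zero (h : HolesFit A R d) {z : ℂ} (hz : holeCutoff A R d z ≠ 0) :
    ‖z‖ < 2 * R :=
  not_le.1 fun hle => hz (h.eq_zero_of_far hle)

lemma BoundedOff.exists_norm_regCauchyTransform_le [IsFiniteMeasure μ] (hμ : BoundedOff A μ)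
    (h : HolesFit A R d) : ∃ B, ∀ ε, 0 < ε → ∀ z, holeCutoff A R d z ≠ 0 →
      ‖regCauchyTransform ε μ z‖ ≤ B := by
  have hd := h.pos
  have hR := h.radius_pos
  have hwide : HolesFit A (2 * R + d) (d / 4) := h.mono (by linarith) (by linarith) (by linarith)
  obtain ⟨M, hM⟩ := hμ {z : ℂ | ‖z‖ ≤ 2 * (2 * R + d) ∧ ∀ a ∈ A, d / 4 ≤ ‖z - a‖}
    (isCompact_setOf_holes A _ _) fun a ha hmem =>
      absurd (hmem.2 a ha) (by rw [sub_self, norm_zero]; linarith)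
  have hM' : ∀ᵐ z, holeCutoff A (2 * R + d) (d / 4) z ≠ 0 → ‖cauchyTransform μ z‖ ≤ max M 0 := by
    filter_upwards [hM] with z hz hne
    exact (hz ⟨(hwide.norm_lt_of_ne_zero hne).le,
      fun a ha => (hwide.lt_norm_sub_of_ne_zero hne a ha).le⟩).trans (le_max_left _ _)
  refine ⟨_, fun ε hε z hz => norm_regCauchyTransform_le_of_norm_cauchyTransform_le μ
    (contDiff_holeCutoff A _ _) hwide.hasCompactSupport hwide.mem_Icc (le_max_right _ _) hM'
    (half_pos hd) hε fun w hw => hwide.eq_one (fun a ha => ?_) ?_⟩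
  · have htri : ‖z - a‖ ≤ ‖w - z‖ + ‖w - a‖ := by
      rw [norm_sub_rev w z]
      exact norm_sub_le_norm_sub_add_norm_sub _ _ _
    linarith [h.lt_norm_sub_of_ne_zero hz a ha]
  · have htri : ‖w‖ ≤ ‖w - z‖ + ‖z‖ := by simpa using _root_.norm_add_le (w - z) z
    linarith [h.norm_lt_of_ne_zero hz]

lemma tendsto_integral_holeCutoff_mul [IsFiniteMeasure μ] [IsFiniteMeasure ν]
    (hμ : BoundedOff A μ) (hν : BoundedOff A ν)
    (hsq : ∀ᵐ z, cauchyTransform μ z ^ 2 = cauchyTransform ν z ^ 2) (h : HolesFit A R d) :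
    Tendsto (fun ε => ∫ z, holeCutoff A R d z *
      ‖(regCauchyTransform ε μ z - regCauchyTransform ε ν z) *
        (regCauchyTransform ε μ z + regCauchyTransform ε ν z)‖) (𝓝[>] 0) (𝓝 0) := by
  obtain ⟨B₁, hB₁⟩ := hμ.exists_norm_regCauchyTransform_le h
  obtain ⟨B₂, hB₂⟩ := hν.exists_norm_regCauchyTransform_le h
  have hc := (contDiff_holeCutoff A R d).continuous
  rw [show 𝓝 (0 : ℝ) = 𝓝 (∫ _ : ℂ, (0 : ℝ)) by rw [integral_zero]]
  refine tendsto_integral_filter_of_dominated_convergence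
    (fun z => holeCutoff A R d z * (B₁ + B₂) ^ 2) ?_ ?_
    ((hc.integrable_of_hasCompactSupport h.hasCompactSupport).mul_const _) ?_
  · filter_upwards [self_mem_nhdsWithin] with ε hε
    have hcμ := continuous_regCauchyTransform μ hε
    have hcν := continuous_regCauchyTransform ν hε
    exact (hc.mul ((hcμ.sub hcν).mul (hcμ.add hcν)).norm).aestronglyMeasurable
  · filter_upwards [self_mem_nhdsWithin] with ε hε
    refine Eventually.of_forall fun z => ?_
    rw [norm_mul, Real.norm_of_nonneg (h.mem_Icc z).1, norm_norm, norm_mul, sq]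
    by_cases hz : holeCutoff A R d z = 0
    · simp only [hz, zero_mul, le_refl]
    have hsum := add_le_add (hB₁ ε hε z hz) (hB₂ ε hε z hz)
    exact mul_le_mul_of_nonneg_left (mul_le_mul ((norm_sub_le _ _).trans hsum)
      ((norm_add_le _ _).trans hsum) (norm_nonneg _)
      ((norm_nonneg _).trans ((norm_sub_le _ _).trans hsum))) (h.mem_Icc z).1
  · filter_upwards [ae_integrable_inv_sub μ, ae_integrable_inv_sub ν, hsq] with z hzμ hzν hz
    have hlimμ := tendsto_regCauchyTransform μ hzμ
    have hlimν := tendsto_regCauchyTransform ν hzν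
    have hlim := (((hlimμ.sub hlimν).mul (hlimμ.add hlimν)).norm).const_mul (holeCutoff A R d z)
    rwa [mul_comm (_ - _), ← sq_sub_sq, hz, sub_self, norm_zero, mul_zero] at hlim

lemma energyDensity_nonneg (ε : ℝ) (μ ν : Measure ℂ) (z : ℂ) : 0 ≤ energyDensity ε μ ν z := by
  unfold energyDensity
  positivity

lemma continuous_energyDensity [IsFiniteMeasure μ] [IsFiniteMeasure ν]
    (hμ : μ (closedBall 0 r)ᶜ = 0) (hν : ν (closedBall 0 r)ᶜ = 0) (hε : 0 < ε) :
    Continuous (energyDensity ε μ ν) :=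
  (continuous_one_div_one_add_sq.comp (contDiff_potentialDiff hμ hν hε).continuous).mul
    (((continuous_regCauchyTransform μ hε).sub (continuous_regCauchyTransform ν hε)).norm.pow 2)

lemma ae_liminf_eq_zero_of_tendsto_lintegral {α : Type*} [MeasurableSpace α] {m : Measure α}
    {f : ℕ → α → ENNReal} (hf : ∀ n, Measurable (f n))
    (hlim : Tendsto (fun n => ∫⁻ x, f n x ∂m) atTop (𝓝 0)) :
    ∀ᵐ x ∂m, liminf (fun n => f n x) atTop = 0 := by
  have hfatou := lintegral_liminf_le (μ := m) (u := atTop) hf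
  rwa [hlim.liminf_eq, nonpos_iff_eq_zero, lintegral_eq_zero_iff (Measurable.liminf hf)] at hfatou

lemma eq_zero_of_liminf_ofReal_eq_zero {u : ℕ → ℝ} {w : ℕ → ℂ} {w₀ : ℂ} {M : ℝ}
    (hu : ∀ n, |u n| ≤ M) (hw : Tendsto w atTop (𝓝 w₀))
    (h : liminf (fun n => ENNReal.ofReal (1 / (1 + u n ^ 2) * ‖w n‖ ^ 2)) atTop = 0) : w₀ = 0 := by
  have hlim : Tendsto (fun n => ENNReal.ofReal (1 / (1 + M ^ 2) * ‖w n‖ ^ 2)) atTop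
      (𝓝 (ENNReal.ofReal (1 / (1 + M ^ 2) * ‖w₀‖ ^ 2))) :=
    ENNReal.tendsto_ofReal ((hw.norm.pow 2).const_mul _)
  have hle : ∀ n, ENNReal.ofReal (1 / (1 + M ^ 2) * ‖w n‖ ^ 2) ≤
      ENNReal.ofReal (1 / (1 + u n ^ 2) * ‖w n‖ ^ 2) := fun n => by
    have := sq_le_sq' (neg_le_of_abs_le (hu n)) (le_of_abs_le (hu n))
    gcongr
  have hzero := liminf_le_liminf (Eventually.of_forall hle) (f := atTop)
  rw [hlim.liminf_eq, h, nonpos_iff_eq_zero, ENNReal.ofReal_eq_zero] at hzero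
  by_contra hne
  have : 0 < 1 / (1 + M ^ 2) * ‖w₀‖ ^ 2 := by positivity
  linarith

variable [IsProbabilityMeasure μ] [IsProbabilityMeasure ν]

lemma eventually_lintegral_energyDensity_le (hr : 0 ≤ r) (hμ : μ (closedBall 0 r)ᶜ = 0)
    (hν : ν (closedBall 0 r)ᶜ = 0) (hbμ : BoundedOff A μ) (hbν : BoundedOff A ν)
    (hsq : ∀ᵐ z, cauchyTransform μ z ^ 2 = cauchyTransform ν z ^ 2) (R₁ : ℝ) {d₁ : ℝ}
    (hd₁ : 0 < d₁) {δ : ℝ} (hδ : 0 < δ) : ∀ᶠ ε in 𝓝[>] (0 : ℝ),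
      ∫⁻ z in {z : ℂ | ‖z‖ ≤ R₁ ∧ ∀ a ∈ A, d₁ ≤ ‖z - a‖},
        ENNReal.ofReal (energyDensity ε μ ν z) ≤ ENNReal.ofReal δ := by
  obtain ⟨t, ht, htδ⟩ : ∃ t, 0 < t ∧ 2 * t * Real.pi = δ / 2 :=
    ⟨δ / (4 * Real.pi), by positivity, by field_simp; ring⟩
  obtain ⟨δ', hδ', hδδ'⟩ : ∃ δ', 0 < δ' ∧ δ' + (1 + Real.pi) * δ' / (2 * t) = δ / 2 :=
    ⟨δ / 2 / (1 + (1 + Real.pi) / (2 * t)), by positivity, by field_simp⟩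
  obtain ⟨R, d, hfit, hR, hd, hbdry⟩ :=
    exists_holeCutoff_boundary_le hr hμ hν hsq A hδ' R₁ hd₁
  filter_upwards [hbdry, (tendsto_integral_holeCutoff_mul hbμ hbν hsq hfit).eventually
    (gt_mem_nhds hδ'), self_mem_nhdsWithin] with ε hbdry hprod (hε : 0 < ε)
  have hχ := contDiff_holeCutoff A R d
  have henergy : ∫ z, holeCutoff A R d z * energyDensity ε μ ν z ≤ δ := by
    have := integral_cutoff_mul_energyDensity_le hμ hν hε hχ hfit.hasCompactSupport
      hfit.mem_Icc ht hbdry.1 hbdry.2 hprod.le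
    linarith
  have hint : Integrable fun z => holeCutoff A R d z * energyDensity ε μ ν z :=
    (hχ.continuous.mul (continuous_energyDensity hμ hν hε)).integrable_of_hasCompactSupport
      hfit.hasCompactSupport.mul_right
  refine le_trans ?_ (ENNReal.ofReal_le_ofReal henergy)
  rw [ofReal_integral_eq_lintegral_ofReal hint (Eventually.of_forall fun z =>
    mul_nonneg (hfit.mem_Icc z).1 (energyDensity_nonneg ε μ ν z))]
  refine le_trans (setLIntegral_mono' (isCompact_setOf_holes A R₁ d₁).measurableSet fun z hz => ?_)
    (setLIntegral_le_lintegral _ _)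
  rw [hfit.eq_one (fun a ha => hd.trans (hz.2 a ha)) (hz.1.trans hR), one_mul]

lemma cauchyTransform_ae_eq_on (hr : 0 ≤ r) (hμ : μ (closedBall 0 r)ᶜ = 0)
    (hν : ν (closedBall 0 r)ᶜ = 0) (hbμ : BoundedOff A μ) (hbν : BoundedOff A ν)
    (hsq : ∀ᵐ z, cauchyTransform μ z ^ 2 = cauchyTransform ν z ^ 2) (R₁ : ℝ) {d₁ : ℝ}
    (hd₁ : 0 < d₁) : ∀ᵐ z : ℂ, (‖z‖ ≤ R₁ ∧ ∀ a ∈ A, d₁ ≤ ‖z - a‖) →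
      cauchyTransform μ z = cauchyTransform ν z := by
  obtain ⟨ε, -, hε, hε0⟩ := exists_seq_strictAnti_tendsto' (zero_lt_one (α := ℝ))
  have hε_right : Tendsto ε atTop (𝓝[>] 0) :=
    tendsto_nhdsWithin_iff.2 ⟨hε0, Eventually.of_forall fun n => (hε n).1⟩
  have henergy : Tendsto (fun n => ∫⁻ z in {z : ℂ | ‖z‖ ≤ R₁ ∧ ∀ a ∈ A, d₁ ≤ ‖z - a‖},
      ENNReal.ofReal (energyDensity (ε n) μ ν z)) atTop (𝓝 0) := by
    rw [ENNReal.tendsto_nhds_zero]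
    intro δ hδ
    obtain ⟨x, -, hx, hxδ⟩ := ENNReal.lt_iff_exists_real_btwn.1 hδ
    filter_upwards [hε_right.eventually (eventually_lintegral_energyDensity_le hr hμ hν hbμ hbν hsq
      R₁ hd₁ (ENNReal.ofReal_pos.1 hx))] with n hn
    exact hn.trans hxδ.le
  have hliminf := ae_liminf_eq_zero_of_tendsto_lintegral (fun n =>
    (continuous_energyDensity hμ hν (hε n).1).measurable.ennreal_ofReal) henergy
  rw [ae_restrict_iff' (isCompact_setOf_holes A R₁ d₁).measurableSet] at hliminf
  filter_upwards [hliminf, ae_integrable_inv_sub μ, ae_integrable_inv_sub ν,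
    ae_exists_forall_abs_regLogPotential_le hμ, ae_exists_forall_abs_regLogPotential_le hν]
    with z hz hzμ hzν ⟨M₁, hM₁⟩ ⟨M₂, hM₂⟩ hzE
  have hdiff := ((tendsto_regCauchyTransform μ hzμ).comp hε_right).sub
    ((tendsto_regCauchyTransform ν hzν).comp hε_right)
  have hbound : ∀ n, |potentialDiff (ε n) μ ν z| ≤ M₁ + M₂ := fun n =>
    (abs_sub _ _).trans (add_le_add (hM₁ _ (hε n).1 (hε n).2.le) (hM₂ _ (hε n).1 (hε n).2.le))
  exact sub_eq_zero.1 (eq_zero_of_liminf_ofReal_eq_zero hbound hdiff (hz hzE))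

theorem eq_of_cauchyTransform_sq_ae_eq (hr : 0 ≤ r) (hμ : μ (closedBall 0 r)ᶜ = 0)
    (hν : ν (closedBall 0 r)ᶜ = 0) (hbμ : BoundedOff A μ) (hbν : BoundedOff A ν)
    (hsq : ∀ᵐ z, cauchyTransform μ z ^ 2 = cauchyTransform ν z ^ 2) : μ = ν := by
  refine eq_of_cauchyTransform_ae_eq ?_
  have heq : ∀ᵐ z : ℂ, ∀ n : ℕ, (‖z‖ ≤ n ∧ ∀ a ∈ A, 1 / ((n : ℝ) + 1) ≤ ‖z - a‖) →
      cauchyTransform μ z = cauchyTransform ν z :=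
    ae_all_iff.2 fun n => cauchyTransform_ae_eq_on hr hμ hν hbμ hbν hsq n (by positivity)
  have hA : ∀ᵐ z : ℂ, z ∉ (A : Set ℂ) :=
    measure_eq_zero_iff_ae_notMem.1 (A.finite_toSet.measure_zero volume)
  filter_upwards [heq, hA] with z hz hzA
  have hnorm : ∀ᶠ n : ℕ in atTop, ‖z‖ ≤ n :=
    tendsto_natCast_atTop_atTop.eventually (eventually_ge_atTop ‖z‖)
  have hholes : ∀ᶠ n : ℕ in atTop, ∀ a ∈ A, 1 / ((n : ℝ) + 1) ≤ ‖z - a‖ := by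
    refine (eventually_all_finset A).2 fun a ha => ?_
    have hpos : 0 < ‖z - a‖ := norm_pos_iff.2 (sub_ne_zero.2 fun h => hzA (h ▸ ha))
    exact (tendsto_one_div_add_atTop_nhds_zero_nat.eventually (gt_mem_nhds hpos)).mono
      fun n hn => hn.le
  obtain ⟨n, hn⟩ := (hnorm.and hholes).exists
  exact hz n hn

end Uniqueness

section WeakLimits

lemma exists_subseq_tendsto_probabilityMeasure {X : Type*} [MetricSpace X]
    [SecondCountableTopology X] [MeasurableSpace X] [BorelSpace X] {K : Set X} (hK : IsCompact K)
    {μ : ℕ → ProbabilityMeasure X} (hμ : ∀ k, (μ k : Measure X) Kᶜ = 0) :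
    ∃ ν : ProbabilityMeasure X, (ν : Measure X) Kᶜ = 0 ∧
      ∃ φ : ℕ → ℕ, StrictMono φ ∧ Tendsto (μ ∘ φ) atTop (𝓝 ν) := by
  have htight : IsTightMeasureSet {((ρ : ProbabilityMeasure X) : Measure X) | ρ ∈ range μ} := by
    rw [isTightMeasureSet_iff_exists_isCompact_measure_compl_le]
    refine fun ε _ => ⟨K, hK, ?_⟩
    rintro _ ⟨_, ⟨k, rfl⟩, rfl⟩
    exact (hμ k).le.trans zero_le
  obtain ⟨ν, -, φ, hφ, hlim⟩ := (isCompact_closure_of_isTightMeasureSet htight).tendsto_subseq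
    fun k => subset_closure (mem_range_self k)
  refine ⟨ν, ?_, φ, hφ, hlim⟩
  have hopen := ProbabilityMeasure.le_liminf_measure_open_of_tendsto hlim hK.isClosed.isOpen_compl
  simp_rw [Function.comp_apply, hμ, liminf_const] at hopen
  exact nonpos_iff_eq_zero.1 hopen

lemma exists_tendsto_probabilityMeasure_of_unique {X : Type*} [MetricSpace X]
    [SecondCountableTopology X] [MeasurableSpace X] [BorelSpace X] {K : Set X} (hK : IsCompact K)
    {μ : ℕ → ProbabilityMeasure X} (hμ : ∀ k, (μ k : Measure X) Kᶜ = 0)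
    {G : ProbabilityMeasure X → Prop}
    (hG : ∀ ns : ℕ → ℕ, Tendsto ns atTop atTop → ∀ ν, Tendsto (μ ∘ ns) atTop (𝓝 ν) → G ν)
    (huniq : ∀ ν ν' : ProbabilityMeasure X, (ν : Measure X) Kᶜ = 0 → (ν' : Measure X) Kᶜ = 0 →
      G ν → G ν' → ν = ν') :
    ∃ ν : ProbabilityMeasure X, (ν : Measure X) Kᶜ = 0 ∧ G ν ∧ Tendsto μ atTop (𝓝 ν) := by
  obtain ⟨ν, hνK, φ, hφ, hlim⟩ := exists_subseq_tendsto_probabilityMeasure hK hμ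
  have hGν := hG φ hφ.tendsto_atTop ν hlim
  refine ⟨ν, hνK, hGν, tendsto_of_subseq_tendsto fun ns hns => ?_⟩
  obtain ⟨ν', hνK', ψ, hψ, hlim'⟩ :=
    exists_subseq_tendsto_probabilityMeasure hK fun k => hμ (ns k)
  have hGν' := hG (ns ∘ ψ) (hns.comp hψ.tendsto_atTop) ν' hlim'
  obtain rfl := huniq ν ν' hνK hνK' hGν hGν'
  exact ⟨ψ, hlim'⟩

variable {μ : ℕ → ProbabilityMeasure ℂ} {ν : ProbabilityMeasure ℂ} {ε : ℝ}

lemma tendsto_regCauchyTransform_of_tendsto (hμν : Tendsto μ atTop (𝓝 ν)) (hε : 0 < ε) (z : ℂ) :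
    Tendsto (fun k => regCauchyTransform ε (μ k) z) atTop (𝓝 (regCauchyTransform ε ν z)) :=
  (ProbabilityMeasure.tendsto_iff_forall_integral_rclike_tendsto ℂ).1 hμν
    (.ofNormedAddCommGroup (fun ξ => regCauchy ε (z - ξ))
      ((continuous_regCauchy hε).comp (continuous_sub_left z)) _ fun _ => norm_regCauchy_le hε _)

lemma norm_regCauchyTransform_le (hε : 0 < ε) (μ : Measure ℂ) [IsProbabilityMeasure μ] (z : ℂ) :
    ‖regCauchyTransform ε μ z‖ ≤ 1 / ε := by
  refine (norm_integral_le_of_norm_le_const (μ := μ)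
    (Eventually.of_forall fun ξ => norm_regCauchy_le hε (z - ξ))).trans_eq ?_
  rw [probReal_univ, mul_one]

lemma tendsto_lintegral_ball_regCauchyTransform_sub_of_tendsto (hμν : Tendsto μ atTop (𝓝 ν))
    (hε : 0 < ε) (a : ℂ) (r : ℝ) :
    Tendsto (fun k => ∫⁻ z in ball a r, ‖regCauchyTransform ε (μ k) z - regCauchyTransform ε ν z‖ₑ)
      atTop (𝓝 0) := by
  rw [show 𝓝 (0 : ENNReal) = 𝓝 (∫⁻ _ in ball a r, 0) by rw [lintegral_zero]]
  refine tendsto_lintegral_of_dominated_convergence (fun _ => ENNReal.ofReal (1 / ε + 1 / ε))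
    (fun k => ((continuous_regCauchyTransform (μ k) hε).sub
      (continuous_regCauchyTransform ν hε)).enorm.measurable)
    (fun k => Eventually.of_forall fun z => ?_) ?_ (Eventually.of_forall fun z => ?_)
  · refine (ofReal_norm _).symm.trans_le ?_
    exact ENNReal.ofReal_le_ofReal ((norm_sub_le _ _).trans
      (add_le_add (norm_regCauchyTransform_le hε _ z) (norm_regCauchyTransform_le hε _ z)))
  · rw [lintegral_const, Measure.restrict_apply_univ]
    exact ENNReal.mul_ne_top ENNReal.ofReal_ne_top measure_ball_lt_top.ne
  · simpa using ((tendsto_regCauchyTransform_of_tendsto hμν hε z).sub_const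
      (regCauchyTransform ε ν z)).enorm

lemma exists_forall_lintegral_ball_regCauchyTransform_sub_le (a : ℂ) {r : ℝ} (hr : 0 < r)
    {δ : ENNReal} (hδ : 0 < δ) : ∃ ε, 0 < ε ∧ ∀ μ : ProbabilityMeasure ℂ,
      ∫⁻ z in ball a r, ‖regCauchyTransform ε μ z - cauchyTransform μ z‖ₑ ≤ δ := by
  have hlim :=
    ENNReal.tendsto_ofReal (tendsto_sqrt_mul_nhdsGT_zero (5 * Real.pi * r ^ (1 / 2 : ℝ)))
  rw [ENNReal.ofReal_zero] at hlim
  obtain ⟨ε, hle, hε⟩ :=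
    ((ENNReal.tendsto_nhds_zero.1 hlim δ hδ).and self_mem_nhdsWithin).exists
  refine ⟨ε, hε, fun μ => (lintegral_ball_regCauchyTransform_sub_le μ hε a hr).trans ?_⟩
  rwa [measure_univ, mul_one]

lemma tendsto_lintegral_ball_cauchyTransform_sub (hμν : Tendsto μ atTop (𝓝 ν)) (a : ℂ) {r : ℝ}
    (hr : 0 < r) :
    Tendsto (fun k => ∫⁻ z in ball a r, ‖cauchyTransform (μ k) z - cauchyTransform ν z‖ₑ)
      atTop (𝓝 0) := by
  rw [ENNReal.tendsto_nhds_zero]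
  intro δ hδ
  have hδ3 : 0 < δ / 3 := ENNReal.div_pos hδ.ne' (by finiteness)
  obtain ⟨ε, hε, happrox⟩ := exists_forall_lintegral_ball_regCauchyTransform_sub_le a hr hδ3
  have hm : ∀ ρ : ProbabilityMeasure ℂ, AEMeasurable
      (fun z => ‖regCauchyTransform ε ρ z - cauchyTransform ρ z‖ₑ) (volume.restrict (ball a r)) :=
    fun ρ => ((continuous_regCauchyTransform ρ hε).aestronglyMeasurable.sub
      (locallyIntegrable_cauchyTransform ρ).aestronglyMeasurable).enorm.restrict
  filter_upwards [ENNReal.tendsto_nhds_zero.1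
    (tendsto_lintegral_ball_regCauchyTransform_sub_of_tendsto hμν hε a r) _ hδ3] with k hk
  calc ∫⁻ z in ball a r, ‖cauchyTransform (μ k) z - cauchyTransform ν z‖ₑ
      ≤ ∫⁻ z in ball a r, (‖regCauchyTransform ε (μ k) z - cauchyTransform (μ k) z‖ₑ +
        (‖regCauchyTransform ε ν z - cauchyTransform ν z‖ₑ +
        ‖regCauchyTransform ε (μ k) z - regCauchyTransform ε ν z‖ₑ)) := by
        refine lintegral_mono fun z => ?_
        simp_rw [← edist_eq_enorm_sub]
        rw [edist_comm (regCauchyTransform ε (μ k) z) (cauchyTransform (μ k) z), ← add_assoc,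
          add_right_comm]
        exact edist_triangle4 _ _ _ _
    _ ≤ δ / 3 + (δ / 3 + δ / 3) := by
        rw [lintegral_add_left' (hm (μ k)), lintegral_add_left' (hm ν)]
        exact add_le_add (happrox (μ k)) (add_le_add (happrox ν) hk)
    _ = δ := by rw [← add_assoc, ENNReal.add_thirds]

lemma tendstoInMeasure_cauchyTransform (hμν : Tendsto μ atTop (𝓝 ν)) (a : ℂ) {r : ℝ}
    (hr : 0 < r) : TendstoInMeasure (volume.restrict (ball a r)) (fun k => cauchyTransform (μ k))
      atTop (cauchyTransform ν) := by
  refine tendstoInMeasure_of_tendsto_eLpNorm one_ne_zero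
    (fun k => (locallyIntegrable_cauchyTransform (μ k)).aestronglyMeasurable.restrict)
    (locallyIntegrable_cauchyTransform ν).aestronglyMeasurable.restrict ?_
  simpa only [eLpNorm_one_eq_lintegral_enorm, Pi.sub_apply]
    using tendsto_lintegral_ball_cauchyTransform_sub hμν a hr

lemma mul_cauchyTransform_sq_ae_eq_of_riccati (hμν : Tendsto μ atTop (𝓝 ν)) {q p w : ℂ → ℂ}
    {h W : ℕ → ℂ → ℂ} {c : ℕ → ℂ}
    (hh : ∀ r : ℝ, 0 < r → TendstoInMeasure (volume.restrict (ball 0 r)) h atTop 0)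
    (hc : Tendsto c atTop (𝓝 0)) (hW : ∀ z, Tendsto (fun k => W k z) atTop (𝓝 (w z)))
    (hric : ∀ k, ∀ᵐ z, q z * cauchyTransform (μ k) z ^ 2 =
      q z * h k z + c k * p z * cauchyTransform (μ k) z + W k z) :
    ∀ᵐ z, q z * cauchyTransform ν z ^ 2 = w z := by
  rw [← Measure.restrict_univ (μ := volume), ← iUnion_ball_nat_succ (0 : ℂ),
    ae_restrict_iUnion_iff]
  intro n
  have hr : (0 : ℝ) < (n : ℝ) + 1 := by positivity
  obtain ⟨φ, hφ, hC⟩ := (tendstoInMeasure_cauchyTransform hμν 0 hr).exists_seq_tendsto_ae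
  obtain ⟨ψ, hψ, hhψ⟩ := ((hh _ hr).comp hφ.tendsto_atTop).exists_seq_tendsto_ae
  have hφψ : Tendsto (φ ∘ ψ) atTop atTop := hφ.tendsto_atTop.comp hψ.tendsto_atTop
  filter_upwards [hC, hhψ, ae_restrict_of_ae (ae_all_iff.2 hric)] with z hCz hhz hricz
  have hCz' := hCz.comp hψ.tendsto_atTop
  have hright := ((hhz.const_mul (q z)).add
    (((hc.comp hφψ).mul_const (p z)).mul hCz')).add ((hW z).comp hφψ)
  rw [Pi.zero_apply, mul_zero, zero_mul, zero_mul, zero_add, zero_add] at hright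
  exact tendsto_nhds_unique ((hCz'.pow 2).const_mul (q z))
    (hright.congr fun k => (hricz (φ (ψ k))).symm)

end WeakLimits

section HeunEquation

/-- The generalised Lamé equation `Q S'' + P S' + V S = 0` for polynomials: `S` is a
Heine–Stieltjes polynomial of the pair `(Q, P)` and `V` the corresponding Van Vleck polynomial. -/
def HeunEquation {R : Type*} [Semiring R] (Q P V S : R[X]) : Prop :=
  Q * derivative (derivative S) + P * derivative S + V * S = 0

lemma derivative_ne_zero_of_isRoot {R : Type*} [CommRing R] [IsDomain R] [CharZero R] {p : R[X]}
    (hp : p ≠ 0) {a : R} (ha : p.IsRoot a) : derivative p ≠ 0 := by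
  intro hp'
  have hC := eq_C_of_derivative_eq_zero hp'
  rw [hC, IsRoot, eval_C] at ha
  rw [ha, C_0] at hC
  exact hp hC

lemma HeunEquation.eval_derivative_ne_zero {K : Type*} [Field K] [CharZero K] {Q P V S : K[X]}
    (h : HeunEquation Q P V S) (hS : S ≠ 0) {a : K} (ha : S.IsRoot a) (hQ : Q.eval a ≠ 0) :
    (derivative S).eval a ≠ 0 := by
  intro ha'
  set m := (derivative S).rootMultiplicity a
  have hS' := derivative_ne_zero_of_isRoot hS ha
  have hm_pos : 0 < m := (rootMultiplicity_pos hS').2 ha'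
  have hm_S : m = S.rootMultiplicity a - 1 := derivative_rootMultiplicity_of_root ha
  have hm_S'' : (derivative (derivative S)).rootMultiplicity a = m - 1 :=
    derivative_rootMultiplicity_of_root ha'
  have hdvd_S' : (X - C a) ^ m ∣ derivative S := pow_rootMultiplicity_dvd _ _
  have hdvd_S : (X - C a) ^ m ∣ S := (pow_dvd_pow _ (by lia)).trans (pow_rootMultiplicity_dvd S a)
  have hdvd : (X - C a) ^ m ∣ Q * derivative (derivative S) := by
    rw [eq_neg_of_add_eq_zero_left ((add_assoc _ _ _).symm.trans h)]
    exact ((hdvd_S'.mul_left P).add (hdvd_S.mul_left V)).neg_right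
  have hcop : IsCoprime ((X - C a) ^ m) Q :=
    ((irreducible_X_sub_C a).coprime_iff_not_dvd.2 fun hXQ => hQ (dvd_iff_isRoot.1 hXQ)).pow_left
  have hle := (le_rootMultiplicity_iff (derivative_ne_zero_of_isRoot hS' ha')).2
    (hcop.dvd_of_dvd_mul_left hdvd)
  lia

lemma HeunEquation.coeff_relation {R : Type*} [CommRing R] [IsDomain R] {Q P V S : R[X]}
    (h : HeunEquation Q P V S) (hQ : Q.natDegree ≤ 3) (hP : P.natDegree ≤ 2)
    (hV : V.natDegree ≤ 1) (hS : 2 ≤ S.natDegree) :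
    Q.coeff 3 * (S.natDegree * (S.natDegree - 1)) + P.coeff 2 * S.natDegree + V.coeff 1 = 0 := by
  obtain ⟨k, hk⟩ := Nat.exists_eq_add_of_le' hS
  have hS' : (derivative S).natDegree ≤ k + 1 := (natDegree_derivative_le S).trans (by lia)
  have hS'' : (derivative (derivative S)).natDegree ≤ k :=
    (natDegree_derivative_le _).trans (by lia)
  have hlead : S.coeff (k + 2) ≠ 0 := by
    rw [← hk, coeff_natDegree, leadingCoeff_ne_zero]
    exact ne_zero_of_natDegree_gt hS
  have hQS := coeff_mul_add_eq_of_natDegree_le hQ hS''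
  have hPS := coeff_mul_add_eq_of_natDegree_le hP hS'
  have hVS := coeff_mul_add_eq_of_natDegree_le hV hk.le
  have htop := congrArg (fun p => coeff p (3 + k)) h
  simp only [coeff_add, coeff_zero] at htop
  rw [show 2 + (k + 1) = 3 + k by lia] at hPS
  rw [show 1 + (k + 2) = 3 + k by lia] at hVS
  rw [hQS, hPS, hVS] at htop
  simp only [coeff_derivative] at htop
  refine (mul_eq_zero.1 ?_).resolve_right hlead
  rw [hk]
  push_cast at htop ⊢
  linear_combination htop

lemma eval_eq_coeff_one_mul_sub {R : Type*} [CommRing R] {p : R[X]} (hp : p.natDegree ≤ 1) {b : R}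
    (hb : p.IsRoot b) (z : R) : p.eval z = p.coeff 1 * (z - b) := by
  rw [IsRoot, eq_X_add_C_of_natDegree_le_one hp] at hb
  rw [eq_X_add_C_of_natDegree_le_one hp]
  simp only [eval_add, eval_mul, eval_C, eval_X, coeff_add, coeff_C_mul, coeff_X_one, coeff_C_succ,
    mul_one, add_zero] at hb ⊢
  linear_combination hb

variable {K : Type*} [Field K]

lemma eval_derivative_prod_X_sub_C (s : Multiset K) {x : K} (hx : x ∉ s) :
    (derivative (s.map (X - C ·)).prod).eval x =
      (s.map (X - C ·)).prod.eval x * (s.map fun a => (x - a)⁻¹).sum := by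
  induction s using Multiset.induction_on with
  | empty => simp
  | cons a s ih =>
    rw [Multiset.mem_cons, not_or] at hx
    have hxa : x - a ≠ 0 := sub_ne_zero.2 hx.1
    simp only [Multiset.map_cons, Multiset.prod_cons, Multiset.sum_cons, derivative_mul,
      derivative_X_sub_C, eval_add, eval_mul, eval_sub, eval_X, eval_C, one_mul, ih hx.2]
    field_simp

lemma eval_derivative_derivative_prod_X_sub_C (s : Multiset K) {x : K} (hx : x ∉ s) :
    (derivative (derivative (s.map (X - C ·)).prod)).eval x =
      (s.map (X - C ·)).prod.eval x *
        ((s.map fun a => (x - a)⁻¹).sum ^ 2 - (s.map fun a => (x - a)⁻¹ ^ 2).sum) := by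
  induction s using Multiset.induction_on with
  | empty => simp
  | cons a s ih =>
    rw [Multiset.mem_cons, not_or] at hx
    have hxa : x - a ≠ 0 := sub_ne_zero.2 hx.1
    simp only [Multiset.map_cons, Multiset.prod_cons, Multiset.sum_cons, derivative_mul,
      derivative_add, derivative_X_sub_C, eval_add, eval_mul, eval_sub, eval_X, eval_C, one_mul,
      ih hx.2, eval_derivative_prod_X_sub_C s hx.2]
    field_simp
    ring

lemma HeunEquation.riccati {Q P V S : K[X]} (h : HeunEquation Q P V S) (hs : S.Splits) {x : K}
    (hx : S.eval x ≠ 0) :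
    Q.eval x * (S.roots.map fun a => (x - a)⁻¹).sum ^ 2 =
      Q.eval x * (S.roots.map fun a => (x - a)⁻¹ ^ 2).sum -
        P.eval x * (S.roots.map fun a => (x - a)⁻¹).sum - V.eval x := by
  have hxs : x ∉ S.roots := fun hmem => hx (isRoot_of_mem_roots hmem)
  have hprod : S = C S.leadingCoeff * (S.roots.map (X - C ·)).prod := hs.eq_prod_roots
  have hev := congrArg (eval x) h
  generalize S.roots = s, S.leadingCoeff = c at *
  subst hprod
  simp only [eval_add, eval_mul, derivative_C_mul, eval_C, eval_zero,
    eval_derivative_prod_X_sub_C s hxs, eval_derivative_derivative_prod_X_sub_C s hxs] at hev hx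
  refine mul_left_cancel₀ hx ?_
  linear_combination hev

end HeunEquation

section RootBound

lemma exists_norm_mul_eval_le {P Q : ℂ[X]} (hPQ : P.degree < Q.degree) :
    ∃ R K : ℝ, ∀ z : ℂ, R < ‖z‖ → Q.eval z ≠ 0 ∧ ‖z * P.eval z‖ ≤ K * ‖Q.eval z‖ := by
  have hQ : Q ≠ 0 := ne_zero_of_degree_gt hPQ
  have hdeg : (X * P).degree ≤ Q.degree := by
    rw [degree_mul, degree_X, add_comm]
    exact Nat.WithBot.add_one_le_of_lt hPQ
  obtain ⟨K, hK⟩ := (isBigO_cobounded_of_degree_le hdeg).bound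
  have hroot : ∀ᶠ z in Bornology.cobounded ℂ, Q.eval z ≠ 0 :=
    Bornology.le_cofinite ℂ (eventually_cofinite_not_isRoot hQ)
  obtain ⟨R, -, hR⟩ := hasBasis_cobounded_norm.eventually_iff.1 (hroot.and hK)
  exact ⟨R, K, fun z hz => by simpa only [eval_mul, eval_X] using hR hz.le⟩

lemma half_le_re_mul_inv_sub {z w : ℂ} (hw : ‖w‖ ≤ ‖z‖) (hne : z ≠ w) :
    1 / 2 ≤ (z * (1 / (z - w))).re := by
  have hpos : 0 < Complex.normSq (z - w) := Complex.normSq_pos.2 (sub_ne_zero.2 hne)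
  have hle : Complex.normSq w ≤ Complex.normSq z := by
    rw [Complex.normSq_eq_norm_sq, Complex.normSq_eq_norm_sq]
    gcongr
  rw [mul_one_div, Complex.div_re, ← add_div, div_le_div_iff₀ two_pos hpos]
  simp only [Complex.normSq_apply, Complex.sub_re, Complex.sub_im] at *
  linarith

lemma natDegree_div_two_le_re_mul_logDeriv {p : ℂ[X]} {z : ℂ} (hz : p.eval z ≠ 0)
    (hp : ∀ w ∈ p.roots, ‖w‖ ≤ ‖z‖) :
    (p.natDegree : ℝ) / 2 ≤ (z * ((derivative p).eval z / p.eval z)).re := by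
  have hbound : ∀ w ∈ p.roots, 1 / 2 ≤ (z * (1 / (z - w))).re := fun w hw =>
    half_le_re_mul_inv_sub (hp w hw) fun hzw => hz (hzw ▸ isRoot_of_mem_roots hw)
  rw [(IsAlgClosed.splits p).eval_derivative_div_eval_of_ne_zero hz,
    (IsAlgClosed.splits p).natDegree_eq_card_roots, ← Multiset.sum_map_mul_left,
    ← Complex.coe_reAddGroupHom, map_multiset_sum, Multiset.map_map]
  refine le_trans (le_of_eq ?_) (Multiset.card_nsmul_le_sum (a := 1 / 2) ?_)
  · rw [Multiset.card_map, nsmul_eq_mul, mul_one_div]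
  · simp only [Multiset.mem_map, forall_exists_index, and_imp, forall_apply_eq_imp_iff₂]
    exact hbound

lemma norm_le_of_mem_roots_derivative {p : ℂ[X]} {r : ℝ} (hp : ∀ w ∈ p.roots, ‖w‖ ≤ r) {z : ℂ}
    (hz : z ∈ (derivative p).roots) : ‖z‖ ≤ r := by
  have hdeg : 0 < p.degree := by
    rw [← natDegree_pos_iff_degree_pos, Nat.pos_iff_ne_zero]
    exact fun h => ne_zero_of_mem_roots hz (derivative_of_natDegree_zero h)
  have hmem : ∀ (q : ℂ[X]) (w : ℂ), w ∈ q.rootSet ℂ ↔ w ∈ q.roots := by simp [rootSet]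
  have hsub : p.rootSet ℂ ⊆ closedBall 0 r := fun w hw =>
    mem_closedBall_zero_iff.2 (hp w ((hmem p w).1 hw))
  exact mem_closedBall_zero_iff.1 (convexHull_min hsub (convex_closedBall 0 r)
    (rootSet_derivative_subset_convexHull_rootSet hdeg ((hmem _ z).2 hz)))

lemma HeunEquation.eval_derivative_div_eval {Q P V S : ℂ[X]} (h : HeunEquation Q P V S) {a : ℂ}
    (ha : S.IsRoot a) (hQ : Q.eval a ≠ 0) (hS' : (derivative S).eval a ≠ 0) :
    (derivative (derivative S)).eval a / (derivative S).eval a = -(P.eval a / Q.eval a) := by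
  have hev := congrArg (eval a) h
  rw [eval_add, eval_add, eval_mul, eval_mul, eval_mul, ha.eq_zero, mul_zero, add_zero,
    eval_zero] at hev
  rw [← neg_div, div_eq_div_iff hS' hQ]
  linear_combination hev

/- At a root `a` of `S` of largest modulus, `z S''(z) / S'(z)` has real part at least
`(deg S - 1) / 2` by Gauss–Lucas, but equals `-z P(z) / Q(z)`, which is bounded near infinity. -/
lemma HeunEquation.exists_norm_roots_le {P Q : ℂ[X]} (hPQ : P.degree < Q.degree) :
    ∃ (R : ℝ) (N : ℕ), ∀ S V : ℂ[X], HeunEquation Q P V S → N ≤ S.natDegree →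
      ∀ z ∈ S.roots, ‖z‖ ≤ R := by
  obtain ⟨R, K, hPQR⟩ := exists_norm_mul_eval_le hPQ
  obtain ⟨N, hN⟩ := exists_nat_gt (2 * K + 1)
  refine ⟨R, N + 1, fun S V h hNS z hz => not_lt.1 fun hRz => ?_⟩
  obtain ⟨a, ha, hmax⟩ := S.roots.toFinset.exists_max_image (‖·‖) ⟨z, Multiset.mem_toFinset.2 hz⟩
  simp only [Multiset.mem_toFinset] at ha hmax
  have hSa : S.IsRoot a := isRoot_of_mem_roots ha
  obtain ⟨hQa, hPa⟩ := hPQR a (hRz.trans_le (hmax z hz))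
  have hS'a := h.eval_derivative_ne_zero (ne_zero_of_mem_roots ha) hSa hQa
  have hlower := natDegree_div_two_le_re_mul_logDeriv hS'a
    fun w hw => norm_le_of_mem_roots_derivative hmax hw
  have hupper : ‖a * (P.eval a / Q.eval a)‖ ≤ K := by
    rwa [← mul_div_assoc, norm_div, div_le_iff₀ (norm_pos_iff.2 hQa)]
  rw [h.eval_derivative_div_eval hSa hQa hS'a, mul_neg, natDegree_derivative,
    Nat.cast_pred (by lia)] at hlower
  have hle := (hlower.trans (Complex.re_le_norm _)).trans ((norm_neg _).trans_le hupper)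
  have hNS' : (N : ℝ) + 1 ≤ S.natDegree := by exact_mod_cast hNS
  linarith

end RootBound

section RootMeasure

lemma integrable_multiset_sum_dirac {α E : Type*} [MeasurableSpace α] [MeasurableSingletonClass α]
    [NormedAddCommGroup E] (s : Multiset α) (f : α → E) :
    Integrable f (s.map fun a => Measure.dirac a).sum := by
  induction s using Multiset.induction_on with
  | empty => simp
  | cons a s ih =>
    rw [Multiset.map_cons, Multiset.sum_cons]
    exact (integrable_dirac enorm_lt_top).add_measure ih

lemma integral_multiset_sum_dirac {α E : Type*} [MeasurableSpace α] [MeasurableSingletonClass α]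
    [NormedAddCommGroup E] [NormedSpace ℝ E] [CompleteSpace E] (s : Multiset α) (f : α → E) :
    ∫ x, f x ∂(s.map fun a => Measure.dirac a).sum = (s.map f).sum := by
  induction s using Multiset.induction_on with
  | empty => simp
  | cons a s ih =>
    rw [Multiset.map_cons, Multiset.sum_cons, Multiset.map_cons, Multiset.sum_cons,
      integral_add_measure (integrable_dirac enorm_lt_top) (integrable_multiset_sum_dirac s f), ih,
      integral_dirac]

lemma multiset_sum_dirac_apply {α : Type*} [MeasurableSpace α] (s : Multiset α) {t : Set α}
    (ht : MeasurableSet t) :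
    (s.map fun a => Measure.dirac a).sum t = (s.map (t.indicator 1)).sum := by
  induction s using Multiset.induction_on with
  | empty => simp
  | cons a s ih =>
    rw [Multiset.map_cons, Multiset.sum_cons, Multiset.map_cons, Multiset.sum_cons,
      Measure.add_apply, Measure.dirac_apply' a ht, ih]

variable {p : ℂ[X]}

lemma isProbabilityMeasure_rootMeasure (hp : p.natDegree ≠ 0) :
    IsProbabilityMeasure (rootMeasure p) := by
  refine ⟨?_⟩
  rw [rootMeasure, Measure.smul_apply, multiset_sum_dirac_apply _ MeasurableSet.univ,
    indicator_univ, Pi.one_def, Multiset.map_const', Multiset.sum_replicate, nsmul_one,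
    ← (IsAlgClosed.splits p).natDegree_eq_card_roots, smul_eq_mul]
  exact ENNReal.inv_mul_cancel (Nat.cast_ne_zero.2 hp) (ENNReal.natCast_ne_top _)

/-- The root-counting measure as an element of the space of probability measures, whose topology
is that of weak convergence. -/
noncomputable def rootProbabilityMeasure (p : ℂ[X]) (hp : p.natDegree ≠ 0) :
    ProbabilityMeasure ℂ :=
  ⟨rootMeasure p, isProbabilityMeasure_rootMeasure hp⟩

lemma rootMeasure_compl_eq_zero {K : Set ℂ} (hK : MeasurableSet K) (hp : ∀ z ∈ p.roots, z ∈ K) :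
    rootMeasure p Kᶜ = 0 := by
  rw [rootMeasure, Measure.smul_apply, multiset_sum_dirac_apply _ hK.compl,
    Multiset.map_congr rfl fun z hz => indicator_of_notMem (not_not_intro (hp z hz)) 1,
    Multiset.map_const', Multiset.sum_replicate, smul_zero, smul_zero]

lemma cauchyTransform_rootMeasure (p : ℂ[X]) (z : ℂ) :
    cauchyTransform (rootMeasure p) z =
      (p.natDegree : ℂ)⁻¹ * (p.roots.map fun a => (z - a)⁻¹).sum := by
  rw [cauchyTransform, rootMeasure, integral_smul_measure, integral_multiset_sum_dirac,
    ENNReal.toReal_inv, ENNReal.toReal_natCast, Complex.real_smul, Complex.ofReal_inv,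
    Complex.ofReal_natCast]

lemma ae_eval_ne_zero (hp : p ≠ 0) : ∀ᵐ z : ℂ, p.eval z ≠ 0 :=
  (Set.Finite.countable (eventually_cofinite_not_isRoot hp)).ae_notMem volume |>.mono
    fun _ => not_not.1

end RootMeasure

section InverseSquareSums

lemma lintegral_ball_enorm_sum_inv_sq_rpow_le (s : Multiset ℂ) {q : ℝ} (hq0 : 0 < q) (hq : q < 1)
    (c : ℂ) {r : ℝ} (hr : 0 < r) :
    ∫⁻ z in ball c r, ‖(s.map fun a => (z - a)⁻¹ ^ 2).sum‖ₑ ^ q ≤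
      s.card * ENNReal.ofReal ((2 * Real.pi / (2 - 2 * q) + Real.pi) * r ^ (2 - 2 * q)) := by
  induction s using Multiset.induction_on with
  | empty => simp [hq0]
  | cons a s ih =>
    have hterm : ∀ z : ℂ, ‖(z - a)⁻¹ ^ 2‖ₑ ^ q = ENNReal.ofReal (‖z - a‖ ^ (-(2 * q))) := by
      intro z
      rw [← ofReal_norm, ENNReal.ofReal_rpow_of_nonneg (norm_nonneg _) hq0.le, norm_pow, norm_inv,
        Real.rpow_neg (norm_nonneg _), Real.rpow_mul (norm_nonneg _), Real.rpow_two, inv_pow,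
        Real.inv_rpow (by positivity)]
    calc ∫⁻ z in ball c r, ‖((a ::ₘ s).map fun a => (z - a)⁻¹ ^ 2).sum‖ₑ ^ q
        ≤ ∫⁻ z in ball c r, (ENNReal.ofReal (‖z - a‖ ^ (-(2 * q))) +
          ‖(s.map fun a => (z - a)⁻¹ ^ 2).sum‖ₑ ^ q) := by
          refine lintegral_mono fun z => ?_
          rw [Multiset.map_cons, Multiset.sum_cons, ← hterm]
          exact (ENNReal.rpow_le_rpow (enorm_add_le _ _) hq0.le).trans
            (ENNReal.rpow_add_le_add_rpow _ _ hq0.le hq.le)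
      _ = (∫⁻ z in ball c r, ENNReal.ofReal (‖z - a‖ ^ (-(2 * q)))) +
          ∫⁻ z in ball c r, ‖(s.map fun a => (z - a)⁻¹ ^ 2).sum‖ₑ ^ q :=
          lintegral_add_left (by fun_prop) _
      _ ≤ _ := by
          rw [Multiset.card_cons, Nat.cast_succ, add_one_mul, add_comm]
          exact add_le_add ih
            (lintegral_ball_norm_sub_rpow_neg_le (by linarith) (by linarith) c a hr)

lemma measurable_sum_inv_sq (s : Multiset ℂ) :
    Measurable fun z : ℂ => (s.map fun a => (z - a)⁻¹ ^ 2).sum := by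
  induction s using Multiset.induction_on with
  | empty => simp
  | cons a s ih =>
    simp only [Multiset.map_cons, Multiset.sum_cons]
    exact Measurable.add (by fun_prop) ih

lemma lintegral_ball_enorm_normalized_sum_inv_sq_rpow_le (s : Multiset ℂ) (hs : s.card ≠ 0)
    {q : ℝ} (hq0 : 0 < q) (hq : q < 1) (c : ℂ) {r : ℝ} (hr : 0 < r) :
    ∫⁻ z in ball c r, ‖((s.card : ℂ) ^ 2)⁻¹ * (s.map fun a => (z - a)⁻¹ ^ 2).sum‖ₑ ^ q ≤
      ENNReal.ofReal ((s.card : ℝ) ^ (-(2 * q - 1)) *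
        ((2 * Real.pi / (2 - 2 * q) + Real.pi) * r ^ (2 - 2 * q))) := by
  have hn : (0 : ℝ) < s.card := by positivity
  have hconst : ‖((s.card : ℂ) ^ 2)⁻¹‖ₑ ^ q = ENNReal.ofReal ((s.card : ℝ) ^ (-(2 * q))) := by
    rw [← ofReal_norm, ENNReal.ofReal_rpow_of_nonneg (norm_nonneg _) hq0.le, norm_inv, norm_pow,
      Complex.norm_natCast, Real.rpow_neg hn.le, Real.rpow_mul hn.le, Real.rpow_two,
      Real.inv_rpow (by positivity)]
  simp_rw [enorm_mul, ENNReal.mul_rpow_of_nonneg _ _ hq0.le]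
  rw [lintegral_const_mul' _ _ (by rw [hconst]; exact ENNReal.ofReal_ne_top), hconst, neg_sub,
    sub_eq_neg_add, Real.rpow_add_one hn.ne', mul_assoc, ENNReal.ofReal_mul (by positivity),
    ENNReal.ofReal_mul hn.le, ENNReal.ofReal_natCast]
  gcongr
  exact lintegral_ball_enorm_sum_inv_sq_rpow_le s hq0 hq c hr

lemma tendstoInMeasure_of_tendsto_lintegral_enorm_rpow {α E : Type*} [MeasurableSpace α]
    {m : Measure α} [NormedAddCommGroup E] {f : ℕ → α → E} (hf : ∀ k, AEStronglyMeasurable (f k) m)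
    {q : ℝ} (hq : 0 < q) (hlim : Tendsto (fun k => ∫⁻ x, ‖f k x‖ₑ ^ q ∂m) atTop (𝓝 0)) :
    TendstoInMeasure m f atTop 0 := by
  refine tendstoInMeasure_of_tendsto_eLpNorm (p := ENNReal.ofReal q)
    (ENNReal.ofReal_pos.2 hq).ne' hf aestronglyMeasurable_zero ?_
  have hpow := (ENNReal.continuous_rpow_const (y := 1 / q)).tendsto 0 |>.comp hlim
  rw [ENNReal.zero_rpow_of_pos (by positivity)] at hpow
  refine hpow.congr fun k => ?_
  rw [sub_zero, eLpNorm_eq_lintegral_rpow_enorm_toReal (ENNReal.ofReal_pos.2 hq).ne'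
    ENNReal.ofReal_ne_top, ENNReal.toReal_ofReal hq.le, Function.comp_apply]

lemma tendstoInMeasure_normalized_sum_inv_sq {s : ℕ → Multiset ℂ} (hs0 : ∀ k, (s k).card ≠ 0)
    (hs : Tendsto (fun k => (s k).card) atTop atTop) (c : ℂ) {r : ℝ} (hr : 0 < r) :
    TendstoInMeasure (volume.restrict (ball c r))
      (fun k z => (((s k).card : ℂ) ^ 2)⁻¹ * ((s k).map fun a => (z - a)⁻¹ ^ 2).sum) atTop 0 := by
  have hq0 : (0 : ℝ) < 3 / 4 := by norm_num
  have hq1 : (3 : ℝ) / 4 < 1 := by norm_num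
  refine tendstoInMeasure_of_tendsto_lintegral_enorm_rpow
    (fun k => ((measurable_sum_inv_sq (s k)).const_mul _).aestronglyMeasurable) hq0 ?_
  have hlim := ENNReal.tendsto_ofReal
    (((tendsto_rpow_neg_atTop (show (0 : ℝ) < 2 * (3 / 4) - 1 by norm_num)).comp
      (tendsto_natCast_atTop_atTop.comp hs)).mul_const
        ((2 * Real.pi / (2 - 2 * (3 / 4)) + Real.pi) * r ^ (2 - 2 * (3 / 4) : ℝ)))
  rw [zero_mul, ENNReal.ofReal_zero] at hlim
  exact tendsto_of_tendsto_of_tendsto_of_le_of_le tendsto_const_nhds hlim (fun _ => zero_le)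
    fun k => lintegral_ball_enorm_normalized_sum_inv_sq_rpow_le (s k) (hs0 k) hq0 hq1 c hr

end InverseSquareSums

section HeunAsymptotics

lemma boundedOff_of_cauchyTransform_sq_ae_eq_div {Q : ℂ[X]} (hQ : Q ≠ 0) {f : ℂ → ℂ}
    (hf : Continuous f) {μ : Measure ℂ}
    (hμ : ∀ᵐ z, cauchyTransform μ z ^ 2 = f z / Q.eval z) : BoundedOff Q.roots.toFinset μ := by
  intro E hE hEQ
  have hcont : ContinuousOn (fun z => f z / Q.eval z) E := by
    refine hf.continuousOn.div Q.continuous.continuousOn fun z hz hz0 => ?_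
    exact hEQ z (Multiset.mem_toFinset.2 ((mem_roots hQ).2 hz0)) hz
  obtain ⟨M, hM⟩ := hE.exists_bound_of_continuousOn hcont
  refine ⟨M + 1, ?_⟩
  filter_upwards [hμ] with z hz hzE
  have hsq := hM z hzE
  rw [← hz, norm_pow] at hsq
  nlinarith [sq_nonneg (‖cauchyTransform μ z‖ - 1), norm_nonneg (cauchyTransform μ z)]

theorem eq_of_cauchyTransform_sq_ae_eq_div {Q : ℂ[X]} (hQ : Q ≠ 0) {f : ℂ → ℂ} (hf : Continuous f)
    {μ ν : Measure ℂ} [IsProbabilityMeasure μ] [IsProbabilityMeasure ν] {K L : Set ℂ}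
    (hK : IsCompact K) (hL : IsCompact L) (hμK : μ Kᶜ = 0) (hνL : ν Lᶜ = 0)
    (hμ : ∀ᵐ z, cauchyTransform μ z ^ 2 = f z / Q.eval z)
    (hν : ∀ᵐ z, cauchyTransform ν z ^ 2 = f z / Q.eval z) : μ = ν := by
  obtain ⟨r, hr, hsub⟩ := (hK.union hL).isBounded.subset_closedBall_lt 0 0
  refine eq_of_cauchyTransform_sq_ae_eq hr.le
    (measure_mono_null (compl_subset_compl.2 (subset_union_left.trans hsub)) hμK)
    (measure_mono_null (compl_subset_compl.2 (subset_union_right.trans hsub)) hνL)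
    (boundedOff_of_cauchyTransform_sq_ae_eq_div hQ hf hμ)
    (boundedOff_of_cauchyTransform_sq_ae_eq_div hQ hf hν) ?_
  filter_upwards [hμ, hν] with z hzμ hzν using hzμ.trans hzν.symm

lemma HeunEquation.cauchyTransform_rootMeasure_riccati {Q P V S : ℂ[X]}
    (h : HeunEquation Q P V S) (hS : S.natDegree ≠ 0) :
    ∀ᵐ z, Q.eval z * cauchyTransform (rootMeasure S) z ^ 2 =
      Q.eval z * (((S.natDegree : ℂ) ^ 2)⁻¹ * (S.roots.map fun a => (z - a)⁻¹ ^ 2).sum) +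
        -(S.natDegree : ℂ)⁻¹ * P.eval z * cauchyTransform (rootMeasure S) z +
        -((S.natDegree : ℂ) ^ 2)⁻¹ * V.eval z := by
  filter_upwards [ae_eval_ne_zero (ne_zero_of_natDegree_gt (Nat.pos_of_ne_zero hS))] with z hz
  have hriccati := h.riccati (IsAlgClosed.splits S) hz
  rw [cauchyTransform_rootMeasure]
  linear_combination (S.natDegree : ℂ)⁻¹ ^ 2 * hriccati

variable {Q P : ℂ[X]} {S V : ℕ → ℂ[X]} {b : ℕ → ℂ} {bt : ℂ}

lemma tendsto_normalized_vanVleck (hQ : Q.natDegree ≤ 3) (hP : P.natDegree ≤ 2)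
    (hV : ∀ k, (V k).natDegree ≤ 1) (hS : ∀ k, 2 ≤ (S k).natDegree)
    (hlim : Tendsto (fun k => (S k).natDegree) atTop atTop)
    (heq : ∀ k, HeunEquation Q P (V k) (S k)) (hb : ∀ k, (V k).IsRoot (b k))
    (hbt : Tendsto b atTop (𝓝 bt)) (z : ℂ) :
    Tendsto (fun k => -(((S k).natDegree : ℂ) ^ 2)⁻¹ * (V k).eval z) atTop
      (𝓝 (Q.coeff 3 * (z - bt))) := by
  have hinv : Tendsto (fun k => ((S k).natDegree : ℂ)⁻¹) atTop (𝓝 0) :=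
    (tendsto_inv_atTop_nhds_zero_nat (𝕜 := ℂ)).comp hlim
  have hmain := (((hinv.const_sub 1).const_mul (Q.coeff 3)).add
    (hinv.const_mul (P.coeff 2))).mul (hbt.const_sub z)
  rw [sub_zero, mul_one, mul_zero, add_zero] at hmain
  refine hmain.congr fun k => ?_
  have hn : ((S k).natDegree : ℂ) ≠ 0 := Nat.cast_ne_zero.2 (two_pos.trans_le (hS k)).ne'
  rw [eval_eq_coeff_one_mul_sub (hV k) (hb k),
    eq_neg_of_add_eq_zero_right ((heq k).coeff_relation hQ hP (hV k) (hS k))]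
  field_simp

lemma cauchyTransform_sq_ae_eq_div_of_tendsto (hQ0 : Q ≠ 0) (hQ : Q.natDegree ≤ 3)
    (hP : P.natDegree ≤ 2) (hV : ∀ k, (V k).natDegree ≤ 1) (hS : ∀ k, 2 ≤ (S k).natDegree)
    (hlim : Tendsto (fun k => (S k).natDegree) atTop atTop)
    (heq : ∀ k, HeunEquation Q P (V k) (S k)) (hb : ∀ k, (V k).IsRoot (b k))
    (hbt : Tendsto b atTop (𝓝 bt)) {ν : ProbabilityMeasure ℂ}
    (hν : Tendsto (fun k => rootProbabilityMeasure (S k) (two_pos.trans_le (hS k)).ne') atTop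
      (𝓝 ν)) :
    ∀ᵐ z, cauchyTransform ν z ^ 2 = Q.coeff 3 * (z - bt) / Q.eval z := by
  have hS0 : ∀ k, (S k).natDegree ≠ 0 := fun k => (two_pos.trans_le (hS k)).ne'
  have hcard : ∀ k, (S k).natDegree = (S k).roots.card := fun k =>
    (IsAlgClosed.splits (S k)).natDegree_eq_card_roots
  have hinv : Tendsto (fun k => -((S k).natDegree : ℂ)⁻¹) atTop (𝓝 0) := by
    simpa using ((tendsto_inv_atTop_nhds_zero_nat (𝕜 := ℂ)).comp hlim).neg
  have hsum : ∀ r > 0, TendstoInMeasure (volume.restrict (ball 0 r)) (fun k z =>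
      (((S k).natDegree : ℂ) ^ 2)⁻¹ * ((S k).roots.map fun a => (z - a)⁻¹ ^ 2).sum) atTop 0 := by
    simp only [hcard] at hS0 hlim ⊢
    exact fun r hr => tendstoInMeasure_normalized_sum_inv_sq hS0 hlim 0 hr
  filter_upwards [ae_eval_ne_zero hQ0, mul_cauchyTransform_sq_ae_eq_of_riccati hν hsum hinv
    (tendsto_normalized_vanVleck hQ hP hV hS hlim heq hb hbt)
    fun k => (heq k).cauchyTransform_rootMeasure_riccati (hS0 k)] with z hz hsq
  rw [eq_div_iff hz, mul_comm, hsq]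

theorem exists_tendsto_rootProbabilityMeasure (hQ0 : Q ≠ 0) (hQ : Q.natDegree ≤ 3)
    (hP : P.natDegree ≤ 2) (hV : ∀ k, (V k).natDegree ≤ 1) (hS : ∀ k, 2 ≤ (S k).natDegree)
    (hlim : Tendsto (fun k => (S k).natDegree) atTop atTop)
    (heq : ∀ k, HeunEquation Q P (V k) (S k)) (hb : ∀ k, (V k).IsRoot (b k))
    (hbt : Tendsto b atTop (𝓝 bt)) {R : ℝ} (hR : ∀ k, ∀ z ∈ (S k).roots, ‖z‖ ≤ R) :
    ∃ ν : ProbabilityMeasure ℂ, (ν : Measure ℂ) (closedBall 0 R)ᶜ = 0 ∧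
      (∀ᵐ z, cauchyTransform ν z ^ 2 = Q.coeff 3 * (z - bt) / Q.eval z) ∧
      Tendsto (fun k => rootProbabilityMeasure (S k) (two_pos.trans_le (hS k)).ne') atTop
        (𝓝 ν) := by
  have hball := isCompact_closedBall (0 : ℂ) R
  refine exists_tendsto_probabilityMeasure_of_unique hball
    (μ := fun k => rootProbabilityMeasure (S k) (two_pos.trans_le (hS k)).ne')
    (G := fun ν => ∀ᵐ z, cauchyTransform ν z ^ 2 = Q.coeff 3 * (z - bt) / Q.eval z)
    (fun k => rootMeasure_compl_eq_zero measurableSet_closedBall fun z hz =>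
      mem_closedBall_zero_iff.2 (hR k z hz))
    (fun ns hns ν hν => cauchyTransform_sq_ae_eq_div_of_tendsto hQ0 hQ hP (fun k => hV (ns k))
      (fun k => hS (ns k)) (hlim.comp hns) (fun k => heq (ns k)) (fun k => hb (ns k))
      (hbt.comp hns) hν)
    fun μ ν hμR hνR hμ hν => ProbabilityMeasure.toMeasure_injective ?_
  exact eq_of_cauchyTransform_sq_ae_eq_div hQ0 (by fun_prop) hball hball hμR hνR hμ hν

end HeunAsymptotics

end

/-- Theorem 3: if for all large `n` the Heun equation `Q Sₙ'' + P Sₙ' + Vₙ Sₙ = 0` has a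
polynomial solution `Sₙ` of degree `n` with `Vₙ` of degree exactly `1`, and the roots
`bₙ` of `Vₙ` converge to `bt`, then there is a unique compactly supported positive
probability measure `ν` with `C_ν(z)² = (z - bt)/Q(z)` a.e., and the root-counting
measures of the `Sₙ` converge weakly to `ν`. -/
theorem stmt8 (Q P : Polynomial ℂ) (hQmonic : Q.Monic) (hQdeg : Q.natDegree = 3)
    (hP : P.degree ≤ 2)
    (S V : ℕ → Polynomial ℂ) (b : ℕ → ℂ) (N : ℕ)
    (hS : ∀ n : ℕ, N ≤ n → (S n).natDegree = n)
    (hV : ∀ n : ℕ, N ≤ n → (V n).degree = 1)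
    (heq : ∀ n : ℕ, N ≤ n →
      Q * (derivative (derivative (S n))) + P * (derivative (S n)) + V n * S n = 0)
    (hb : ∀ n : ℕ, N ≤ n → (V n).IsRoot (b n))
    (bt : ℂ) (hbconv : Tendsto b atTop (nhds bt)) :
    ∃ ν : Measure ℂ, IsProbabilityMeasure ν ∧
      (∃ K : Set ℂ, IsCompact K ∧ ν Kᶜ = 0) ∧
      (∀ᵐ z ∂(MeasureTheory.volume : Measure ℂ),
        Integrable (fun ξ => (z - ξ)⁻¹) ν ∧
        (∫ ξ, (z - ξ)⁻¹ ∂ν) ^ 2 = (z - bt) / Q.eval z) ∧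
      (∀ ν' : Measure ℂ, IsProbabilityMeasure ν' →
        (∃ K : Set ℂ, IsCompact K ∧ ν' Kᶜ = 0) →
        (∀ᵐ z ∂(MeasureTheory.volume : Measure ℂ),
          Integrable (fun ξ => (z - ξ)⁻¹) ν' ∧
          (∫ ξ, (z - ξ)⁻¹ ∂ν') ^ 2 = (z - bt) / Q.eval z) →
        ν' = ν) ∧
      (∀ f : BoundedContinuousFunction ℂ ℝ,
        Tendsto (fun n => ∫ z, f z ∂(rootMeasure (S n))) atTop (nhds (∫ z, f z ∂ν))) := by
  have hPQ : P.degree < Q.degree := by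
    rw [degree_eq_natDegree hQmonic.ne_zero, hQdeg]
    exact hP.trans_lt (by norm_num)
  obtain ⟨R, N₁, hR⟩ := HeunEquation.exists_norm_roots_le hPQ
  obtain ⟨M, hNM, hN₁M, hM⟩ : ∃ M, N ≤ M ∧ N₁ ≤ M ∧ 2 ≤ M :=
    ⟨N + N₁ + 2, by lia, by lia, by lia⟩
  have hdeg : ∀ k, (S (k + M)).natDegree = k + M := fun k => hS _ (by lia)
  obtain ⟨ν, hνR, hν, hlim⟩ := exists_tendsto_rootProbabilityMeasure
    (S := fun k => S (k + M)) (V := fun k => V (k + M)) (b := fun k => b (k + M))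
    hQmonic.ne_zero hQdeg.le (natDegree_le_of_degree_le hP)
    (fun k => natDegree_le_of_degree_le (hV _ (by lia)).le) (fun k => by rw [hdeg]; lia)
    (by simpa only [hdeg] using tendsto_add_atTop_nat M) (fun k => heq _ (by lia))
    (fun k => hb _ (by lia)) (hbconv.comp (tendsto_add_atTop_nat M))
    fun k => hR _ _ (heq _ (by lia)) (by rw [hdeg]; lia)
  have hball := isCompact_closedBall (0 : ℂ) R
  simp only [show Q.coeff 3 = 1 from hQdeg ▸ hQmonic.coeff_natDegree, one_mul] at hν
  refine ⟨ν, inferInstance, ⟨_, hball, hνR⟩, (ae_integrable_inv_sub ν).and hν, ?_, fun f => ?_⟩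
  · rintro ν' _ ⟨K, hK, hνK⟩ hν'
    exact eq_of_cauchyTransform_sq_ae_eq_div hQmonic.ne_zero (by fun_prop) hK hball hνK hνR
      (hν'.mono fun _ hz => hz.2) hν
  · exact (tendsto_add_atTop_iff_nat M).1
      (ProbabilityMeasure.tendsto_iff_forall_integral_tendsto.1 hlim f)
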